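/- For each m ∈ ℕ there is a constant c(m) > 0 such that the following holds. Let d, m ∈ ℕ, let F ∈ 𝔉_d^+ (i.e., F is symmetric with characteristic function F̂(t) ≥ 0 for all t ∈ ℝ^d), and let (μ, ν) be a random vector with non-negative integer coordinates. Define G = ∑_{k≥0} P{μ = k} · F^k and H = ∑_{k≥0} P{ν = k} · F^k. Then ρ_m(G, H) ≤ E min{ c(m)·|μ−ν|/(ν+1), 1 }. -/

import Mathlib

open MeasureTheory RealInnerProductSpace
open scoped ENNReal

noncomputable section

abbrev Euc (d : ℕ) := EuclideanSpace ℝ (Fin d)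

/-- Convolution of two measures on an additive structure. -/
def mconv {α : Type*} [MeasurableSpace α] [Add α] (μ ν : Measure α) : Measure α :=
  (μ.prod ν).map (fun p => p.1 + p.2)

/-- Convolution power `μ^{*n}`, with `μ^{*0}` the Dirac measure at `0`. -/
def convPow {α : Type*} [MeasurableSpace α] [AddMonoid α] (μ : Measure α) : ℕ → Measure α
  | 0 => Measure.dirac 0
  | n + 1 => mconv (convPow μ n) μ

/-- Convolution product of a finite family of measures. -/
def convProd {α : Type*} [MeasurableSpace α] [AddMonoid α] :
    ∀ {n : ℕ}, (Fin n → Measure α) → Measure α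
  | 0, _ => Measure.dirac 0
  | n + 1, G => mconv (convProd (fun i : Fin n => G i.castSucc)) (G (Fin.last n))

/-- The compound Poisson measure `e(a·μ) = e^{-a} ∑_k a^k μ^{*k}/k!`. -/
def cpois {α : Type*} [MeasurableSpace α] [AddMonoid α] (a : ℝ) (μ : Measure α) : Measure α :=
  Measure.sum fun k : ℕ =>
    (ENNReal.ofReal (Real.exp (-a) * a ^ k / k.factorial)) • convPow μ k

/-- A measure is symmetric if it is invariant under `x ↦ -x`. -/
def IsSymmMeasure {d : ℕ} (μ : Measure (Euc d)) : Prop :=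
  μ.map (fun x => -x) = μ

/-- Characteristic function of a measure on `ℝ^d`. -/
def charFn {d : ℕ} (μ : Measure (Euc d)) (t : Euc d) : ℂ :=
  ∫ x, Complex.exp ((⟪t, x⟫ : ℂ) * Complex.I) ∂μ

/-- Characteristic function of a measure on `ℝ`. -/
def charFn1 (μ : Measure ℝ) (t : ℝ) : ℂ :=
  ∫ x, Complex.exp (((t * x : ℝ) : ℂ) * Complex.I) ∂μ

/-- Convex polyhedra determined by the directions `t 1, …, t m`. -/
def polyhedraOn {d m : ℕ} (t : Fin m → Euc d) : Set (Set (Euc d)) :=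
  {X | ∃ a b : Fin m → EReal,
    X = {x | ∀ j, a j ≤ ((⟪x, t j⟫ : ℝ) : EReal) ∧ ((⟪x, t j⟫ : ℝ) : EReal) ≤ b j}}

/-- The collection `𝔛_m` of convex polyhedra determined by `m` pairs of parallel hyperplanes. -/
def polyhedra (d m : ℕ) : Set (Set (Euc d)) :=
  {X | ∃ t : Fin m → Euc d, X ∈ polyhedraOn t}

/-- The distance `ρ_m(G,H) = sup_{X ∈ 𝔛_m} |G{X} - H{X}|`. -/
def rhoPoly {d : ℕ} (m : ℕ) (G H : Measure (Euc d)) : ℝ :=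
  ⨆ X ∈ polyhedra d m, |(G X).toReal - (H X).toReal|

/-- The Lévy concentration function `Q(μ, b) = sup_x μ[x, x+b]`. -/
def concFn (μ : Measure ℝ) (b : ℝ) : ℝ :=
  ⨆ x : ℝ, (μ (Set.Icc x (x + b))).toReal

/-- `q(H, X) = inf_{‖t‖=1} Q(𝓛(⟨ξ,t⟩), λ{⟨x,t⟩ : x ∈ X})` where `H = 𝓛(ξ)`. -/
def qFn {d : ℕ} (H : Measure (Euc d)) (X : Set (Euc d)) : ℝ :=
  ⨅ t ∈ {t : Euc d | ‖t‖ = 1},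
    concFn (H.map fun x => ⟪x, t⟫) (volume ((fun x => ⟪x, t⟫) '' X)).toReal

/-- The uniform (Kolmogorov) distance on `ℝ^d`. -/
def kolmDist {d : ℕ} (G H : Measure (Euc d)) : ℝ :=
  ⨆ x : Euc d, |(G {y | ∀ i, y i ≤ x i}).toReal - (H {y | ∀ i, y i ≤ x i}).toReal|

/-- The uniform (Kolmogorov) distance on `ℝ`. -/
def kolmDist1 (G H : Measure ℝ) : ℝ :=
  ⨆ x : ℝ, |(G (Set.Iic x)).toReal - (H (Set.Iic x)).toReal|

end

/-!
A polyhedron with directions `t₁, …, t_m` is the preimage of a box in `ℝ^m` under the map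
`x ↦ (⟨x, t_j⟩)_j`, so it suffices to bound `|F^n(B) - F^(n+1)(B)|` by `c(m) / (n + 1)` for boxes
`B` in `ℝ^m`. Summing this bound between `ν` and `μ` gives the theorem.

*Smoothed powers.* Let `f_j` be the density of `F^j` smoothed by a Gaussian of variance `j / N`, so
that `f_(2j) = f_j * f_j`, and let `L = 1 + log (1 / ∫ F̂^N dγ)` for the standard Gaussian `γ`. Then
`‖f_N - F f_N‖₁ ≤ C L^(m+6) / N`, where `F` also stands for the operator of convolution with `F`.
Indeed `f_(2j) - F² f_(2j)` is the mean over `x ∼ F` of the autocorrelation of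
`f_j(· + x) - F f_j`, so its `L¹` norm is at most the mean of `‖f_j(· + x) - F f_j‖₁²`. To pass to
`f_(2j) - F f_(2j)`, expand `1 - F` in powers of `Δ = (1 - F) / 2` up to an order of the size of
`L`: the terms contain the factor `1 - F²`, and the remainder is bounded by `‖Δ^D f_j‖₁²` with `D`
of the size of `L`. Both the mean square and `‖Δ^D f_j‖₁²` satisfy recursions under `j ↦ 2j`:
outside the cutoff function `f_N / f_N(0)` they are multiplied by the small mass that is discarded;
inside it the first is bounded by tilting `F` exponentially, and the second by Plancherel, since
`((1 - a) / 2)^(2D) a^n ≤ 4^(-D) / n` for `a = F̂ ∈ [0, 1]`. The positivity of `F̂` is needed here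
and for the cutoff function to be positive definite.

*Scales.* The loss `L` is controlled by the one-dimensional marginals of `F^N`. In each coordinate
take scales at which the mass of the marginal near the origin is `2^(-2^q)`, and decompose the
smoothed indicator of an interval into Gaussian increments between consecutive scales. The increment
of index `q` costs a power of `2^q` in the bound above, but one half of the convolution powers keeps
its expectation below `2 · 2^(-2^q)`. The products of the increments are therefore summable, with a
bound that does not depend on the last scale, which can tend to `0`.
-/

noncomputable section

/-! ## Cross-correlation operators -/

section BddMeas

variable {α : Type*} [MeasurableSpace α] {f g : α → ℝ}

/-- Bounded measurable real functions, the class on which the averaging operators act. -/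
structure BddMeas (g : α → ℝ) : Prop where
  measurable : Measurable g
  bounded : ∃ M, ∀ y, |g y| ≤ M

lemma BddMeas.integrable {μ : Measure α} [IsFiniteMeasure μ] (hg : BddMeas g) :
    Integrable g μ :=
  let ⟨M, hM⟩ := hg.bounded
  Integrable.of_bound hg.measurable.aestronglyMeasurable M (.of_forall hM)

lemma BddMeas.const (c : ℝ) : BddMeas (fun _ : α => c) :=
  ⟨measurable_const, |c|, fun _ => le_rfl⟩

lemma BddMeas.add (hf : BddMeas f) (hg : BddMeas g) : BddMeas (fun y => f y + g y) := by
  obtain ⟨A, hA⟩ := hf.bounded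
  obtain ⟨B, hB⟩ := hg.bounded
  exact ⟨hf.measurable.add hg.measurable, A + B,
    fun y => (abs_add_le _ _).trans (add_le_add (hA y) (hB y))⟩

lemma BddMeas.mul (hf : BddMeas f) (hg : BddMeas g) : BddMeas (fun y => f y * g y) := by
  obtain ⟨A, hA⟩ := hf.bounded
  obtain ⟨B, hB⟩ := hg.bounded
  refine ⟨hf.measurable.mul hg.measurable, A * B, fun y => ?_⟩
  rw [abs_mul]
  exact mul_le_mul (hA y) (hB y) (abs_nonneg _) ((abs_nonneg _).trans (hA y))

lemma BddMeas.integrable_sq {μ : Measure α} [IsFiniteMeasure μ] (hg : BddMeas g) :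
    Integrable (fun x => g x ^ 2) μ := by
  simpa only [pow_two] using (hg.mul hg).integrable

lemma BddMeas.const_mul (hg : BddMeas g) (c : ℝ) : BddMeas (fun y => c * g y) :=
  (BddMeas.const c).mul hg

lemma BddMeas.sub (hf : BddMeas f) (hg : BddMeas g) : BddMeas (fun y => f y - g y) := by
  simpa only [neg_one_mul, ← sub_eq_add_neg] using hf.add (hg.const_mul (-1))

lemma BddMeas.abs (hg : BddMeas g) : BddMeas (fun y => |g y|) :=
  ⟨hg.measurable.abs, hg.bounded.imp fun M hM y => by simpa using hM y⟩

lemma BddMeas.comp {β : Type*} [MeasurableSpace β] (hg : BddMeas g) {φ : β → α}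
    (hφ : Measurable φ) : BddMeas (fun y => g (φ y)) :=
  ⟨hg.measurable.comp hφ, hg.bounded.imp fun _ hM _ => hM _⟩

end BddMeas

section BddInt

variable {α : Type*} [MeasureSpace α] {f g : α → ℝ}

/-- Bounded measurable real functions that are integrable for the reference measure `volume`. -/
structure BddInt (g : α → ℝ) : Prop extends BddMeas g where
  integrable : Integrable g

/-- The `L¹`-norm of a function with respect to `volume` (`0` if it is not integrable). -/
def l1Norm (g : α → ℝ) : ℝ := ∫ y, |g y|

lemma BddMeas.mul_bddInt (hf : BddMeas f) (hg : BddInt g) : BddInt (fun y => f y * g y) :=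
  let ⟨_, hM⟩ := hf.bounded
  ⟨hf.mul hg.toBddMeas,
    hg.integrable.bdd_mul hf.measurable.aestronglyMeasurable (.of_forall hM)⟩

lemma BddInt.add (hf : BddInt f) (hg : BddInt g) : BddInt (fun y => f y + g y) :=
  ⟨hf.toBddMeas.add hg.toBddMeas, hf.integrable.add hg.integrable⟩

lemma BddInt.sub (hf : BddInt f) (hg : BddInt g) : BddInt (fun y => f y - g y) :=
  ⟨hf.toBddMeas.sub hg.toBddMeas, hf.integrable.sub hg.integrable⟩

lemma BddInt.const_mul (hg : BddInt g) (c : ℝ) : BddInt (fun y => c * g y) :=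
  (BddMeas.const c).mul_bddInt hg

lemma BddInt.abs (hg : BddInt g) : BddInt (fun y => |g y|) :=
  ⟨hg.toBddMeas.abs, hg.integrable.abs⟩

lemma l1Norm_nonneg (g : α → ℝ) : 0 ≤ l1Norm g := integral_nonneg fun _ => abs_nonneg _

lemma l1Norm_mono (hf : BddInt f) (hg : BddInt g) (hfg : ∀ y, |f y| ≤ |g y|) :
    l1Norm f ≤ l1Norm g :=
  integral_mono hf.abs.integrable hg.abs.integrable hfg

lemma l1Norm_add_le (hf : BddInt f) (hg : BddInt g) :
    l1Norm (fun y => f y + g y) ≤ l1Norm f + l1Norm g := by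
  simp only [l1Norm, ← integral_add hf.abs.integrable hg.abs.integrable]
  exact integral_mono (hf.add hg).abs.integrable (hf.abs.add hg.abs).integrable
    fun y => abs_add_le _ _

lemma l1Norm_sub_le (hf : BddInt f) (hg : BddInt g) :
    l1Norm (fun y => f y - g y) ≤ l1Norm f + l1Norm g := by
  simp only [l1Norm, ← integral_add hf.abs.integrable hg.abs.integrable]
  exact integral_mono (hf.sub hg).abs.integrable (hf.abs.add hg.abs).integrable
    fun y => abs_sub _ _

lemma l1Norm_const_mul (c : ℝ) (g : α → ℝ) : l1Norm (fun y => c * g y) = |c| * l1Norm g := by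
  simp only [l1Norm, abs_mul, integral_const_mul]

end BddInt

section Translation

variable {E : Type*} [AddCommGroup E] [MeasureSpace E] [MeasurableAdd E]
  [(volume : Measure E).IsAddLeftInvariant] {g : E → ℝ}

lemma BddInt.translate (hg : BddInt g) (x : E) : BddInt (fun y => g (y + x)) :=
  ⟨hg.toBddMeas.comp (measurable_add_const x), hg.integrable.comp_add_right x⟩

lemma l1Norm_translate (g : E → ℝ) (x : E) : l1Norm (fun y => g (y + x)) = l1Norm g :=
  integral_add_right_eq_self (fun y => |g y|) x

end Translation

/-- The cross-correlation `y ↦ ∫ w(x) g(y + x) μ(dx)` of `g` with the signed measure `w·μ`. For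
`w = 1` it averages `g` over translations; for `μ = volume` and even `w` it is the convolution
`w * g`. -/
def corr {E : Type*} [Add E] [MeasurableSpace E] (w : E → ℝ) (μ : Measure E) (g : E → ℝ) : E → ℝ :=
  fun y => ∫ x, w x * g (y + x) ∂μ

section Correlation

variable {E : Type*} [AddCommGroup E] [MeasurableSpace E] {w u g h : E → ℝ} {μ ν : Measure E}

lemma corr_const_mul (c : ℝ) (w : E → ℝ) (μ : Measure E) (g : E → ℝ) :
    corr w μ (fun y => c * g y) = fun y => c * corr w μ g y := by
  ext y
  simp only [corr, ← integral_const_mul, mul_left_comm]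

lemma corr_translate (w : E → ℝ) (μ : Measure E) (g : E → ℝ) (x : E) :
    corr w μ (fun y => g (y + x)) = fun y => corr w μ g (y + x) := by
  ext y
  simp only [corr, add_right_comm]

section MeasurableNeg

variable [MeasurableNeg E]

lemma even_corr [μ.IsNegInvariant] (hw : w.Even) (hg : g.Even) : (corr w μ g).Even := fun y => by
  simp only [corr]
  rw [← integral_neg_eq_self]
  refine integral_congr_ae (.of_forall fun x => ?_)
  simp only [hw x, ← neg_add, hg (y + x)]

end MeasurableNeg

section MeasurableAdd

variable [MeasurableAdd E]

lemma integrable_corr (hw : Integrable w μ) (hg : BddMeas g) (y : E) :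
    Integrable (fun x => w x * g (y + x)) μ :=
  let ⟨M, hM⟩ := hg.bounded
  hw.mul_bdd (c := M) (hg.measurable.comp (measurable_const_add y)).aestronglyMeasurable
    (.of_forall fun _ => hM _)

lemma corr_abs_le (hw : Integrable w μ) (hg : BddMeas g) {M : ℝ} (hM : ∀ y, |g y| ≤ M) (y : E) :
    |corr w μ g y| ≤ (∫ x, |w x| ∂μ) * M := by
  refine abs_integral_le_integral_abs.trans ?_
  rw [← integral_mul_const]
  refine integral_mono (integrable_corr hw hg y).abs (hw.abs.mul_const M) fun x => ?_
  simp only [abs_mul]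
  exact mul_le_mul_of_nonneg_left (hM _) (abs_nonneg _)

lemma corr_add (hw : Integrable w μ) (hg : BddMeas g) (hh : BddMeas h) :
    corr w μ (fun y => g y + h y) = fun y => corr w μ g y + corr w μ h y := by
  ext y
  simp only [corr, mul_add]
  exact integral_add (integrable_corr hw hg y) (integrable_corr hw hh y)

lemma corr_sub (hw : Integrable w μ) (hg : BddMeas g) (hh : BddMeas h) :
    corr w μ (fun y => g y - h y) = fun y => corr w μ g y - corr w μ h y := by
  ext y
  simp only [corr, mul_sub]
  exact integral_sub (integrable_corr hw hg y) (integrable_corr hw hh y)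

lemma corr_sub_left (hw : Integrable w μ) (hu : Integrable u μ) (hg : BddMeas g) :
    corr (fun y => w y - u y) μ g = fun y => corr w μ g y - corr u μ g y := by
  ext y
  simp only [corr, sub_mul]
  exact integral_sub (integrable_corr hw hg y) (integrable_corr hu hg y)

end MeasurableAdd

section MeasurableAdd₂

variable [MeasurableAdd₂ E]

lemma BddMeas.corr [SFinite μ] (hw : Integrable w μ) (hg : BddMeas g) :
    BddMeas (corr w μ g) := by
  obtain ⟨M, hM⟩ := hg.bounded
  refine ⟨?_, _, corr_abs_le hw hg hM⟩
  let w' := hw.aestronglyMeasurable.mk w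
  have hcorr : _root_.corr w μ g = fun y => ∫ x, w' x * g (y + x) ∂μ := by
    ext y
    exact integral_congr_ae (hw.aestronglyMeasurable.ae_eq_mk.mul .rfl)
  have hmeas : Measurable (fun p : E × E => w' p.2 * g (p.1 + p.2)) :=
    (hw.aestronglyMeasurable.stronglyMeasurable_mk.measurable.comp measurable_snd).mul
      (hg.measurable.comp (measurable_fst.add measurable_snd))
  rw [hcorr]
  exact hmeas.stronglyMeasurable.integral_prod_right.measurable

lemma corr_comm [SFinite μ] [SFinite ν] (hw : Integrable w μ) (hu : Integrable u ν)
    (hg : BddMeas g) : corr w μ (corr u ν g) = corr u ν (corr w μ g) := by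
  ext y
  obtain ⟨M, hM⟩ := hg.bounded
  have hInt : Integrable (fun p : E × E => w p.1 * u p.2 * g (y + p.1 + p.2)) (μ.prod ν) :=
    (hw.mul_prod hu).mul_bdd (c := M)
      (hg.measurable.comp ((measurable_fst.const_add y).add measurable_snd)).aestronglyMeasurable
      (.of_forall fun _ => hM _)
  have hInt' : Integrable (Function.uncurry fun x z => w x * (u z * g (y + x + z)))
      (μ.prod ν) := by
    simpa only [Function.uncurry_def, mul_assoc] using hInt
  simp only [corr, ← integral_const_mul]
  rw [integral_integral_swap hInt']
  simp only [add_right_comm, mul_left_comm]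

end MeasurableAdd₂

end Correlation

section CorrelationVolume

variable {E : Type*} [AddCommGroup E] [MeasureSpace E] [MeasurableAdd₂ E]
  [(volume : Measure E).IsAddLeftInvariant] {w g : E → ℝ} {μ : Measure E}

lemma corr_volume_comm [MeasurableNeg E] [(volume : Measure E).IsNegInvariant]
    (hw : w.Even) (hg : g.Even) : corr w volume g = corr g volume w := by
  ext y
  simp only [corr]
  rw [← integral_sub_left_eq_self (fun x => w x * g (y + x)) volume (-y)]
  refine integral_congr_ae (.of_forall fun x => ?_)
  simp only
  rw [← neg_add', hw (y + x), show y + -(y + x) = -x by abel, hg x, mul_comm]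

variable [SFinite (volume : Measure E)]

lemma integrable_corr_prod (hw : Integrable w μ) (hg : BddInt g) :
    Integrable (fun p : E × E => w p.1 * g (p.2 + p.1)) (μ.prod volume) := by
  have hmeas : AEStronglyMeasurable (fun p : E × E => w p.1 * g (p.2 + p.1)) (μ.prod volume) :=
    hw.aestronglyMeasurable.comp_fst.mul
      (hg.measurable.comp (measurable_snd.add measurable_fst)).aestronglyMeasurable
  have hnorm : ∀ x, ∫ y, ‖w x * g (y + x)‖ = |w x| * l1Norm g := fun x => by
    simp only [norm_mul, Real.norm_eq_abs, integral_const_mul]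
    rw [← l1Norm_translate g x, l1Norm]
  rw [integrable_prod_iff hmeas]
  refine ⟨.of_forall fun x => ((hg.translate x).integrable.const_mul (w x)), ?_⟩
  simp only [hnorm]
  exact hw.abs.mul_const _

variable [SFinite μ]

lemma BddInt.corr (hw : Integrable w μ) (hg : BddInt g) : BddInt (corr w μ g) :=
  ⟨hg.toBddMeas.corr hw, (integrable_corr_prod hw hg).integral_prod_right⟩

lemma integral_corr (hw : Integrable w μ) (hg : BddInt g) :
    ∫ y, corr w μ g y = (∫ x, w x ∂μ) * ∫ y, g y := by
  simp only [corr]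
  rw [← integral_integral_swap (integrable_corr_prod hw hg), ← integral_mul_const]
  simp only [integral_const_mul, integral_add_right_eq_self g]

lemma l1Norm_corr_le (hw : Integrable w μ) (hg : BddInt g) :
    l1Norm (corr w μ g) ≤ (∫ x, |w x| ∂μ) * l1Norm g := by
  rw [l1Norm, l1Norm, ← integral_corr hw.abs hg.abs]
  refine integral_mono (hg.corr hw).abs.integrable (hg.abs.corr hw.abs).integrable fun y => ?_
  refine abs_integral_le_integral_abs.trans_eq ?_
  simp only [_root_.corr, abs_mul]

end CorrelationVolume

/-! ## Averaging over translations and convolution powers -/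

/-- The average `y ↦ ∫ g(y + x) F(dx)` of the translates of `g`. On even measures `F` this is
convolution with `F`, so that `avg (convPow F n)` is the `n`-th iterate of `avg F`. -/
def avg {E : Type*} [Add E] [MeasurableSpace E] (F : Measure E) (g : E → ℝ) : E → ℝ :=
  fun y => ∫ x, g (y + x) ∂F

section Avg

variable {E : Type*} [AddCommGroup E] [MeasurableSpace E] {w g h : E → ℝ} {F μ : Measure E}

lemma avg_eq_corr (F : Measure E) (g : E → ℝ) : avg F g = corr (fun _ => 1) F g := by
  ext y
  simp only [avg, corr, one_mul]

lemma avg_const_mul (c : ℝ) (F : Measure E) (g : E → ℝ) :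
    avg F (fun y => c * g y) = fun y => c * avg F g y := by
  ext y
  simp only [avg, integral_const_mul]

lemma avg_translate (F : Measure E) (g : E → ℝ) (x : E) :
    avg F (fun y => g (y + x)) = fun y => avg F g (y + x) := by
  ext y
  simp only [avg, add_right_comm]

lemma even_avg [MeasurableNeg E] [F.IsNegInvariant] (hg : g.Even) : (avg F g).Even := by
  rw [avg_eq_corr]
  exact even_corr (fun _ => rfl) hg

section MeasurableAdd

variable [MeasurableAdd E] [IsProbabilityMeasure F]

lemma integrable_translate (hg : BddMeas g) (y : E) : Integrable (fun x => g (y + x)) F :=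
  (hg.comp (measurable_const_add y)).integrable

lemma avg_add (hg : BddMeas g) (hh : BddMeas h) :
    avg F (fun y => g y + h y) = fun y => avg F g y + avg F h y := by
  simp only [avg_eq_corr, corr_add (integrable_const (1 : ℝ)) hg hh]

lemma avg_sub (hg : BddMeas g) (hh : BddMeas h) :
    avg F (fun y => g y - h y) = fun y => avg F g y - avg F h y := by
  simp only [avg_eq_corr, corr_sub (integrable_const (1 : ℝ)) hg hh]

lemma avg_mono (hg : BddMeas g) (hh : BddMeas h) (hgh : ∀ y, g y ≤ h y) (y : E) :
    avg F g y ≤ avg F h y :=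
  integral_mono (integrable_translate hg y) (integrable_translate hh y) fun _ => hgh _

lemma avg_abs_le (hg : BddMeas g) {M : ℝ} (hM : ∀ y, |g y| ≤ M) (y : E) : |avg F g y| ≤ M := by
  simpa [avg_eq_corr] using corr_abs_le (μ := F) (integrable_const (1 : ℝ)) hg hM y

lemma avg_pos (hg : BddMeas g) (hpos : ∀ y, 0 < g y) (y : E) : 0 < avg F g y := by
  have hsupp : Function.support (fun x => g (y + x)) = Set.univ :=
    Set.eq_univ_of_forall fun x => (hpos (y + x)).ne'
  rw [avg, integral_pos_iff_support_of_nonneg (fun x => (hpos _).le) (integrable_translate hg y),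
    hsupp]
  simp

end MeasurableAdd

section MeasurableAdd₂

variable [MeasurableAdd₂ E]

lemma avg_mconv [IsFiniteMeasure F] [IsFiniteMeasure μ]
    (hg : BddMeas g) : avg (mconv μ F) g = avg μ (avg F g) := by
  ext y
  have hadd : Measurable fun p : E × E => p.1 + p.2 := measurable_fst.add measurable_snd
  have hg' : BddMeas fun p : E × E => g (y + (p.1 + p.2)) := hg.comp (hadd.const_add y)
  simp only [avg, mconv]
  rw [integral_map hadd.aemeasurable
    (hg.comp (measurable_const_add y)).measurable.aestronglyMeasurable,
    integral_prod _ hg'.integrable]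
  simp only [add_assoc]

variable [IsProbabilityMeasure F]

lemma BddMeas.avg (hg : BddMeas g) : BddMeas (avg F g) := by
  rw [avg_eq_corr]
  exact hg.corr (integrable_const _)

lemma avg_corr_comm [SFinite μ] (hw : Integrable w μ) (hg : BddMeas g) :
    avg F (corr w μ g) = corr w μ (avg F g) := by
  simp only [avg_eq_corr, corr_comm (integrable_const (1 : ℝ)) hw hg]

lemma avg_comm [IsProbabilityMeasure μ] (hg : BddMeas g) :
    avg F (avg μ g) = avg μ (avg F g) := by
  simp only [avg_eq_corr μ, avg_corr_comm (integrable_const (1 : ℝ)) hg]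

end MeasurableAdd₂

end Avg

section AvgVolume

variable {E : Type*} [AddCommGroup E] [MeasureSpace E] [MeasurableAdd₂ E]
  [SFinite (volume : Measure E)] [(volume : Measure E).IsAddLeftInvariant] {g : E → ℝ}
  {F : Measure E} [IsProbabilityMeasure F]

lemma BddInt.avg (hg : BddInt g) : BddInt (avg F g) := by
  rw [avg_eq_corr]
  exact hg.corr (integrable_const _)

lemma integral_avg (hg : BddInt g) : ∫ y, avg F g y = ∫ y, g y := by
  rw [avg_eq_corr, integral_corr (integrable_const _) hg]
  simp

lemma l1Norm_avg_le (hg : BddInt g) : l1Norm (avg F g) ≤ l1Norm g := by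
  simpa [avg_eq_corr] using l1Norm_corr_le (μ := F) (integrable_const (1 : ℝ)) hg

end AvgVolume

section ConvPow

variable {E : Type*} [AddCommGroup E] [MeasurableSpace E] {g : E → ℝ} {F : Measure E}

lemma avg_convPow_zero [MeasurableAdd E] (F : Measure E) (hg : BddMeas g) :
    avg (convPow F 0) g = g := by
  ext y
  rw [avg, convPow, integral_dirac' _ _
    (hg.comp (measurable_const_add y)).measurable.stronglyMeasurable, add_zero]

variable [MeasurableAdd₂ E] [IsProbabilityMeasure F]

instance isProbabilityMeasure_convPow (n : ℕ) : IsProbabilityMeasure (convPow F n) := by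
  induction n with
  | zero => exact Measure.dirac.isProbabilityMeasure
  | succ n ih =>
    exact Measure.isProbabilityMeasure_map (measurable_fst.add measurable_snd).aemeasurable

instance isNegInvariant_convPow [MeasurableNeg E] [F.IsNegInvariant] (n : ℕ) :
    (convPow F n).IsNegInvariant := by
  induction n with
  | zero => exact ⟨by rw [Measure.neg, convPow, Measure.map_dirac' measurable_neg, neg_zero]⟩
  | succ n ih =>
    have hadd : Measurable fun p : E × E => p.1 + p.2 := measurable_fst.add measurable_snd
    have hneg : Measurable (Prod.map Neg.neg Neg.neg : E × E → E × E) :=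
      measurable_neg.prodMap measurable_neg
    refine ⟨?_⟩
    calc (convPow F (n + 1)).neg
        = (((convPow F n).prod F).map (Prod.map Neg.neg Neg.neg)).map fun p => p.1 + p.2 := by
          rw [Measure.neg, convPow, mconv, Measure.map_map measurable_neg hadd,
            Measure.map_map hadd hneg]
          congr 1
          ext p
          simp [add_comm]
      _ = convPow F (n + 1) := by
          rw [← Measure.map_prod_map _ _ measurable_neg measurable_neg]
          exact congrArg₂ mconv (convPow F n).neg_eq_self F.neg_eq_self

lemma avg_convPow_succ (hg : BddMeas g) (n : ℕ) :
    avg (convPow F (n + 1)) g = avg F (avg (convPow F n) g) := by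
  rw [convPow, avg_mconv hg, avg_comm hg]

lemma avg_convPow_add (hg : BddMeas g) (i j : ℕ) :
    avg (convPow F (i + j)) g = avg (convPow F i) (avg (convPow F j) g) := by
  induction i with
  | zero => rw [avg_convPow_zero _ hg.avg, zero_add]
  | succ i ih => rw [Nat.add_right_comm, avg_convPow_succ hg, ih, avg_convPow_succ hg.avg]

end ConvPow

/-! ## Cosine transforms -/

section CosTransform

variable {E : Type*} [NormedAddCommGroup E] [InnerProductSpace ℝ E] [MeasurableSpace E]

/-- The cosine transform of `F`. It is the real part of the characteristic function, hence equal to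
it when `F` is symmetric. -/
def cosTransform (F : Measure E) (t : E) : ℝ := ∫ x, Real.cos ⟪t, x⟫ ∂F

variable [BorelSpace E] {F : Measure E}

lemma integral_sin_inner [F.IsNegInvariant] (t : E) : ∫ x, Real.sin ⟪t, x⟫ ∂F = 0 := by
  have hodd : ∫ x, Real.sin ⟪t, x⟫ ∂F = -∫ x, Real.sin ⟪t, x⟫ ∂F := by
    conv_lhs => rw [← integral_neg_eq_self]
    simp only [inner_neg_right, Real.sin_neg, integral_neg]
  linarith

variable [FiniteDimensional ℝ E]

lemma bddMeas_cos_inner (t : E) : BddMeas (fun x : E => Real.cos ⟪t, x⟫) :=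
  ⟨by fun_prop, 1, fun _ => Real.abs_cos_le_one _⟩

lemma bddMeas_sin_inner (t : E) : BddMeas (fun x : E => Real.sin ⟪t, x⟫) :=
  ⟨by fun_prop, 1, fun _ => Real.abs_sin_le_one _⟩

variable [IsProbabilityMeasure F]

lemma measurable_cosTransform : Measurable (cosTransform F) := by
  have hcos : Continuous fun p : E × E => Real.cos ⟪p.1, p.2⟫ := by fun_prop
  exact hcos.stronglyMeasurable.integral_prod_right.measurable

lemma abs_cosTransform_le_one (t : E) : |cosTransform F t| ≤ 1 := by
  refine abs_integral_le_integral_abs.trans ?_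
  calc ∫ x, |Real.cos ⟪t, x⟫| ∂F ≤ ∫ _, (1 : ℝ) ∂F :=
        integral_mono (bddMeas_cos_inner t).abs.integrable (integrable_const _)
          fun _ => Real.abs_cos_le_one _
    _ = 1 := by simp

lemma avg_cos_inner [F.IsNegInvariant] (t : E) :
    avg F (fun x => Real.cos ⟪t, x⟫) = fun y => cosTransform F t * Real.cos ⟪t, y⟫ := by
  ext y
  simp only [avg, cosTransform, inner_add_right, Real.cos_add]
  rw [integral_sub ((bddMeas_cos_inner t).integrable.const_mul _)
    ((bddMeas_sin_inner t).integrable.const_mul _), integral_const_mul, integral_const_mul,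
    integral_sin_inner, mul_zero, sub_zero, mul_comm]

lemma cosTransform_convPow [F.IsNegInvariant] (n : ℕ) (t : E) :
    cosTransform (convPow F n) t = cosTransform F t ^ n := by
  have havg : avg (convPow F n) (fun x => Real.cos ⟪t, x⟫) =
      fun y => cosTransform F t ^ n * Real.cos ⟪t, y⟫ := by
    induction n with
    | zero => simp only [avg_convPow_zero F (bddMeas_cos_inner t), pow_zero, one_mul]
    | succ n ih =>
      rw [avg_convPow_succ (bddMeas_cos_inner t), ih, avg_const_mul, avg_cos_inner]
      simp only [pow_succ, mul_assoc]
  simpa [avg, cosTransform] using congrFun havg 0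

end CosTransform

section CosRep

variable {E : Type*} [NormedAddCommGroup E] [InnerProductSpace ℝ E] [FiniteDimensional ℝ E]
  [MeasurableSpace E] [BorelSpace E] {ρ g : E → ℝ} {F : Measure E}

/-- `g` is the cosine transform of the density `ρ`; this plays the role of Fourier inversion. -/
def CosRep (ρ g : E → ℝ) : Prop := ∀ y, g y = ∫ t, Real.cos ⟪t, y⟫ * ρ t

lemma integrable_cos_inner_mul (hρ : Integrable ρ) (y : E) :
    Integrable (fun t => Real.cos ⟪t, y⟫ * ρ t) :=
  hρ.bdd_mul (c := 1) (by fun_prop) (.of_forall fun _ => Real.abs_cos_le_one _)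

lemma CosRep.abs_le (hρ : Integrable ρ) (hρ0 : ∀ t, 0 ≤ ρ t) (h : CosRep ρ g) (y : E) :
    |g y| ≤ g 0 := by
  rw [h y, h 0]
  refine abs_integral_le_integral_abs.trans ?_
  refine integral_mono (integrable_cos_inner_mul hρ y).abs (integrable_cos_inner_mul hρ 0)
    fun t => ?_
  simp only [abs_mul, abs_of_nonneg (hρ0 t), inner_zero_right, Real.cos_zero]
  exact mul_le_mul_of_nonneg_right (Real.abs_cos_le_one _) (hρ0 t)

variable [IsProbabilityMeasure F]

lemma integrable_cosTransform_pow_mul (hρ : Integrable ρ) (n : ℕ) :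
    Integrable (fun t => cosTransform F t ^ n * ρ t) :=
  hρ.bdd_mul (c := 1) (measurable_cosTransform.pow_const n).aestronglyMeasurable <|
    .of_forall fun t => by
      rw [norm_pow]
      exact pow_le_one₀ (norm_nonneg _) (abs_cosTransform_le_one t)

lemma CosRep.avg [F.IsNegInvariant] (hρ : Integrable ρ) (h : CosRep ρ g) :
    CosRep (fun t => cosTransform F t * ρ t) (avg F g) := by
  intro y
  have hprod : Integrable (fun p : E × E => Real.cos ⟪p.2, y + p.1⟫ * ρ p.2) (F.prod volume) :=
    hρ.comp_snd F |>.bdd_mul (c := 1) (by fun_prop)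
      (.of_forall fun _ => Real.abs_cos_le_one _)
  calc ∫ x, g (y + x) ∂F
      = ∫ x, (∫ t, Real.cos ⟪t, y + x⟫ * ρ t) ∂F := by simp only [h (y + _)]
    _ = ∫ t, ∫ x, Real.cos ⟪t, y + x⟫ * ρ t ∂F := integral_integral_swap hprod
    _ = ∫ t, Real.cos ⟪t, y⟫ * (cosTransform F t * ρ t) := by
      refine integral_congr_ae (.of_forall fun t => ?_)
      simp only [integral_mul_const]
      rw [show ∫ x, Real.cos ⟪t, y + x⟫ ∂F = cosTransform F t * Real.cos ⟪t, y⟫ from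
        congrFun (avg_cos_inner t) y]
      ring

lemma CosRep.avg_convPow [F.IsNegInvariant] (hρ : Integrable ρ) (h : CosRep ρ g) (n : ℕ) :
    CosRep (fun t => cosTransform F t ^ n * ρ t) (_root_.avg (convPow F n) g) := by
  simpa only [cosTransform_convPow] using h.avg (F := convPow F n) hρ

end CosRep

/-! ## Gaussian kernels -/

section GaussKernel

variable {E : Type*} [NormedAddCommGroup E] [InnerProductSpace ℝ E] {θ θ' κ : ℝ}

/-- The normalizing constant `(2πθ)^{-dim E / 2}` of the Gaussian density of variance `θ`. -/
def gaussConst (E : Type*) [NormedAddCommGroup E] [InnerProductSpace ℝ E] (θ : ℝ) : ℝ :=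
  (2 * Real.pi * θ) ^ (-((Module.finrank ℝ E : ℝ) / 2))

/-- The density of the centred Gaussian distribution with covariance `θ • id`. -/
def gaussKernel (θ : ℝ) (y : E) : ℝ := gaussConst E θ * Real.exp (-‖y‖ ^ 2 / (2 * θ))

lemma gaussConst_pos (hθ : 0 < θ) : 0 < gaussConst E θ := Real.rpow_pos_of_pos (by positivity) _

lemma gaussConst_mul_rpow (hθ : 0 < θ) :
    gaussConst E θ * (2 * Real.pi * θ) ^ ((Module.finrank ℝ E : ℝ) / 2) = 1 := by
  rw [gaussConst, ← Real.rpow_add (by positivity), neg_add_cancel, Real.rpow_zero]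

lemma gaussConst_one_div (hθ : 0 < θ) :
    gaussConst E (1 / θ) = gaussConst E 1 * θ ^ ((Module.finrank ℝ E : ℝ) / 2) := by
  rw [gaussConst, gaussConst, Real.mul_rpow (by positivity) (by positivity), mul_one, one_div,
    Real.inv_rpow hθ.le, Real.rpow_neg hθ.le, inv_inv]

lemma gaussConst_mul_gaussConst (hθ : 0 < θ) (hθ' : 0 < θ') :
    gaussConst E θ' * gaussConst E θ *
      (Real.pi / (1 / (2 * θ') + 1 / (2 * θ))) ^ ((Module.finrank ℝ E : ℝ) / 2) =
      gaussConst E (θ + θ') := by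
  simp only [gaussConst]
  rw [Real.rpow_neg (by positivity), Real.rpow_neg (by positivity), Real.rpow_neg (by positivity),
    ← Real.inv_rpow (by positivity), ← Real.inv_rpow (by positivity),
    ← Real.inv_rpow (by positivity), ← Real.mul_rpow (by positivity) (by positivity),
    ← Real.mul_rpow (by positivity) (by positivity)]
  congr 1
  field_simp

lemma gaussKernel_pos (hθ : 0 < θ) (y : E) : 0 < gaussKernel θ y :=
  mul_pos (gaussConst_pos hθ) (Real.exp_pos _)

lemma gaussKernel_le_gaussConst (hθ : 0 < θ) (y : E) : gaussKernel θ y ≤ gaussConst E θ := by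
  refine mul_le_of_le_one_right (gaussConst_pos hθ).le (Real.exp_le_one_iff.2 ?_)
  exact div_nonpos_of_nonpos_of_nonneg (neg_nonpos.2 (sq_nonneg _)) (by positivity)

lemma even_gaussKernel (θ : ℝ) : (gaussKernel θ : E → ℝ).Even := fun y => by
  simp only [gaussKernel, norm_neg]

lemma rpow_mul_gaussKernel_one_le (hκ : 0 ≤ κ) (y : E) :
    (1 + κ) ^ (-((Module.finrank ℝ E : ℝ) / 2)) * gaussKernel 1 y ≤ gaussKernel (1 + κ) y := by
  have hexp : Real.exp (-‖y‖ ^ 2 / (2 * 1)) ≤ Real.exp (-‖y‖ ^ 2 / (2 * (1 + κ))) := by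
    rw [neg_div, neg_div]
    gcongr
    linarith
  calc (1 + κ) ^ (-((Module.finrank ℝ E : ℝ) / 2)) * gaussKernel 1 y
      = gaussConst E (1 + κ) * Real.exp (-‖y‖ ^ 2 / (2 * 1)) := by
        rw [gaussKernel, gaussConst, gaussConst, ← mul_assoc,
          ← Real.mul_rpow (by positivity) (by positivity)]
        congr 2
        ring
    _ ≤ gaussKernel (1 + κ) y :=
        mul_le_mul_of_nonneg_left hexp (gaussConst_pos (by positivity)).le

variable [FiniteDimensional ℝ E] [MeasurableSpace E] [BorelSpace E] {b : ℝ}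

lemma integrable_exp_neg_mul_sq_norm_add (hb : 0 < b) (c : ℝ) (w : E) :
    Integrable (fun v : E => Real.exp (-b * ‖v‖ ^ 2 + c * ⟪w, v⟫)) := by
  have hb' : 0 < (b : ℂ).re := by simpa using hb
  refine (GaussianFourier.integrable_cexp_neg_mul_sq_norm_add hb' c w).re.congr
    (.of_forall fun v => ?_)
  norm_cast

lemma integral_exp_neg_mul_sq_norm_add (hb : 0 < b) (c : ℝ) (w : E) :
    ∫ v : E, Real.exp (-b * ‖v‖ ^ 2 + c * ⟪w, v⟫) =
      (Real.pi / b) ^ ((Module.finrank ℝ E : ℝ) / 2) *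
        Real.exp (c ^ 2 * ‖w‖ ^ 2 / (4 * b)) := by
  have hb' : 0 < (b : ℂ).re := by simpa using hb
  have key := GaussianFourier.integral_cexp_neg_mul_sq_norm_add hb' c w
  apply Complex.ofReal_injective
  push_cast [← integral_complex_ofReal, Complex.ofReal_cpow (by positivity : 0 ≤ Real.pi / b)]
  exact key

lemma integral_cos_mul_exp_neg_mul_sq_norm (hb : 0 < b) (y : E) :
    ∫ t : E, Real.cos ⟪t, y⟫ * Real.exp (-b * ‖t‖ ^ 2) =
      (Real.pi / b) ^ ((Module.finrank ℝ E : ℝ) / 2) * Real.exp (-‖y‖ ^ 2 / (4 * b)) := by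
  have hb' : 0 < (b : ℂ).re := by simpa using hb
  have hre : ∀ t : E, Real.cos ⟪t, y⟫ * Real.exp (-b * ‖t‖ ^ 2) =
      (Complex.exp (-(b : ℂ) * ‖t‖ ^ 2 + Complex.I * ⟪y, t⟫)).re := fun t => by
    rw [Complex.exp_re, real_inner_comm, mul_comm]
    simp [← Complex.ofReal_pow]
  have hvalue : ((Real.pi : ℂ) / b) ^ ((Module.finrank ℝ E : ℂ) / 2) *
      Complex.exp (Complex.I ^ 2 * ‖y‖ ^ 2 / (4 * b)) =
      (((Real.pi / b) ^ ((Module.finrank ℝ E : ℝ) / 2) *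
        Real.exp (-‖y‖ ^ 2 / (4 * b)) : ℝ) : ℂ) := by
    push_cast [Complex.ofReal_cpow (by positivity : 0 ≤ Real.pi / b)]
    simp
  simp only [hre]
  rw [← Complex.ofReal_re ((Real.pi / b) ^ ((Module.finrank ℝ E : ℝ) / 2) * _), ← hvalue,
    ← GaussianFourier.integral_cexp_neg_mul_sq_norm_add hb' Complex.I y]
  exact integral_re (GaussianFourier.integrable_cexp_neg_mul_sq_norm_add hb' Complex.I y)

lemma bddInt_gaussKernel (hθ : 0 < θ) : BddInt (gaussKernel θ : E → ℝ) where
  measurable := by unfold gaussKernel; fun_prop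
  bounded := ⟨gaussConst E θ, fun y => by
    rw [abs_of_pos (gaussKernel_pos hθ y)]
    exact gaussKernel_le_gaussConst hθ y⟩
  integrable := by
    have hexp := integrable_exp_neg_mul_sq_norm_add (b := 1 / (2 * θ)) (by positivity) 0 (0 : E)
    refine (hexp.const_mul (gaussConst E θ)).congr (.of_forall fun v => ?_)
    simp only [gaussKernel]
    congr 2
    ring

lemma integral_gaussKernel (hθ : 0 < θ) : ∫ y : E, gaussKernel θ y = 1 := by
  have hexp : ∀ v : E, -‖v‖ ^ 2 / (2 * θ) = -(1 / (2 * θ)) * ‖v‖ ^ 2 := fun v => by ring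
  simp only [gaussKernel, hexp, integral_const_mul]
  rw [GaussianFourier.integral_rexp_neg_mul_sq_norm (by positivity),
    show Real.pi / (1 / (2 * θ)) = 2 * Real.pi * θ by field_simp, gaussConst_mul_rpow hθ]

lemma corr_gaussKernel (hθ : 0 < θ) (hθ' : 0 < θ') :
    corr (gaussKernel θ') volume (gaussKernel θ) = (gaussKernel (θ + θ') : E → ℝ) := by
  ext y
  have hsq : ∀ x : E, Real.exp (-‖x‖ ^ 2 / (2 * θ')) * Real.exp (-‖y + x‖ ^ 2 / (2 * θ)) =
      Real.exp (-‖y‖ ^ 2 / (2 * θ)) *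
        Real.exp (-(1 / (2 * θ') + 1 / (2 * θ)) * ‖x‖ ^ 2 + (-1 / θ) * ⟪y, x⟫) := fun x => by
    rw [← Real.exp_add, ← Real.exp_add, norm_add_sq_real]
    congr 1
    field_simp
    ring
  have hexp : Real.exp (-‖y‖ ^ 2 / (2 * θ)) *
      Real.exp ((-1 / θ) ^ 2 * ‖y‖ ^ 2 / (4 * (1 / (2 * θ') + 1 / (2 * θ)))) =
      Real.exp (-‖y‖ ^ 2 / (2 * (θ + θ'))) := by
    rw [← Real.exp_add]
    congr 1
    field_simp
    ring
  simp only [corr, gaussKernel, mul_mul_mul_comm (gaussConst E θ'), hsq, integral_const_mul]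
  rw [integral_exp_neg_mul_sq_norm_add (by positivity), ← hexp, ← gaussConst_mul_gaussConst hθ hθ']
  ring

lemma cosRep_gaussKernel (hθ : 0 < θ) :
    CosRep (fun t => gaussConst E θ * gaussKernel (1 / θ) t) (gaussKernel θ : E → ℝ) := by
  intro y
  have hdensity : ∀ t : E, Real.cos ⟪t, y⟫ * (gaussConst E θ * gaussKernel (1 / θ) t) =
      gaussConst E θ * gaussConst E (1 / θ) *
        (Real.cos ⟪t, y⟫ * Real.exp (-(θ / 2) * ‖t‖ ^ 2)) := fun t => by
    rw [gaussKernel, show -‖t‖ ^ 2 / (2 * (1 / θ)) = -(θ / 2) * ‖t‖ ^ 2 by field_simp]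
    ring
  have hconst := gaussConst_mul_rpow (E := E) (one_div_pos.2 hθ)
  simp only [hdensity, integral_const_mul]
  rw [integral_cos_mul_exp_neg_mul_sq_norm (by positivity), gaussKernel,
    show Real.pi / (θ / 2) = 2 * Real.pi * (1 / θ) by field_simp,
    show 4 * (θ / 2) = 2 * θ by ring]
  linear_combination (-gaussConst E θ * Real.exp (-‖y‖ ^ 2 / (2 * θ))) * hconst

end GaussKernel

/-! ## Moment inequalities -/

section Moments

variable {α : Type*} [MeasurableSpace α] {μ : Measure α} {ρ f : α → ℝ}

-- Jensen's inequality; `∫ (f - c)² ρ ≥ 0` for the mean `c` of `f`.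
lemma sq_integral_mul_le (hρ0 : ∀ x, 0 ≤ ρ x) (hρ : Integrable ρ μ) (hρ1 : ∫ x, ρ x ∂μ = 1)
    (hf : Integrable (fun x => f x * ρ x) μ) (hf2 : Integrable (fun x => f x ^ 2 * ρ x) μ) :
    (∫ x, f x * ρ x ∂μ) ^ 2 ≤ ∫ x, f x ^ 2 * ρ x ∂μ := by
  set c := ∫ x, f x * ρ x ∂μ with hc
  have hInt : Integrable (fun x => f x ^ 2 * ρ x - 2 * c * (f x * ρ x)) μ :=
    hf2.sub (hf.const_mul _)
  have hexpand : ∫ x, (f x - c) ^ 2 * ρ x ∂μ = (∫ x, f x ^ 2 * ρ x ∂μ) - c ^ 2 := by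
    calc ∫ x, (f x - c) ^ 2 * ρ x ∂μ
        = ∫ x, f x ^ 2 * ρ x - 2 * c * (f x * ρ x) + c ^ 2 * ρ x ∂μ := by
          refine integral_congr_ae (.of_forall fun x => ?_)
          ring
      _ = (∫ x, f x ^ 2 * ρ x ∂μ) - 2 * c * c + c ^ 2 * 1 := by
          rw [integral_add hInt (hρ.const_mul _),
            integral_sub hf2 (hf.const_mul _), integral_const_mul, integral_const_mul, hρ1, ← hc]
      _ = (∫ x, f x ^ 2 * ρ x ∂μ) - c ^ 2 := by ring
  have hnonneg : 0 ≤ ∫ x, (f x - c) ^ 2 * ρ x ∂μ :=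
    integral_nonneg fun x => mul_nonneg (sq_nonneg _) (hρ0 x)
  linarith

lemma sq_integral_le [IsProbabilityMeasure μ] (hf : BddMeas f) :
    (∫ x, f x ∂μ) ^ 2 ≤ ∫ x, f x ^ 2 ∂μ := by
  have hf2 : Integrable (fun x => f x ^ 2) μ := by
    simpa only [pow_two] using (hf.mul hf).integrable
  simpa using sq_integral_mul_le (ρ := fun _ => (1 : ℝ)) (fun _ => zero_le_one)
    (integrable_const _) (by simp) (by simpa using hf.integrable) (by simpa using hf2)

-- With `κ = j / N` this is the chain `x ^ (1 + κ) ≥ x (1 + κ log x)`, `x log x ≥ x log p + x - p`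
-- for `x = a ^ N`.
lemma linear_le_pow_add {a p : ℝ} (ha : 0 ≤ a) (hp : 0 < p) {N : ℕ} (hN : 0 < N) (j : ℕ) :
    (1 + (j : ℝ) / N * (Real.log p + 1)) * a ^ N - (j : ℝ) / N * p ≤ a ^ (N + j) := by
  have hκ : (0 : ℝ) ≤ (j : ℝ) / N := by positivity
  rcases ha.eq_or_lt with rfl | ha
  · rw [zero_pow hN.ne', zero_pow (by omega)]
    nlinarith [mul_nonneg hκ hp.le]
  have hN0 : (N : ℝ) ≠ 0 := by exact_mod_cast hN.ne'
  have hpow : 0 < a ^ N := by positivity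
  have hlogpow : 1 + (j : ℝ) / N * Real.log (a ^ N) ≤ a ^ j := by
    have hexp := Real.add_one_le_exp (Real.log (a ^ j))
    rw [Real.exp_log (by positivity), Real.log_pow] at hexp
    rw [Real.log_pow, div_mul_eq_mul_div, mul_left_comm, mul_div_cancel_left₀ _ hN0]
    linarith
  have hentropy : a ^ N * (Real.log p - Real.log (a ^ N)) ≤ p - a ^ N := by
    rw [← Real.log_div hp.ne' hpow.ne']
    calc a ^ N * Real.log (p / a ^ N) ≤ a ^ N * (p / a ^ N - 1) :=
          mul_le_mul_of_nonneg_left (Real.log_le_sub_one_of_pos (by positivity)) hpow.le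
      _ = p - a ^ N := by field_simp
  rw [pow_add]
  nlinarith [mul_le_mul_of_nonneg_left hentropy hκ, mul_le_mul_of_nonneg_left hlogpow hpow.le]

lemma integral_pow_mul_mul_one_sub_le (hρ0 : ∀ x, 0 ≤ ρ x) (hρ : Integrable ρ μ)
    (hρ1 : ∫ x, ρ x ∂μ = 1) (hf0 : ∀ x, 0 ≤ f x)
    (hf : ∀ n : ℕ, Integrable (fun x => f x ^ n * ρ x) μ) {N : ℕ} (hN : 0 < N)
    (hpos : 0 < ∫ x, f x ^ N * ρ x ∂μ) (j : ℕ) :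
    (∫ x, f x ^ N * ρ x ∂μ) * (1 - (j : ℝ) / N * Real.log (1 / ∫ x, f x ^ N * ρ x ∂μ)) ≤
      ∫ x, f x ^ (N + j) * ρ x ∂μ := by
  set p := ∫ x, f x ^ N * ρ x ∂μ with hp
  set κ : ℝ := (j : ℝ) / N
  have hpointwise : ∀ x, (1 + κ * (Real.log p + 1)) * (f x ^ N * ρ x) - κ * p * ρ x ≤
      f x ^ (N + j) * ρ x := fun x => by
    nlinarith [mul_le_mul_of_nonneg_right (linear_le_pow_add (hf0 x) hpos hN j) (hρ0 x)]
  have hInt := integral_mono (((hf N).const_mul (1 + κ * (Real.log p + 1))).sub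
    (hρ.const_mul (κ * p))) (hf (N + j)) hpointwise
  simp only [Pi.sub_apply] at hInt
  rw [integral_sub ((hf N).const_mul _) (hρ.const_mul _), integral_const_mul, integral_const_mul,
    hρ1, ← hp] at hInt
  rw [one_div, Real.log_inv]
  linarith

end Moments

section CosRepModulus

lemma sq_cos_add_sub_cos_le (x y : ℝ) : (Real.cos (y + x) - Real.cos y) ^ 2 ≤
    2 * (1 - Real.cos x) := by
  have hsum : (Real.cos (y + x) - Real.cos y) ^ 2 + (Real.sin (y + x) - Real.sin y) ^ 2 =
      2 * (1 - Real.cos x) := by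
    rw [Real.cos_add, Real.sin_add]
    linear_combination (Real.cos y ^ 2 + Real.sin y ^ 2) * Real.sin_sq_add_cos_sq x +
      (2 - 2 * Real.cos x) * Real.sin_sq_add_cos_sq y
  linarith [sq_nonneg (Real.sin (y + x) - Real.sin y)]

variable {E : Type*} [NormedAddCommGroup E] [InnerProductSpace ℝ E] [FiniteDimensional ℝ E]
  [MeasurableSpace E] [BorelSpace E] {ρ g : E → ℝ}

lemma CosRep.sq_translate_sub_le (hρ0 : ∀ t, 0 ≤ ρ t) (hρ : Integrable ρ) (hρ1 : ∫ t, ρ t = 1)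
    (h : CosRep ρ g) (x y : E) : (g (y + x) - g y) ^ 2 ≤ 2 * (1 - g x) := by
  have hcos := integrable_cos_inner_mul hρ
  have hdiff : g (y + x) - g y =
      ∫ t, (Real.cos ⟪t, y + x⟫ - Real.cos ⟪t, y⟫) * ρ t := by
    simp only [sub_mul]
    rw [integral_sub (hcos _) (hcos _), ← h, ← h]
  have hone : 2 * (1 - g x) = ∫ t, 2 * (ρ t - Real.cos ⟪t, x⟫ * ρ t) := by
    rw [integral_const_mul, integral_sub hρ (hcos x), ← h, hρ1]
  have hsq : BddMeas fun t : E => (Real.cos ⟪t, y + x⟫ - Real.cos ⟪t, y⟫) ^ 2 := by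
    have hcosbdd (z : E) : BddMeas fun t => Real.cos ⟪t, z⟫ :=
      ⟨by fun_prop, 1, fun t => Real.abs_cos_le_one _⟩
    simpa only [pow_two] using ((hcosbdd (y + x)).sub (hcosbdd y)).mul
      ((hcosbdd (y + x)).sub (hcosbdd y))
  obtain ⟨M, hM⟩ := hsq.bounded
  have hsqint := hρ.bdd_mul (c := M) hsq.measurable.aestronglyMeasurable (.of_forall hM)
  rw [hdiff, hone]
  refine (sq_integral_mul_le hρ0 hρ hρ1 ?_ hsqint).trans ?_
  · simp only [sub_mul]
    exact (hcos (y + x)).sub (hcos y)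
  · refine integral_mono hsqint ((hρ.sub (hcos x)).const_mul 2) fun t => ?_
    simp only [inner_add_right]
    nlinarith [mul_le_mul_of_nonneg_right (sq_cos_add_sub_cos_le ⟪t, x⟫ ⟪t, y⟫) (hρ0 t)]

end CosRepModulus

/-! ## Gaussian smoothing of convolution powers -/

section GaussianSmoothing

variable {E : Type*} [NormedAddCommGroup E] [InnerProductSpace ℝ E] [MeasurableSpace E]

/-- The density of `F ^ j` smoothed by a Gaussian of variance `j / N`. It is the `j`-th convolution
power of `F` smoothed by a Gaussian of variance `1 / N`. -/
def smoothedPow (F : Measure E) (N j : ℕ) : E → ℝ := avg (convPow F j) (gaussKernel ((j : ℝ) / N))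

/-- The value at zero of the density `smoothedPow F N N`, relative to that of the Gaussian; its
logarithm measures how much more `F ^ N` is spread out than the Gaussian. -/
def spectralMass [BorelSpace E] [FiniteDimensional ℝ E] (F : Measure E) (N : ℕ) : ℝ :=
  ∫ t, cosTransform F t ^ N * gaussKernel 1 t

/-- The probability density of frequencies whose cosine transform is `bump F N`. -/
def spectralDensity [BorelSpace E] [FiniteDimensional ℝ E] (F : Measure E) (N : ℕ) (t : E) : ℝ :=
  cosTransform F t ^ N * gaussKernel 1 t / spectralMass F N

/-- The density `smoothedPow F N N` normalized to be `1` at the origin: a smooth cutoff function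
adapted to the scale of `F ^ N`. -/
def bump (F : Measure E) (N : ℕ) (y : E) : ℝ := smoothedPow F N N y / smoothedPow F N N 0

/-- A uniform bound for the variation of `bump F N` under the translation by `x`. -/
def bumpModulus (F : Measure E) (N : ℕ) (x : E) : ℝ := √(2 * (1 - bump F N x))

variable {F : Measure E} {N i j : ℕ}

lemma smoothedPow_self (hN : 0 < N) : smoothedPow F N N = avg (convPow F N) (gaussKernel 1) := by
  rw [smoothedPow, div_self (by exact_mod_cast hN.ne')]

lemma bumpModulus_nonneg (x : E) : 0 ≤ bumpModulus F N x := Real.sqrt_nonneg _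

variable [FiniteDimensional ℝ E] [BorelSpace E] [IsProbabilityMeasure F]

section SmoothedPow

lemma bddInt_smoothedPow (hN : 0 < N) (hj : 0 < j) : BddInt (smoothedPow F N j) :=
  (bddInt_gaussKernel (by positivity)).avg

lemma smoothedPow_pos (hN : 0 < N) (hj : 0 < j) (y : E) : 0 < smoothedPow F N j y :=
  avg_pos (bddInt_gaussKernel (by positivity)).toBddMeas (gaussKernel_pos (by positivity)) y

lemma integral_smoothedPow (hN : 0 < N) (hj : 0 < j) : ∫ y, smoothedPow F N j y = 1 := by
  rw [smoothedPow, integral_avg (bddInt_gaussKernel (by positivity)),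
    integral_gaussKernel (by positivity)]

lemma l1Norm_smoothedPow (hN : 0 < N) (hj : 0 < j) : l1Norm (smoothedPow F N j) = 1 := by
  simp only [l1Norm, abs_of_pos (smoothedPow_pos hN hj _), integral_smoothedPow hN hj]

lemma integrable_cosTransform_pow_mul_gaussKernel (n : ℕ) :
    Integrable fun t => cosTransform F t ^ n * gaussKernel 1 t :=
  integrable_cosTransform_pow_mul (bddInt_gaussKernel one_pos).integrable n

lemma l1Norm_smoothedPow_self_sub_avg_le_two (hN : 0 < N) :
    l1Norm (fun y => smoothedPow F N N y - avg F (smoothedPow F N N) y) ≤ 2 := by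
  have hf := bddInt_smoothedPow (F := F) hN hN
  have hsub := l1Norm_sub_le hf (hf.avg (F := F))
  have havg := l1Norm_avg_le (F := F) hf
  rw [l1Norm_smoothedPow hN hN] at hsub havg
  linarith

variable [F.IsNegInvariant]

lemma even_smoothedPow : (smoothedPow F N j).Even := even_avg (even_gaussKernel _)

lemma corr_smoothedPow (hN : 0 < N) (hi : 0 < i) (hj : 0 < j) :
    corr (smoothedPow F N i) volume (smoothedPow F N j) = smoothedPow F N (i + j) := by
  have hgi : BddInt (gaussKernel ((i : ℝ) / N) : E → ℝ) := bddInt_gaussKernel (by positivity)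
  have hgj : BddInt (gaussKernel ((j : ℝ) / N) : E → ℝ) := bddInt_gaussKernel (by positivity)
  have hsum : (i : ℝ) / N + j / N = ((i + j : ℕ) : ℝ) / N := by push_cast; ring
  rw [smoothedPow, smoothedPow, ← avg_corr_comm hgi.avg.integrable hgj.toBddMeas,
    corr_volume_comm (even_avg (even_gaussKernel _)) (even_gaussKernel _),
    ← avg_corr_comm hgj.integrable hgi.toBddMeas,
    corr_gaussKernel (by positivity) (by positivity), hsum, ← avg_convPow_add, add_comm j,
    smoothedPow]
  exact (bddInt_gaussKernel (by positivity)).toBddMeas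

lemma avg_convPow_gaussKernel_one_zero (k : ℕ) : avg (convPow F k) (gaussKernel 1) (0 : E) =
    gaussConst E 1 * ∫ t, cosTransform F t ^ k * gaussKernel 1 t := by
  have hInt : Integrable fun t : E => gaussConst E 1 * gaussKernel (1 / 1) t :=
    (bddInt_gaussKernel (by positivity)).integrable.const_mul _
  rw [(cosRep_gaussKernel one_pos).avg_convPow hInt k 0, ← integral_const_mul]
  simp only [inner_zero_right, Real.cos_zero, one_mul, div_one]
  exact integral_congr_ae (.of_forall fun t => mul_left_comm _ _ _)

lemma smoothedPow_self_zero (hN : 0 < N) :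
    smoothedPow F N N 0 = gaussConst E 1 * spectralMass F N := by
  rw [smoothedPow_self hN, avg_convPow_gaussKernel_one_zero, spectralMass]

end SmoothedPow

section Spectral

lemma integrable_spectralDensity : Integrable (spectralDensity F N) :=
  (integrable_cosTransform_pow_mul_gaussKernel N).div_const _

lemma spectralMass_le_one (hF : ∀ t, 0 ≤ cosTransform F t) : spectralMass F N ≤ 1 := by
  refine (integral_mono (integrable_cosTransform_pow_mul_gaussKernel N)
    (bddInt_gaussKernel one_pos).integrable fun t => ?_).trans_eq (integral_gaussKernel one_pos)
  exact mul_le_of_le_one_left (gaussKernel_pos one_pos t).le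
    (pow_le_one₀ (hF t) ((le_abs_self _).trans (abs_cosTransform_le_one t)))

variable [F.IsNegInvariant]

lemma spectralMass_pos (hN : 0 < N) : 0 < spectralMass F N := by
  have hzero := smoothedPow_pos (F := F) hN hN 0
  rw [smoothedPow_self_zero hN] at hzero
  exact pos_of_mul_pos_right hzero (gaussConst_pos one_pos).le

lemma integral_spectralDensity (hN : 0 < N) : ∫ t, spectralDensity F N t = 1 := by
  simp only [spectralDensity, integral_div]
  exact div_self (spectralMass_pos hN).ne'

lemma cosRep_bump (hN : 0 < N) : CosRep (spectralDensity F N) (bump F N) := by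
  intro y
  have hInt : Integrable fun t : E => gaussConst E 1 * gaussKernel (1 / 1) t :=
    (bddInt_gaussKernel (by positivity)).integrable.const_mul _
  have hconst := gaussConst_pos (E := E) one_pos
  have hmass := spectralMass_pos (F := F) hN
  rw [bump, smoothedPow_self_zero hN, smoothedPow_self hN,
    (cosRep_gaussKernel one_pos).avg_convPow hInt N y, ← integral_div]
  refine integral_congr_ae (.of_forall fun t => ?_)
  simp only [spectralDensity, div_one]
  field_simp

variable (hF : ∀ t, 0 ≤ cosTransform F t)
include hF

lemma log_one_div_spectralMass_nonneg (hN : 0 < N) : 0 ≤ Real.log (1 / spectralMass F N) :=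
  Real.log_nonneg ((one_le_div (spectralMass_pos hN)).2 (spectralMass_le_one hF))

lemma spectralDensity_nonneg (hN : 0 < N) (t : E) : 0 ≤ spectralDensity F N t :=
  div_nonneg (mul_nonneg (pow_nonneg (hF t) _) (gaussKernel_pos one_pos t).le)
    (spectralMass_pos hN).le

lemma spectralMass_mul_one_sub_le (hN : 0 < N) (j : ℕ) :
    spectralMass F N * (1 - (j : ℝ) / N * Real.log (1 / spectralMass F N)) ≤
      ∫ t, cosTransform F t ^ (N + j) * gaussKernel 1 t :=
  integral_pow_mul_mul_one_sub_le (fun t => (gaussKernel_pos one_pos t).le)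
    (bddInt_gaussKernel one_pos).integrable (integral_gaussKernel one_pos) hF
    integrable_cosTransform_pow_mul_gaussKernel hN (spectralMass_pos hN) j

end Spectral

section Bump

lemma one_sub_mul_le_rpow_neg {κ a : ℝ} (hκ : 0 ≤ κ) (ha : 0 ≤ a) :
    1 - a * κ ≤ (1 + κ) ^ (-a) := by
  rw [Real.rpow_def_of_pos (by positivity)]
  have hexp := Real.add_one_le_exp (Real.log (1 + κ) * -a)
  have hlog := Real.log_le_sub_one_of_pos (show 0 < 1 + κ by positivity)
  nlinarith

lemma bump_pos (hN : 0 < N) (y : E) : 0 < bump F N y :=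
  div_pos (smoothedPow_pos hN hN y) (smoothedPow_pos hN hN 0)

lemma bump_zero (hN : 0 < N) : bump F N 0 = 1 := div_self (smoothedPow_pos hN hN 0).ne'

lemma bddInt_bump (hN : 0 < N) : BddInt (bump F N) := by
  have hbump : bump F N = fun y => (smoothedPow F N N 0)⁻¹ * smoothedPow F N N y :=
    funext fun y => div_eq_inv_mul _ _
  rw [hbump]
  exact (bddInt_smoothedPow hN hN).const_mul _

lemma integral_bump (hN : 0 < N) : ∫ y, bump F N y = 1 / smoothedPow F N N 0 := by
  simp only [bump, integral_div, integral_smoothedPow hN hN]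

lemma bddMeas_bumpModulus (hN : 0 < N) : BddMeas (bumpModulus F N) := by
  refine ⟨?_, √2, fun x => ?_⟩
  · have := (bddInt_bump (F := F) hN).measurable
    unfold bumpModulus
    fun_prop
  · rw [abs_of_nonneg (bumpModulus_nonneg x)]
    exact Real.sqrt_le_sqrt (by linarith [bump_pos (F := F) hN x])

variable [F.IsNegInvariant]

lemma even_bump : (bump F N).Even := fun y => by
  simp only [bump, even_smoothedPow y]

lemma integral_bump_measure (hN : 0 < N) : ∫ x, bump F N x ∂F =
    (∫ t, cosTransform F t ^ (N + 1) * gaussKernel 1 t) / spectralMass F N := by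
  have hconst := gaussConst_pos (E := E) one_pos
  have hpow : ∫ x, smoothedPow F N N x ∂F = avg (convPow F (N + 1)) (gaussKernel 1) 0 := by
    rw [avg_convPow_succ (bddInt_gaussKernel one_pos).toBddMeas, ← smoothedPow_self hN]
    simp only [avg, zero_add]
  simp only [bump, integral_div]
  rw [smoothedPow_self_zero hN, hpow, avg_convPow_gaussKernel_one_zero]
  field_simp

lemma integral_one_sub_bump_mul_smoothedPow (hN : 0 < N) (hj : 0 < j) :
    ∫ y, (1 - bump F N y) * smoothedPow F N j y =
      1 - smoothedPow F N (N + j) 0 / smoothedPow F N N 0 := by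
  have hf := bddInt_smoothedPow (F := F) hN hj
  simp only [sub_mul, one_mul]
  rw [integral_sub hf.integrable ((bddInt_bump hN).toBddMeas.mul_bddInt hf).integrable,
    integral_smoothedPow hN hj, ← corr_smoothedPow hN hN hj]
  simp only [corr, bump, zero_add, div_mul_eq_mul_div, integral_div]

variable (hF : ∀ t, 0 ≤ cosTransform F t)
include hF

lemma bump_le_one (hN : 0 < N) (y : E) : bump F N y ≤ 1 := by
  rw [← bump_zero (F := F) hN]
  exact (le_abs_self _).trans ((cosRep_bump hN).abs_le integrable_spectralDensity
    (spectralDensity_nonneg hF hN) y)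

lemma sq_bumpModulus (hN : 0 < N) (x : E) : bumpModulus F N x ^ 2 = 2 * (1 - bump F N x) :=
  Real.sq_sqrt (by linarith [bump_le_one hF hN x])

lemma abs_bump_translate_sub_le (hN : 0 < N) (x y : E) :
    |bump F N (y + x) - bump F N y| ≤ bumpModulus F N x :=
  Real.abs_le_sqrt ((cosRep_bump hN).sq_translate_sub_le (spectralDensity_nonneg hF hN)
    integrable_spectralDensity (integral_spectralDensity hN) x y)

lemma integral_sq_bumpModulus_le (hN : 0 < N) :
    ∫ x, bumpModulus F N x ^ 2 ∂F ≤ 2 * Real.log (1 / spectralMass F N) / N := by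
  have hmean : 1 - 1 / (N : ℝ) * Real.log (1 / spectralMass F N) ≤ ∫ x, bump F N x ∂F := by
    rw [integral_bump_measure hN, le_div_iff₀ (spectralMass_pos hN), mul_comm]
    simpa using spectralMass_mul_one_sub_le hF hN 1
  simp only [sq_bumpModulus hF hN]
  rw [integral_const_mul, integral_sub (integrable_const _) (bddInt_bump hN).toBddMeas.integrable,
    integral_const, probReal_univ, one_smul, mul_div_assoc, div_eq_inv_mul, ← one_div]
  linarith

lemma rpow_mul_le_smoothedPow_add_zero (hN : 0 < N) (hj : 0 < j) :
    (1 + (j : ℝ) / N) ^ (-((Module.finrank ℝ E : ℝ) / 2)) *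
      (1 - (j : ℝ) / N * Real.log (1 / spectralMass F N)) * smoothedPow F N N 0 ≤
      smoothedPow F N (N + j) 0 := by
  have hvar : ((N + j : ℕ) : ℝ) / N = 1 + (j : ℝ) / N := by
    have : (N : ℝ) ≠ 0 := by exact_mod_cast hN.ne'
    push_cast
    field_simp
  set c : ℝ := (1 + (j : ℝ) / N) ^ (-((Module.finrank ℝ E : ℝ) / 2))
  have hc : 0 ≤ c := by positivity
  calc c * (1 - (j : ℝ) / N * Real.log (1 / spectralMass F N)) * smoothedPow F N N 0
      = c * (gaussConst E 1 * (spectralMass F N *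
          (1 - (j : ℝ) / N * Real.log (1 / spectralMass F N)))) := by
        rw [smoothedPow_self_zero hN]
        ring
    _ ≤ c * (gaussConst E 1 * ∫ t, cosTransform F t ^ (N + j) * gaussKernel 1 t) :=
        mul_le_mul_of_nonneg_left (mul_le_mul_of_nonneg_left
          (spectralMass_mul_one_sub_le hF hN j) (gaussConst_pos one_pos).le) hc
    _ = avg (convPow F (N + j)) (fun y => c * gaussKernel 1 y) 0 := by
        rw [← avg_convPow_gaussKernel_one_zero, avg_const_mul]
    _ ≤ smoothedPow F N (N + j) 0 := by
        rw [smoothedPow, hvar]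
        exact avg_mono ((bddInt_gaussKernel one_pos).const_mul c).toBddMeas
          (bddInt_gaussKernel (by positivity)).toBddMeas
          (rpow_mul_gaussKernel_one_le (by positivity)) 0

lemma integral_one_sub_bump_mul_smoothedPow_le (hN : 0 < N) (hj : 0 < j) :
    ∫ y, (1 - bump F N y) * smoothedPow F N j y ≤
      (j : ℝ) / N * (Module.finrank ℝ E / 2 + Real.log (1 / spectralMass F N)) := by
  have hlog := log_one_div_spectralMass_nonneg hF hN
  have hzero := smoothedPow_pos (F := F) hN hN 0
  have hratio := (le_div_iff₀ hzero).2 (rpow_mul_le_smoothedPow_add_zero hF hN hj)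
  have hratio0 : 0 ≤ smoothedPow F N (N + j) 0 / smoothedPow F N N 0 :=
    (div_pos (smoothedPow_pos hN (by omega) 0) hzero).le
  rw [integral_one_sub_bump_mul_smoothedPow hN hj]
  set L := Real.log (1 / spectralMass F N)
  set a : ℝ := Module.finrank ℝ E / 2
  set κ : ℝ := (j : ℝ) / N
  have hκ : 0 ≤ κ := by positivity
  have ha : 0 ≤ a := by positivity
  have hprod := mul_nonneg ha hκ
  rcases le_total (κ * L) 1 with hsmall | hlarge
  · nlinarith [mul_le_mul_of_nonneg_right (one_sub_mul_le_rpow_neg hκ ha) (sub_nonneg.2 hsmall),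
      mul_nonneg hprod (mul_nonneg hκ hlog)]
  · nlinarith

end Bump

end GaussianSmoothing

/-! ## Exponential tilting -/

section Tilting

lemma BddMeas.exp {α : Type*} [MeasurableSpace α] {v : α → ℝ} (hv : BddMeas v) :
    BddMeas fun x => Real.exp (v x) := by
  obtain ⟨M, hM⟩ := hv.bounded
  refine ⟨hv.measurable.exp, Real.exp M, fun x => ?_⟩
  rw [Real.abs_exp]
  exact Real.exp_le_exp.2 ((le_abs_self _).trans (hM x))

lemma integral_exp_le_exp_of_integral_eq_zero {α : Type*} [MeasurableSpace α] {μ : Measure α}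
    [IsProbabilityMeasure μ] {v : α → ℝ} {R : ℝ} (hv : BddMeas v) (hv1 : ∀ x, |v x| ≤ 1)
    (hv0 : ∫ x, v x ∂μ = 0) (hR : ∫ x, v x ^ 2 ∂μ ≤ R) : ∫ x, Real.exp (v x) ∂μ ≤ Real.exp R := by
  have hsq : Integrable (fun x => v x ^ 2) μ := by
    simpa only [pow_two] using (hv.mul hv).integrable
  have hlin : Integrable (fun x => 1 + v x) μ := ((BddMeas.const 1).add hv).integrable
  calc ∫ x, Real.exp (v x) ∂μ ≤ ∫ x, (1 + v x) + v x ^ 2 ∂μ :=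
        integral_mono hv.exp.integrable (hlin.add hsq) fun x => by
          have := (abs_le.1 (Real.abs_exp_sub_one_sub_id_le (hv1 x))).2
          linarith
    _ = 1 + ∫ x, v x ^ 2 ∂μ := by
        rw [integral_add hlin hsq, integral_add (integrable_const _) hv.integrable, hv0]
        simp
    _ ≤ Real.exp R := by linarith [Real.add_one_le_exp R]

variable {E : Type*} [AddCommGroup E] [MeasurableSpace E] [MeasurableAdd₂ E] {F : Measure E}
  [IsProbabilityMeasure F] {k v : E → ℝ}

lemma BddMeas.iterate_corr {w : E → ℝ} (hw : Integrable w F) (hk : BddMeas k) (i : ℕ) :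
    BddMeas ((_root_.corr w F)^[i] k) :=
  Function.Iterate.rec (fun g => BddMeas g) hk (fun _ hg => BddMeas.corr hw hg) i

lemma iterate_corr_exp_le {C R : ℝ} (hk : BddMeas k) (hk0 : ∀ y, 0 < k y) (hkC : ∀ y, k y ≤ C)
    (hv : BddMeas v) (hv1 : ∀ x, |v x| ≤ 1) (hv0 : ∫ x, v x ∂F = 0) (hR : ∫ x, v x ^ 2 ∂F ≤ R)
    (i : ℕ) (y : E) : (corr (fun x => Real.exp (v x)) F)^[i] k y ≤ Real.exp (i * R) * C := by
  have hC : 0 < C := (hk0 0).trans_le (hkC 0)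
  refine (le_abs_self _).trans ?_
  induction i generalizing y with
  | zero => simpa [abs_of_pos (hk0 y)] using hkC y
  | succ i ih =>
    rw [Function.iterate_succ_apply']
    refine (corr_abs_le hv.exp.integrable (hk.iterate_corr hv.exp.integrable i) ih y).trans ?_
    simp only [Real.abs_exp]
    calc (∫ x, Real.exp (v x) ∂F) * (Real.exp (i * R) * C)
        ≤ Real.exp R * (Real.exp (i * R) * C) := mul_le_mul_of_nonneg_right
          (integral_exp_le_exp_of_integral_eq_zero hv hv1 hv0 hR) (by positivity)
      _ = Real.exp ((i + 1 : ℕ) * R) * C := by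
          rw [← mul_assoc, ← Real.exp_add]
          push_cast
          ring_nf

lemma exp_mul_le_corr_exp {a b H : E → ℝ} (ha : BddMeas a) (hb : BddMeas b) (hH : BddMeas H)
    (hv : BddMeas v) (h : ∀ y c, Real.exp c * ((1 - c) * a y + b y) ≤ H y) (y : E) (c : ℝ) :
    Real.exp c * ((1 - c) * avg F a y + (corr v F a y + avg F b y)) ≤
      corr (fun x => Real.exp (v x)) F H y := by
  have hpointwise (x : E) : Real.exp c * ((1 - c) * a (y + x) + (v x * a (y + x) + b (y + x))) ≤
      Real.exp (v x) * H (y + x) := by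
    have hx := mul_le_mul_of_nonneg_left (h (y + x) (c - v x)) (Real.exp_pos (v x)).le
    rw [← mul_assoc, ← Real.exp_add, add_sub_cancel] at hx
    exact le_trans (le_of_eq (by ring)) hx
  have hai := (integrable_translate (F := F) ha y).const_mul (1 - c)
  have hvi := integrable_corr (hv.integrable (μ := F)) ha y
  have hbi := integrable_translate (F := F) hb y
  have hvbi : Integrable (fun x => v x * a (y + x) + b (y + x)) F := hvi.add hbi
  simp only [avg, corr]
  rw [← integral_add hvi hbi, ← integral_const_mul, ← integral_add hai hvbi, ← integral_const_mul]
  exact integral_mono ((hai.add hvbi).const_mul _)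
    (integrable_corr hv.exp.integrable hH y) hpointwise

-- The bracket is the first-order term in `v` of the tilted iterate on the right-hand side.
lemma exp_mul_le_iterate_corr_exp (hk : BddMeas k) (hk0 : ∀ y, 0 < k y) (hv : BddMeas v) (i : ℕ)
    (y : E) (c : ℝ) :
    Real.exp c * ((1 - c) * avg (convPow F (i + 1)) k y +
        (i + 1) * corr v F (avg (convPow F i) k) y) ≤
      (corr (fun x => Real.exp (v x)) F)^[i + 1] k y := by
  induction i generalizing y c with
  | zero =>
    have hzero (y : E) (c : ℝ) : Real.exp c * ((1 - c) * k y + 0) ≤ k y := by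
      have hexp := mul_le_mul_of_nonneg_left (Real.one_sub_le_exp_neg c) (Real.exp_pos c).le
      rw [← Real.exp_add, add_neg_cancel, Real.exp_zero] at hexp
      rw [add_zero, ← mul_assoc]
      exact mul_le_of_le_one_left (hk0 y).le hexp
    have hstep := exp_mul_le_corr_exp (F := F) hk (BddMeas.const 0) hk hv hzero y c
    rw [avg_convPow_succ hk, avg_convPow_zero F hk]
    simpa [avg] using hstep
  | succ i ih =>
    have hcorr : BddMeas (corr v F (avg (convPow F i) k)) := hk.avg.corr hv.integrable
    have hstep := exp_mul_le_corr_exp (F := F) hk.avg (hcorr.const_mul (i + 1))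
      (hk.iterate_corr hv.exp.integrable (i + 1)) hv ih y c
    rw [avg_const_mul, avg_corr_comm hv.integrable hk.avg, ← avg_convPow_succ hk,
      ← avg_convPow_succ hk, ← Function.iterate_succ_apply' (corr _ F)] at hstep
    refine le_trans (le_of_eq ?_) hstep
    push_cast
    ring

lemma mul_corr_avg_convPow_le {C R : ℝ} (hk : BddMeas k) (hk0 : ∀ y, 0 < k y)
    (hkC : ∀ y, k y ≤ C) (hv : BddMeas v) (hv1 : ∀ x, |v x| ≤ 1) (hv0 : ∫ x, v x ∂F = 0)
    (hR : ∫ x, v x ^ 2 ∂F ≤ R) (j : ℕ) (y : E) :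
    (j + 1) * corr v F (avg (convPow F j) k) y ≤ avg (convPow F (j + 1)) k y *
      (Real.log (C / avg (convPow F (j + 1)) k y) + (j + 1) * R) := by
  have hC : 0 < C := (hk0 0).trans_le (hkC 0)
  set a := avg (convPow F (j + 1)) k y with ha
  set b := (j + 1) * corr v F (avg (convPow F j) k) y with hb
  have ha0 : 0 < a := avg_pos hk hk0 y
  have htilt : Real.exp (b / a) * a ≤ Real.exp ((j + 1 : ℕ) * R) * C := by
    refine le_trans (le_of_eq ?_) ((exp_mul_le_iterate_corr_exp hk hk0 hv j y (b / a)).trans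
      (iterate_corr_exp_le hk hk0 hkC hv hv1 hv0 hR (j + 1) y))
    rw [← ha, ← hb]
    field_simp
    ring
  have hlog : b / a ≤ Real.log (C / a) + (j + 1) * R := by
    rw [← Real.exp_le_exp, Real.exp_add, Real.exp_log (by positivity), div_mul_eq_mul_div,
      le_div_iff₀ ha0]
    push_cast at htilt
    linarith
  rwa [div_le_iff₀' ha0] at hlog

end Tilting

section Fluctuation

variable {E : Type*} [AddCommGroup E] [MeasurableSpace E]

/-- The deviation of the translate `g (· + x)` from the mean `avg F g` of the translates of `g`. -/
def fluctuation (F : Measure E) (x : E) (g : E → ℝ) : E → ℝ := fun y => g (y + x) - avg F g y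

variable [MeasurableAdd₂ E] {F : Measure E} {g k u : E → ℝ}

lemma BddMeas.fluctuation_left (hg : BddMeas g) (y : E) : BddMeas fun x => fluctuation F x g y :=
  (hg.comp (measurable_const_add y)).sub (BddMeas.const _)

variable [IsProbabilityMeasure F]

lemma measurable_fluctuation (hg : BddMeas g) :
    Measurable fun p : E × E => fluctuation F p.1 g p.2 :=
  (hg.measurable.comp (measurable_snd.add measurable_fst)).sub
    ((hg.avg (F := F)).measurable.comp measurable_snd)

lemma integral_mul_fluctuation (hu : BddMeas u) (hg : BddMeas g) (y : E) :
    ∫ x, u x * fluctuation F x g y ∂F = corr (fun x => u x - ∫ x, u x ∂F) F g y := by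
  simp only [fluctuation, mul_sub]
  rw [corr_sub_left hu.integrable (integrable_const _) hg,
    integral_sub (integrable_corr hu.integrable hg y) (hu.integrable.mul_const _),
    integral_mul_const]
  simp only [corr, avg, integral_const_mul]

lemma mul_integral_mul_fluctuation_le {C : ℝ} (hk : BddMeas k) (hk0 : ∀ y, 0 < k y)
    (hkC : ∀ y, k y ≤ C) (hu : BddMeas u) (hu1 : ∀ x, |u x| ≤ 1 / 2) (j : ℕ) (y : E) :
    (j + 1) * ∫ x, u x * fluctuation F x (avg (convPow F j) k) y ∂F ≤
      avg (convPow F (j + 1)) k y *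
        (Real.log (C / avg (convPow F (j + 1)) k y) + (j + 1) * ∫ x, u x ^ 2 ∂F) := by
  have hmean : |∫ x, u x ∂F| ≤ 1 / 2 := by
    simpa using norm_integral_le_of_norm_le_const (μ := F) (f := u) (.of_forall hu1)
  have hvar : ∫ x, (u x - ∫ x, u x ∂F) ^ 2 ∂F ≤ ∫ x, u x ^ 2 ∂F := by
    rw [← ProbabilityTheory.variance_eq_integral hu.measurable.aemeasurable]
    exact ProbabilityTheory.variance_le_expectation_sq hu.measurable.aestronglyMeasurable
  rw [integral_mul_fluctuation hu hk.avg]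
  refine mul_corr_avg_convPow_le hk hk0 hkC (hu.sub (BddMeas.const _)) (fun x => ?_) ?_ hvar j y
  · exact (abs_sub _ _).trans (by linarith [hu1 x])
  · simp [integral_sub hu.integrable (integrable_const _)]

lemma mul_log_div_le {a A C : ℝ} (ha : 0 < a) (hA : 0 < A) (hC : 0 < C) :
    a * Real.log (C / a) ≤ a * Real.log (C / A) + A := by
  have hsplit : Real.log (C / a) = Real.log (C / A) + Real.log (A / a) := by
    rw [← Real.log_mul (by positivity) (by positivity), div_mul_div_cancel₀ hA.ne']
  have hlog := mul_le_mul_of_nonneg_left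
    (Real.log_le_sub_one_of_pos (show 0 < A / a by positivity)) ha.le
  rw [mul_sub, mul_div_cancel₀ _ ha.ne'] at hlog
  rw [hsplit, mul_add]
  linarith

lemma mul_integral_mul_abs_fluctuation_le {w : E → ℝ} {A C : ℝ} (hk : BddMeas k)
    (hk0 : ∀ y, 0 < k y) (hkC : ∀ y, k y ≤ C) (hA : 0 < A) (hw : BddMeas w)
    (hw2 : ∀ x, |w x| ≤ 2) (j : ℕ) (y : E) :
    (j + 1) / 4 * ∫ x, w x * |fluctuation F x (avg (convPow F j) k) y| ∂F ≤
      avg (convPow F (j + 1)) k y * (Real.log (C / A) + (j + 1) / 16 * ∫ x, w x ^ 2 ∂F) + A := by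
  set τ := fun x => fluctuation F x (avg (convPow F j) k) y
  have hτ : Measurable τ := (hk.avg.fluctuation_left y).measurable
  -- `τ / |τ|` is the sign of `τ`, with the value `0 / 0 = 0` where `τ` vanishes
  set u := fun x => w x / 4 * (τ x / |τ x|)
  have hsign (x : E) : |τ x / (|τ x|)| ≤ 1 := by
    rw [abs_div, abs_abs]
    exact div_self_le_one _
  have huw (x : E) : |u x| ≤ |w x| / 4 := by
    simpa [u, abs_mul, abs_div] using mul_le_of_le_one_right (abs_nonneg (w x / 4)) (hsign x)
  have hu : BddMeas u :=
    ⟨by have := hw.measurable; fun_prop, 2 / 4, fun x => (huw x).trans (by linarith [hw2 x])⟩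
  have huτ (x : E) : u x * τ x = 1 / 4 * (w x * |τ x|) := by
    have hself : τ x / |τ x| * τ x = |τ x| := by
      rw [div_mul_eq_mul_div, ← abs_mul_abs_self, mul_self_div_self]
    rw [mul_assoc, hself]
    ring
  have husq : ∫ x, u x ^ 2 ∂F ≤ 1 / 16 * ∫ x, w x ^ 2 ∂F := by
    rw [← integral_const_mul]
    simp only [pow_two]
    refine integral_mono (hu.mul hu).integrable ((hw.mul hw).const_mul _).integrable fun x => ?_
    have := pow_le_pow_left₀ (abs_nonneg _) (huw x) 2
    rw [sq_abs, div_pow, sq_abs] at this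
    linarith
  have hk1 : 0 < avg (convPow F (j + 1)) k y := avg_pos hk hk0 y
  have hmain := mul_integral_mul_fluctuation_le (F := F) hk hk0 hkC hu
    (fun x => (huw x).trans (by linarith [hw2 x])) j y
  have hlog := mul_log_div_le hk1 hA ((hk0 0).trans_le (hkC 0))
  have hcoef : (0 : ℝ) ≤ (j + 1) * avg (convPow F (j + 1)) k y := by positivity
  change (j + 1) * (∫ x, u x * τ x ∂F) ≤ _ at hmain
  simp only [huτ, integral_const_mul] at hmain
  linarith [mul_le_mul_of_nonneg_left husq hcoef]

end Fluctuation

section LocalVariation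

variable {E : Type*} [AddCommGroup E] [MeasureSpace E]

/-- The `L¹` norm of the fluctuation of `f`, localized by the cutoff function `χ`. -/
def localVariation (F : Measure E) (χ f : E → ℝ) (x : E) : ℝ := ∫ y, χ y * |fluctuation F x f y|

lemma localVariation_nonneg {F : Measure E} {χ : E → ℝ} (hχ0 : ∀ y, 0 ≤ χ y) (f : E → ℝ) (x : E) :
    0 ≤ localVariation F χ f x :=
  integral_nonneg fun y => mul_nonneg (hχ0 y) (abs_nonneg _)

variable [MeasurableAdd₂ E] [SFinite (volume : Measure E)]

variable {F : Measure E} [IsProbabilityMeasure F] {χ f k : E → ℝ}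

lemma measurable_localVariation (hχ : BddMeas χ) (hf : BddMeas f) :
    Measurable (localVariation F χ f) := by
  have hmeas : StronglyMeasurable fun p : E × E => χ p.2 * |fluctuation F p.1 f p.2| :=
    ((hχ.measurable.comp measurable_snd).mul (measurable_fluctuation hf).abs).stronglyMeasurable
  exact hmeas.integral_prod_right.measurable

variable [(volume : Measure E).IsAddLeftInvariant]

lemma BddInt.fluctuation (hf : BddInt f) (x : E) : BddInt (fluctuation F x f) :=
  (hf.translate x).sub hf.avg

lemma l1Norm_fluctuation_le (hf : BddInt f) (x : E) :
    l1Norm (fluctuation F x f) ≤ 2 * l1Norm f := by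
  refine (l1Norm_sub_le (hf.translate x) (hf.avg (F := F))).trans ?_
  rw [l1Norm_translate, two_mul]
  exact add_le_add_right (l1Norm_avg_le hf) _

lemma localVariation_le_l1Norm (hχ : BddMeas χ) (hχ1 : ∀ y, χ y ≤ 1) (hf : BddInt f) (x : E) :
    localVariation F χ f x ≤ l1Norm (fluctuation F x f) :=
  integral_mono (hχ.mul_bddInt (hf.fluctuation x).abs).integrable (hf.fluctuation x).abs.integrable
    fun _ => mul_le_of_le_one_left (abs_nonneg _) (hχ1 _)

lemma integrable_fluctuation_prod (hf : BddInt f) :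
    Integrable (fun p : E × E => fluctuation F p.1 f p.2) (F.prod volume) := by
  have htranslate := integrable_corr_prod (integrable_const (μ := F) (1 : ℝ)) hf
  have havg := (integrable_const (1 : ℝ) (μ := F)).mul_prod (hf.avg (F := F)).integrable
  simp only [one_mul] at htranslate havg
  exact htranslate.sub havg

lemma integrable_mul_fluctuation_prod {w : E → ℝ} (hw : BddMeas w) (hχ : BddMeas χ)
    (hf : BddInt f) :
    Integrable (fun p : E × E => χ p.2 * (w p.1 * |fluctuation F p.1 f p.2|))
      (F.prod volume) := by
  have hweight : BddMeas fun p : E × E => χ p.2 * w p.1 :=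
    (hχ.comp measurable_snd).mul (hw.comp measurable_fst)
  obtain ⟨M, hM⟩ := hweight.bounded
  simpa only [mul_assoc] using (integrable_fluctuation_prod hf).abs.bdd_mul
    hweight.measurable.aestronglyMeasurable (.of_forall hM)

lemma integral_mul_localVariation {w : E → ℝ} (hw : BddMeas w) (hχ : BddMeas χ) (hf : BddInt f) :
    ∫ x, w x * localVariation F χ f x ∂F =
      ∫ y, χ y * ∫ x, w x * |fluctuation F x f y| ∂F := by
  simp only [localVariation, ← integral_const_mul, mul_left_comm (w _)]
  exact integral_integral_swap (integrable_mul_fluctuation_prod hw hχ hf)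

lemma bddMeas_localVariation (hχ : BddMeas χ) (hχ0 : ∀ y, 0 ≤ χ y) (hχ1 : ∀ y, χ y ≤ 1)
    (hf : BddInt f) : BddMeas (localVariation F χ f) :=
  ⟨measurable_localVariation hχ hf.toBddMeas, 2 * l1Norm f, fun x => by
    rw [abs_of_nonneg (localVariation_nonneg hχ0 f x)]
    exact (localVariation_le_l1Norm hχ hχ1 hf x).trans (l1Norm_fluctuation_le hf x)⟩

lemma integral_sq_localVariation_le {A C : ℝ} (hk : BddInt k) (hk0 : ∀ y, 0 < k y)
    (hkC : ∀ y, k y ≤ C) (hk1 : ∫ y, k y = 1) (hχ : BddInt χ) (hχ0 : ∀ y, 0 ≤ χ y)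
    (hχ1 : ∀ y, χ y ≤ 1) (hA : 0 < A) (hAC : A ≤ C) (hχA : ∫ y, χ y = 1 / A) (j : ℕ) :
    ∫ x, localVariation F χ (avg (convPow F j) k) x ^ 2 ∂F ≤
      6 * (Real.log (C / A) + 1) / (j + 1) := by
  set f := avg (convPow F j) k with hf
  set w := localVariation F χ f with hw
  set r := ∫ x, w x ^ 2 ∂F with hr
  have hf1 : l1Norm f = 1 := by
    simp only [l1Norm, hf, abs_of_pos (avg_pos hk.toBddMeas hk0 _), integral_avg hk, hk1]
  have hwb : BddMeas w := bddMeas_localVariation hχ.toBddMeas hχ0 hχ1 hk.avg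
  have hw2 (x : E) : |w x| ≤ 2 := by
    rw [abs_of_nonneg (localVariation_nonneg hχ0 f x)]
    have hle := l1Norm_fluctuation_le (F := F) (hk.avg (F := convPow F j)) x
    rw [← hf, hf1, mul_one] at hle
    exact (localVariation_le_l1Norm hχ.toBddMeas hχ1 hk.avg x).trans hle
  have hfubini : ∫ y, χ y * ∫ x, w x * |fluctuation F x f y| ∂F = r := by
    rw [← integral_mul_localVariation hwb hχ.toBddMeas hk.avg]
    simp only [hr, pow_two, hw, hf]
  have hInt : Integrable fun y => χ y * ∫ x, w x * |fluctuation F x f y| ∂F := by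
    simpa only [integral_const_mul] using
      (integrable_mul_fluctuation_prod (F := F) hwb hχ.toBddMeas hk.avg).integral_prod_right
  have hr0 : 0 ≤ r := integral_nonneg fun x => sq_nonneg _
  have hcoef : 0 ≤ Real.log (C / A) + (j + 1) / 16 * r :=
    add_nonneg (Real.log_nonneg ((one_le_div hA).2 hAC)) (mul_nonneg (by positivity) hr0)
  set g := avg (convPow F (j + 1)) k with hg
  have hgint : BddInt g := hk.avg
  have hpointwise (y : E) : (j + 1) / 4 * (χ y * ∫ x, w x * |fluctuation F x f y| ∂F) ≤
      (Real.log (C / A) + (j + 1) / 16 * r) * g y + A * χ y := by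
    have hy := mul_le_mul_of_nonneg_left
      (mul_integral_mul_abs_fluctuation_le (F := F) hk.toBddMeas hk0 hkC hA hwb hw2 j y) (hχ0 y)
    have hcut := mul_le_of_le_one_left
      (mul_nonneg (avg_pos (F := convPow F (j + 1)) hk.toBddMeas hk0 y).le hcoef) (hχ1 y)
    simp only [hg, hf] at hy ⊢
    linarith
  have hmean := integral_mono (hInt.const_mul ((j + 1) / 4))
    ((hgint.integrable.const_mul _).add (hχ.integrable.const_mul A)) hpointwise
  simp only [Pi.add_apply] at hmean
  rw [integral_const_mul, hfubini, integral_add (hgint.integrable.const_mul _)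
    (hχ.integrable.const_mul A), integral_const_mul, integral_const_mul, hχA, integral_avg hk, hk1,
    mul_one_div_cancel hA.ne'] at hmean
  rw [le_div_iff₀ (by positivity)]
  nlinarith

end LocalVariation

/-! ## Doubling the square variation -/

/-- A cutoff function: `χ` is even, takes values in `[0, 1]`, and the bounded function `e` is a
modulus of continuity for it under translation. -/
structure IsCutoff {E : Type*} [AddCommGroup E] [MeasurableSpace E] (χ e : E → ℝ) : Prop where
  bddMeas : BddMeas χ
  even : χ.Even
  nonneg : ∀ y, 0 ≤ χ y
  le_one : ∀ y, χ y ≤ 1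
  bddMeas_modulus : BddMeas e
  abs_translate_sub_le : ∀ x y, |χ (y + x) - χ y| ≤ e x

section Cutoff

variable {E : Type*} [AddCommGroup E] {χ e f g : E → ℝ}

lemma IsCutoff.modulus_nonneg [MeasurableSpace E] (h : IsCutoff χ e) (x : E) : 0 ≤ e x :=
  (abs_nonneg _).trans (h.abs_translate_sub_le x 0)

variable [MeasureSpace E]

lemma IsCutoff.mul (h : IsCutoff χ e) (hg : BddInt g) : BddInt fun y => χ y * g y :=
  h.bddMeas.mul_bddInt hg

lemma IsCutoff.one_sub_mul (h : IsCutoff χ e) (hg : BddInt g) : BddInt fun y => (1 - χ y) * g y :=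
  ((BddMeas.const 1).sub h.bddMeas).mul_bddInt hg

variable [MeasurableAdd₂ E]

lemma IsCutoff.corr_self [MeasurableNeg E] [(volume : Measure E).IsAddLeftInvariant]
    [(volume : Measure E).IsNegInvariant]
    (h : IsCutoff χ e) (hf : BddInt f) (hfe : f.Even) :
    corr f volume f = fun y => corr f volume (fun z => χ z * f z) y +
      corr (fun z => (1 - χ z) * f z) volume f y := by
  have heven : (fun z => (1 - χ z) * f z).Even := fun y => by simp only [h.even y, hfe y]
  rw [corr_volume_comm heven hfe,
    ← corr_add hf.integrable (h.mul hf).toBddMeas (h.one_sub_mul hf).toBddMeas]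
  congr 1
  ext y
  ring

variable {F : Measure E} [IsProbabilityMeasure F]

lemma abs_avg_mul_sub_mul_avg_le (h : IsCutoff χ e) (hg : BddInt g) (y : E) :
    |avg F (fun z => χ z * g z) y - χ y * avg F g y| ≤ corr e F (fun z => |g z|) y := by
  have hdiff : avg F (fun z => χ z * g z) y - χ y * avg F g y =
      ∫ x, (χ (y + x) - χ y) * g (y + x) ∂F := by
    simp only [avg, sub_mul]
    rw [integral_sub (integrable_translate (h.mul hg).toBddMeas y)
      ((integrable_translate hg.toBddMeas y).const_mul _), integral_const_mul]
  rw [hdiff]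
  refine abs_integral_le_integral_abs.trans
    (integral_mono_of_nonneg (.of_forall fun x => abs_nonneg _)
      (integrable_corr h.bddMeas_modulus.integrable hg.abs.toBddMeas y) (.of_forall fun x => ?_))
  simp only [abs_mul]
  exact mul_le_mul_of_nonneg_right (h.abs_translate_sub_le x y) (abs_nonneg _)

lemma fluctuation_add (hf : BddMeas f) (hg : BddMeas g) (x : E) :
    fluctuation F x (fun y => f y + g y) =
      fun y => fluctuation F x f y + fluctuation F x g y := by
  ext y
  simp only [fluctuation, avg_add hf hg]
  ring

variable [SFinite (volume : Measure E)]

lemma corr_fluctuation (hf : Integrable f) (hg : BddMeas g) (x : E) :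
    corr f volume (fluctuation F x g) = fluctuation F x (corr f volume g) := by
  change corr f volume (fun y => g (y + x) - avg F g y) = _
  rw [corr_sub hf (hg.comp (measurable_add_const x)) hg.avg, corr_translate,
    ← avg_corr_comm hf hg]
  rfl

variable [(volume : Measure E).IsAddLeftInvariant]

lemma l1Norm_avg_mul_sub_mul_avg_le (h : IsCutoff χ e) (hg : BddInt g) :
    l1Norm (fun y => avg F (fun z => χ z * g z) y - χ y * avg F g y) ≤
      (∫ x, e x ∂F) * l1Norm g := by
  have he := h.bddMeas_modulus.integrable (μ := F)
  rw [l1Norm, l1Norm, ← integral_corr he hg.abs]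
  exact integral_mono ((h.mul hg).avg.sub (h.mul hg.avg)).abs.integrable
    (hg.abs.corr he).integrable (abs_avg_mul_sub_mul_avg_le h hg)

lemma l1Norm_fluctuation_mul_le (h : IsCutoff χ e) (hg : BddInt g) (x : E) :
    l1Norm (fluctuation F x fun z => χ z * g z) ≤
      localVariation F χ g x + e x * l1Norm g + (∫ x, e x ∂F) * l1Norm g := by
  have hlocal : BddInt fun y => χ y * fluctuation F x g y := h.mul (hg.fluctuation x)
  have hshift : BddInt fun y => (χ (y + x) - χ y) * g (y + x) :=
    ((h.bddMeas.comp (measurable_add_const x)).sub h.bddMeas).mul_bddInt (hg.translate x)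
  have hcomm : BddInt fun y => avg F (fun z => χ z * g z) y - χ y * avg F g y :=
    (h.mul hg).avg.sub (h.mul hg.avg)
  have hsplit : fluctuation F x (fun z => χ z * g z) =
      fun y => (χ y * fluctuation F x g y + (χ (y + x) - χ y) * g (y + x)) -
        (avg F (fun z => χ z * g z) y - χ y * avg F g y) := by
    ext y
    simp only [fluctuation]
    ring
  have hlocal_eq : l1Norm (fun y => χ y * fluctuation F x g y) = localVariation F χ g x := by
    simp only [l1Norm, localVariation, abs_mul, abs_of_nonneg (h.nonneg _)]
  have hshift_le : l1Norm (fun y => (χ (y + x) - χ y) * g (y + x)) ≤ e x * l1Norm g := by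
    rw [← l1Norm_translate g x, ← abs_of_nonneg (h.modulus_nonneg x), ← l1Norm_const_mul]
    refine l1Norm_mono hshift ((hg.translate x).const_mul _) fun y => ?_
    rw [abs_mul, abs_mul]
    exact mul_le_mul_of_nonneg_right ((h.abs_translate_sub_le x y).trans (le_abs_self _))
      (abs_nonneg _)
  rw [hsplit]
  linarith [l1Norm_sub_le (hlocal.add hshift) hcomm, l1Norm_add_le hlocal hshift,
    l1Norm_avg_mul_sub_mul_avg_le (F := F) h hg]

end Cutoff

section SqVariation

variable {E : Type*} [AddCommGroup E] [MeasureSpace E]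

/-- The mean square over `x ∼ F` of the `L¹` norm of the fluctuation of `f` at `x`. -/
def sqVariation (F : Measure E) (f : E → ℝ) : ℝ := ∫ x, l1Norm (fluctuation F x f) ^ 2 ∂F

variable [MeasurableAdd₂ E] [SFinite (volume : Measure E)]
  [(volume : Measure E).IsAddLeftInvariant]
  {F : Measure E} [IsProbabilityMeasure F] {χ e f g : E → ℝ}

lemma bddMeas_l1Norm_fluctuation (hf : BddInt f) :
    BddMeas fun x => l1Norm (fluctuation F x f) := by
  refine ⟨?_, 2 * l1Norm f, fun x => ?_⟩
  · have hmeas := measurable_localVariation (F := F) (BddMeas.const (α := E) 1) hf.toBddMeas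
    unfold localVariation at hmeas
    simpa only [one_mul, l1Norm] using hmeas
  · rw [abs_of_nonneg (l1Norm_nonneg _)]
    exact l1Norm_fluctuation_le hf x

lemma sqVariation_le (hf : BddInt f) : sqVariation F f ≤ (2 * l1Norm f) ^ 2 := by
  have hle := integral_mono (bddMeas_l1Norm_fluctuation (F := F) hf).integrable_sq
    (integrable_const (μ := F) ((2 * l1Norm f) ^ 2)) fun x =>
      pow_le_pow_left₀ (l1Norm_nonneg _) (l1Norm_fluctuation_le hf x) 2
  simpa [sqVariation] using hle

variable [MeasurableNeg E] [(volume : Measure E).IsNegInvariant]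

lemma l1Norm_fluctuation_corr_self_le (h : IsCutoff χ e) (hf : BddInt f) (hfe : f.Even)
    (hf1 : l1Norm f = 1) (x : E) :
    l1Norm (fluctuation F x (corr f volume f)) ≤ localVariation F χ f x + e x + (∫ x, e x ∂F) +
      l1Norm (fun y => (1 - χ y) * f y) * l1Norm (fluctuation F x f) := by
  have hnear := h.mul hf
  have hfar := h.one_sub_mul hf
  have hnear_le := l1Norm_corr_le hf.integrable (hnear.fluctuation (F := F) x)
  have hfar_le := l1Norm_corr_le hfar.integrable (hf.fluctuation (F := F) x)
  have hlocal := l1Norm_fluctuation_mul_le (F := F) h hf x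
  rw [← l1Norm] at hnear_le hfar_le
  rw [hf1] at hnear_le hlocal
  rw [h.corr_self hf hfe, fluctuation_add (hnear.corr hf.integrable).toBddMeas
    (hf.corr hfar.integrable).toBddMeas, ← corr_fluctuation hf.integrable hnear.toBddMeas,
    ← corr_fluctuation hfar.integrable hf.toBddMeas]
  linarith [l1Norm_add_le ((hnear.fluctuation (F := F) x).corr hf.integrable)
    ((hf.fluctuation (F := F) x).corr hfar.integrable)]

lemma sqVariation_corr_self_le (h : IsCutoff χ e) (hf : BddInt f) (hfe : f.Even)
    (hf1 : l1Norm f = 1) :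
    sqVariation F (corr f volume f) ≤ 6 * (∫ x, localVariation F χ f x ^ 2 ∂F) +
      12 * (∫ x, e x ^ 2 ∂F) + 2 * l1Norm (fun y => (1 - χ y) * f y) ^ 2 * sqVariation F f := by
  set δ := l1Norm fun y => (1 - χ y) * f y
  set eMean := ∫ x, e x ∂F
  have hjensen : eMean ^ 2 ≤ ∫ x, e x ^ 2 ∂F := sq_integral_le h.bddMeas_modulus
  have hpointwise (x : E) : l1Norm (fluctuation F x (corr f volume f)) ^ 2 ≤
      ((6 * localVariation F χ f x ^ 2 + 6 * e x ^ 2) + 6 * eMean ^ 2) +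
        2 * δ ^ 2 * l1Norm (fluctuation F x f) ^ 2 := by
    refine (pow_le_pow_left₀ (l1Norm_nonneg _)
      (l1Norm_fluctuation_corr_self_le h hf hfe hf1 x) 2).trans ?_
    set a := localVariation F χ f x
    set b := e x
    set d := l1Norm (fluctuation F x f)
    nlinarith [sq_nonneg (a + b + eMean - δ * d), sq_nonneg (a - b), sq_nonneg (b - eMean),
      sq_nonneg (a - eMean)]
  have hlocal : Integrable (fun x => 6 * localVariation F χ f x ^ 2) F :=
    (bddMeas_localVariation h.bddMeas h.nonneg h.le_one hf).integrable_sq.const_mul 6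
  have hlocal_mod : Integrable (fun x => 6 * localVariation F χ f x ^ 2 + 6 * e x ^ 2) F :=
    hlocal.add (h.bddMeas_modulus.integrable_sq.const_mul 6)
  have hconst : Integrable
      (fun x => 6 * localVariation F χ f x ^ 2 + 6 * e x ^ 2 + 6 * eMean ^ 2) F :=
    hlocal_mod.add (integrable_const _)
  have hvar : Integrable (fun x => 2 * δ ^ 2 * l1Norm (fluctuation F x f) ^ 2) F :=
    (bddMeas_l1Norm_fluctuation hf).integrable_sq.const_mul _
  have hmean := integral_mono
    (bddMeas_l1Norm_fluctuation (F := F) (hf.corr hf.integrable)).integrable_sq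
    (hconst.add hvar) hpointwise
  simp only [Pi.add_apply] at hmean
  rw [integral_add hconst hvar, integral_add hlocal_mod (integrable_const _),
    integral_add hlocal (h.bddMeas_modulus.integrable_sq.const_mul 6)] at hmean
  simp only [integral_const_mul, integral_const, probReal_univ, one_smul] at hmean
  rw [sqVariation, sqVariation]
  linarith

end SqVariation

/-! ## Powers of the difference operator -/

/-- The difference operator `(1 - avg F) / 2`, normalized to be a contraction of `L¹`. -/
def halfDiff {E : Type*} [Add E] [MeasurableSpace E] (F : Measure E) (g : E → ℝ) : E → ℝ :=
  fun y => 1 / 2 * (g y - avg F g y)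

section HalfDiff

variable {E : Type*} [AddCommGroup E]

section MeasurableSpace

variable [MeasurableSpace E] {F : Measure E} {g h : E → ℝ}

lemma even_iterate_halfDiff [MeasurableNeg E] [F.IsNegInvariant] (hg : g.Even) (n : ℕ) :
    ((halfDiff F)^[n] g).Even :=
  Function.Iterate.rec (fun u : E → ℝ => u.Even) hg
    (fun u hu y => by simp only [halfDiff, hu y, even_avg hu y]) n

variable [MeasurableAdd E] [IsProbabilityMeasure F]

lemma halfDiff_add (hg : BddMeas g) (hh : BddMeas h) :
    halfDiff F (fun y => g y + h y) = fun y => halfDiff F g y + halfDiff F h y := by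
  ext y
  simp only [halfDiff, avg_add hg hh]
  ring

lemma halfDiff_sub (hg : BddMeas g) (hh : BddMeas h) :
    halfDiff F (fun y => g y - h y) = fun y => halfDiff F g y - halfDiff F h y := by
  ext y
  simp only [halfDiff, avg_sub hg hh]
  ring

end MeasurableSpace

variable [MeasureSpace E] [MeasurableAdd₂ E] [SFinite (volume : Measure E)]
  {F : Measure E} [IsProbabilityMeasure F] {χ e f g h w : E → ℝ}

lemma halfDiff_corr (hw : Integrable w) (hg : BddMeas g) :
    halfDiff F (corr w volume g) = corr w volume (halfDiff F g) := by
  change _ = corr w volume (fun y => 1 / 2 * (g y - avg F g y))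
  rw [corr_const_mul, corr_sub hw hg hg.avg, ← avg_corr_comm hw hg]
  rfl

variable [(volume : Measure E).IsAddLeftInvariant]

lemma BddInt.halfDiff (hg : BddInt g) : BddInt (halfDiff F g) :=
  (hg.sub hg.avg).const_mul _

lemma BddInt.iterate_halfDiff (hg : BddInt g) (n : ℕ) : BddInt ((_root_.halfDiff F)^[n] g) :=
  Function.Iterate.rec BddInt hg (fun _ hu => hu.halfDiff) n

lemma l1Norm_halfDiff_le (hg : BddInt g) : l1Norm (halfDiff F g) ≤ l1Norm g := by
  unfold halfDiff
  rw [l1Norm_const_mul, abs_of_pos one_half_pos]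
  linarith [l1Norm_sub_le hg (hg.avg (F := F)), l1Norm_avg_le (F := F) hg]

lemma l1Norm_iterate_halfDiff_le (hg : BddInt g) (n : ℕ) :
    l1Norm ((halfDiff F)^[n] g) ≤ l1Norm g := by
  induction n with
  | zero => exact le_rfl
  | succ n ih =>
    rw [Function.iterate_succ_apply']
    exact (l1Norm_halfDiff_le (hg.iterate_halfDiff n)).trans ih

lemma iterate_halfDiff_corr (hw : Integrable w) (hg : BddInt g) (n : ℕ) :
    (halfDiff F)^[n] (corr w volume g) = corr w volume ((halfDiff F)^[n] g) := by
  induction n with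
  | zero => rfl
  | succ n ih =>
    simp only [Function.iterate_succ_apply', ih]
    exact halfDiff_corr hw (hg.iterate_halfDiff n).toBddMeas

lemma iterate_halfDiff_add (hg : BddInt g) (hh : BddInt h) (n : ℕ) :
    (halfDiff F)^[n] (fun y => g y + h y) =
      fun y => (halfDiff F)^[n] g y + (halfDiff F)^[n] h y := by
  induction n with
  | zero => rfl
  | succ n ih =>
    simp only [Function.iterate_succ_apply', ih]
    exact halfDiff_add (hg.iterate_halfDiff n).toBddMeas (hh.iterate_halfDiff n).toBddMeas

lemma l1Norm_halfDiff_mul_sub_mul_halfDiff_le (hχ : IsCutoff χ e) (hg : BddInt g) :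
    l1Norm (fun y => halfDiff F (fun z => χ z * g z) y - χ y * halfDiff F g y) ≤
      (∫ x, e x ∂F) / 2 * l1Norm g := by
  have hcomm : (fun y => halfDiff F (fun z => χ z * g z) y - χ y * halfDiff F g y) =
      fun y => -1 / 2 * (avg F (fun z => χ z * g z) y - χ y * avg F g y) := by
    ext y
    simp only [halfDiff]
    ring
  rw [hcomm, l1Norm_const_mul, show |(-1 / 2 : ℝ)| = 1 / 2 by norm_num [abs_div]]
  linarith [l1Norm_avg_mul_sub_mul_avg_le (F := F) hχ hg]

lemma l1Norm_iterate_halfDiff_mul_sub_le (hχ : IsCutoff χ e) (hg : BddInt g) (D : ℕ) :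
    l1Norm (fun y => (halfDiff F)^[D] (fun z => χ z * g z) y - χ y * (halfDiff F)^[D] g y) ≤
      D * ((∫ x, e x ∂F) / 2) * l1Norm g := by
  have hmean : 0 ≤ ∫ x, e x ∂F := integral_nonneg hχ.modulus_nonneg
  induction D with
  | zero => simp [l1Norm]
  | succ D ih =>
    have hG := hg.iterate_halfDiff (F := F) D
    have hP := (hχ.mul hg).iterate_halfDiff (F := F) D
    have hGle := l1Norm_iterate_halfDiff_le (F := F) hg D
    set G := (halfDiff F)^[D] g
    set P := (halfDiff F)^[D] fun z => χ z * g z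
    have hsplit : (fun y => (halfDiff F)^[D + 1] (fun z => χ z * g z) y -
        χ y * (halfDiff F)^[D + 1] g y) = fun y => halfDiff F (fun z => P z - χ z * G z) y +
          (halfDiff F (fun z => χ z * G z) y - χ y * halfDiff F G y) := by
      ext y
      rw [halfDiff_sub hP.toBddMeas (hχ.mul hG).toBddMeas]
      simp only [Function.iterate_succ_apply', P, G]
      ring
    have hcomm := l1Norm_halfDiff_mul_sub_mul_halfDiff_le (F := F) hχ hG
    have hprev := (l1Norm_halfDiff_le (F := F) (hP.sub (hχ.mul hG))).trans ih
    have hadd := l1Norm_add_le ((hP.sub (hχ.mul hG)).halfDiff (F := F))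
      (((hχ.mul hG).halfDiff (F := F)).sub (hχ.mul (hG.halfDiff (F := F))))
    rw [hsplit]
    push_cast
    nlinarith [mul_le_mul_of_nonneg_left hGle hmean]

variable [MeasurableNeg E] [(volume : Measure E).IsNegInvariant]

lemma l1Norm_iterate_halfDiff_corr_self_le (hχ : IsCutoff χ e) (hf : BddInt f) (hfe : f.Even)
    (hf1 : l1Norm f = 1) (D : ℕ) :
    l1Norm ((halfDiff F)^[D] (corr f volume f)) ≤
      l1Norm (fun y => χ y * (halfDiff F)^[D] f y) + D * ((∫ x, e x ∂F) / 2) +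
        l1Norm (fun y => (1 - χ y) * f y) * l1Norm ((halfDiff F)^[D] f) := by
  have hnear := hχ.mul hf
  have hfar := hχ.one_sub_mul hf
  have hD := hχ.mul (hf.iterate_halfDiff (F := F) D)
  have hnear_le := l1Norm_corr_le hf.integrable (hnear.iterate_halfDiff (F := F) D)
  have hfar_le := l1Norm_corr_le hfar.integrable (hf.iterate_halfDiff (F := F) D)
  have hcomm := l1Norm_iterate_halfDiff_mul_sub_le (F := F) hχ hf D
  have hnear_add := l1Norm_add_le ((hnear.iterate_halfDiff (F := F) D).sub hD) hD
  rw [← l1Norm] at hnear_le hfar_le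
  rw [hf1] at hnear_le hcomm
  simp only [sub_add_cancel] at hnear_add
  rw [hχ.corr_self hf hfe, iterate_halfDiff_add (hnear.corr hf.integrable)
    (hf.corr hfar.integrable), iterate_halfDiff_corr hf.integrable hnear,
    iterate_halfDiff_corr hfar.integrable hf]
  linarith [l1Norm_add_le ((hnear.iterate_halfDiff (F := F) D).corr hf.integrable)
    ((hf.iterate_halfDiff (F := F) D).corr hfar.integrable)]

lemma corr_iterate_halfDiff_self [F.IsNegInvariant] (hf : BddInt f) (hfe : f.Even) (n : ℕ) :
    corr ((halfDiff F)^[n] f) volume ((halfDiff F)^[n] f) =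
      (halfDiff F)^[2 * n] (corr f volume f) := by
  rw [← iterate_halfDiff_corr (hf.iterate_halfDiff n).integrable hf,
    corr_volume_comm (even_iterate_halfDiff hfe n) hfe, ← iterate_halfDiff_corr hf.integrable hf,
    ← Function.iterate_add_apply, two_mul]

end HalfDiff

section CosRep

variable {E : Type*} [NormedAddCommGroup E] [InnerProductSpace ℝ E] [FiniteDimensional ℝ E]
  [MeasurableSpace E] [BorelSpace E] {ρ g : E → ℝ} {F : Measure E} [IsProbabilityMeasure F]

lemma integrable_one_sub_cosTransform_pow_mul (hρ : Integrable ρ) (n : ℕ) :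
    Integrable (fun t => ((1 - cosTransform F t) / 2) ^ n * ρ t) := by
  have hmeas : Measurable fun t => ((1 - cosTransform F t) / 2) ^ n :=
    ((measurable_const.sub measurable_cosTransform).div_const 2).pow_const n
  refine hρ.bdd_mul (c := 1) hmeas.aestronglyMeasurable (.of_forall fun t => ?_)
  have habs := abs_le.1 (abs_cosTransform_le_one (F := F) t)
  rw [norm_pow, Real.norm_eq_abs, abs_of_nonneg (by linarith)]
  exact pow_le_one₀ (by linarith) (by linarith)

variable [F.IsNegInvariant]

lemma CosRep.halfDiff (hρ : Integrable ρ) (h : CosRep ρ g) :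
    CosRep (fun t => (1 - cosTransform F t) / 2 * ρ t) (halfDiff F g) := by
  intro y
  have hmul : Integrable fun t => cosTransform F t * ρ t := by
    simpa using integrable_cosTransform_pow_mul (F := F) hρ 1
  rw [_root_.halfDiff, h y, h.avg (F := F) hρ y, ← integral_sub (integrable_cos_inner_mul hρ y)
    (integrable_cos_inner_mul hmul y), ← integral_const_mul]
  refine integral_congr_ae (.of_forall fun t => ?_)
  ring

lemma CosRep.iterate_halfDiff (hρ : Integrable ρ) (h : CosRep ρ g) (n : ℕ) :
    CosRep (fun t => ((1 - cosTransform F t) / 2) ^ n * ρ t) ((_root_.halfDiff F)^[n] g) := by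
  induction n with
  | zero => simpa using h
  | succ n ih =>
    rw [Function.iterate_succ_apply']
    simpa only [← mul_assoc, ← pow_succ'] using
      ih.halfDiff (F := F) (integrable_one_sub_cosTransform_pow_mul hρ n)

end CosRep

section SmoothedPow

lemma one_sub_mul_pow_le_one_div {a : ℝ} (h0 : 0 ≤ a) (h1 : a ≤ 1) {n : ℕ} (hn : 0 < n) :
    (1 - a) * a ^ n ≤ 1 / n := by
  have hsum : n * a ^ n ≤ ∑ i ∈ Finset.range n, a ^ i := by
    simpa using Finset.card_nsmul_le_sum (Finset.range n) (fun i => a ^ i) (a ^ n) fun i hi =>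
      pow_le_pow_of_le_one h0 h1 (Finset.mem_range.1 hi).le
  rw [le_div_iff₀ (by exact_mod_cast hn)]
  nlinarith [mul_le_mul_of_nonneg_left hsum (sub_nonneg.2 h1), mul_neg_geom_sum a n,
    pow_nonneg h0 n]

lemma half_one_sub_pow_mul_pow_le {a : ℝ} (h0 : 0 ≤ a) (h1 : a ≤ 1) {n D : ℕ} (hn : 0 < n)
    (hD : 0 < D) : ((1 - a) / 2) ^ (2 * D) * a ^ n ≤ (1 / 4) ^ D / n := by
  have hpow : (1 - a) ^ (2 * D) ≤ 1 - a :=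
    pow_le_of_le_one (by linarith) (by linarith) (by omega)
  calc ((1 - a) / 2) ^ (2 * D) * a ^ n
      = (1 / 4) ^ D * ((1 - a) ^ (2 * D) * a ^ n) := by
        rw [div_pow, pow_mul 2, one_div, inv_pow]
        norm_num
        ring
    _ ≤ (1 / 4) ^ D * (1 / n) := by
        gcongr
        exact (mul_le_mul_of_nonneg_right hpow (pow_nonneg h0 n)).trans
          (one_sub_mul_pow_le_one_div h0 h1 hn)
    _ = (1 / 4) ^ D / n := by ring

variable {E : Type*} [NormedAddCommGroup E] [InnerProductSpace ℝ E] [FiniteDimensional ℝ E]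
  [MeasurableSpace E] [BorelSpace E] {F : Measure E} [IsProbabilityMeasure F]
  [F.IsNegInvariant] {N j D : ℕ}

lemma integral_sq_iterate_halfDiff_smoothedPow_le (hF : ∀ t, 0 ≤ cosTransform F t) (hN : 0 < N)
    (hj : 0 < j) (hD : 0 < D) : ∫ y, (halfDiff F)^[D] (smoothedPow F N j) y ^ 2 ≤
      gaussConst E ((2 * j : ℕ) / N) * ((1 / 4) ^ D / (2 * j : ℕ)) := by
  have hj2 : 0 < 2 * j := by omega
  have hθ : (0 : ℝ) < (2 * j : ℕ) / N := by positivity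
  set θ : ℝ := (2 * j : ℕ) / N with hθdef
  have hsq : ∫ y, (halfDiff F)^[D] (smoothedPow F N j) y ^ 2 =
      (halfDiff F)^[2 * D] (smoothedPow F N (2 * j)) 0 := by
    rw [two_mul j, ← corr_smoothedPow hN hj hj,
      ← corr_iterate_halfDiff_self (bddInt_smoothedPow hN hj) even_smoothedPow]
    simp only [corr, zero_add, pow_two]
  have hgauss : Integrable (gaussKernel (1 / θ) : E → ℝ) :=
    (bddInt_gaussKernel (one_div_pos.2 hθ)).integrable
  have hρ := hgauss.const_mul (gaussConst E θ)
  have hρpow := integrable_cosTransform_pow_mul (F := F) hρ (2 * j)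
  rw [hsq, smoothedPow, ← hθdef,
    ((cosRep_gaussKernel hθ).avg_convPow hρ (2 * j)).iterate_halfDiff hρpow (2 * D) 0]
  simp only [inner_zero_right, Real.cos_zero, one_mul]
  refine (integral_mono (integrable_one_sub_cosTransform_pow_mul hρpow _)
    (hgauss.const_mul (gaussConst E θ * ((1 / 4) ^ D / (2 * j : ℕ)))) fun t => ?_).trans_eq ?_
  · have hfreq := half_one_sub_pow_mul_pow_le (hF t)
      ((le_abs_self _).trans (abs_cosTransform_le_one t)) hj2 hD
    have hgt := mul_nonneg (gaussConst_pos (E := E) hθ).le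
      (gaussKernel_pos (one_div_pos.2 hθ) t).le
    linarith [mul_le_mul_of_nonneg_right hfreq hgt]
  · rw [integral_const_mul, integral_gaussKernel (one_div_pos.2 hθ), mul_one]

end SmoothedPow

section HalfDiff

variable {E : Type*} [AddCommGroup E] [MeasureSpace E] [MeasurableAdd₂ E]
  [(volume : Measure E).IsAddLeftInvariant] {F : Measure E} {f g w : E → ℝ}

lemma corr_translate_left (w g : E → ℝ) (x : E) :
    corr (fun z => w (z + x)) volume g = fun y => corr w volume g (y - x) := by
  ext y
  simp only [corr]
  rw [← integral_add_right_eq_self (fun z => w z * g (y - x + z)) x]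
  simp only [sub_add_add_cancel]

variable [SFinite (volume : Measure E)] [IsProbabilityMeasure F]

lemma corr_fluctuation_self [MeasurableNeg E] [(volume : Measure E).IsNegInvariant]
    [F.IsNegInvariant] (hf : BddInt f) (hfe : f.Even) (x y : E) :
    corr (fluctuation F x f) volume (fluctuation F x f) y =
      corr f volume f y - avg F (corr f volume f) (y - x) - avg F (corr f volume f) (y + x) +
        avg F (avg F (corr f volume f)) y := by
  have hT := hf.avg (F := F)
  have hx := hf.translate x
  have havg : avg F (corr f volume f) = corr f volume (avg F f) :=
    avg_corr_comm hf.integrable hf.toBddMeas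
  have hswap : corr (avg F f) volume f = avg F (corr f volume f) := by
    rw [corr_volume_comm (even_avg hfe) hfe, havg]
  change corr (fun z => f (z + x) - avg F f z) volume (fun z => f (z + x) - avg F f z) y = _
  rw [corr_sub_left hx.integrable hT.integrable (hx.sub hT).toBddMeas,
    corr_sub hx.integrable hx.toBddMeas hT.toBddMeas,
    corr_sub hT.integrable hx.toBddMeas hT.toBddMeas]
  simp only [corr_translate_left, corr_translate, hswap, ← havg,
    ← avg_corr_comm hT.integrable hf.toBddMeas, add_sub_cancel_right]
  ring

lemma integrable_sub_prod [MeasurableNeg E] [F.IsNegInvariant] (hg : BddInt g) :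
    Integrable (fun p : E × E => g (p.2 - p.1)) (F.prod volume) := by
  have hadd := integrable_corr_prod (integrable_const (1 : ℝ) (μ := F)) hg
  simpa only [Function.comp_def, Prod.map, id, one_mul, ← sub_eq_add_neg] using
    ((Measure.measurePreserving_neg F).prod (.id volume)).integrable_comp_of_integrable hadd

variable [MeasurableNeg E] [(volume : Measure E).IsNegInvariant] [F.IsNegInvariant]

lemma integrable_corr_fluctuation_self_prod (hf : BddInt f) (hfe : f.Even) :
    Integrable (fun p : E × E => corr (fluctuation F p.1 f) volume (fluctuation F p.1 f) p.2)
      (F.prod volume) := by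
  have hcorr := hf.corr hf.integrable
  have hfst : ∀ {u : E → ℝ}, BddInt u → Integrable (fun p : E × E => u p.2) (F.prod volume) :=
    fun hu => by
      simpa only [one_mul] using (integrable_const (1 : ℝ) (μ := F)).mul_prod hu.integrable
  have hadd := integrable_corr_prod (integrable_const (1 : ℝ) (μ := F)) (hcorr.avg (F := F))
  simp only [one_mul] at hadd
  simp only [corr_fluctuation_self hf hfe]
  exact (((hfst hcorr).sub (integrable_sub_prod hcorr.avg)).sub hadd).add (hfst hcorr.avg.avg)

lemma integral_corr_fluctuation_self (hf : BddInt f) (hfe : f.Even) (y : E) :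
    ∫ x, corr (fluctuation F x f) volume (fluctuation F x f) y ∂F =
      corr f volume f y - avg F (avg F (corr f volume f)) y := by
  have hcorr := hf.corr hf.integrable
  set A := avg F (corr f volume f)
  have hA : BddInt A := hcorr.avg
  have hsub : Integrable (fun x => A (y - x)) F :=
    (hA.toBddMeas.comp (measurable_const_sub y)).integrable
  have hadd : Integrable (fun x => A (y + x)) F := integrable_translate hA.toBddMeas y
  have hneg : ∫ x, A (y - x) ∂F = avg F A y := by
    rw [← integral_neg_eq_self]
    simp only [sub_neg_eq_add, avg]
  have h₁ : Integrable (fun x => corr f volume f y - A (y - x)) F := (integrable_const _).sub hsub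
  have h₂ : Integrable (fun x => corr f volume f y - A (y - x) - A (y + x)) F := h₁.sub hadd
  simp only [corr_fluctuation_self hf hfe]
  rw [integral_add h₂ (integrable_const _), integral_sub h₁ hadd,
    integral_sub (integrable_const _) hsub, hneg]
  simp only [integral_const, probReal_univ, one_smul, avg, A]
  ring

lemma l1Norm_corr_self_sub_avg_avg_le (hf : BddInt f) (hfe : f.Even) :
    l1Norm (fun y => corr f volume f y - avg F (avg F (corr f volume f)) y) ≤
      sqVariation F f := by
  have hInt := integrable_corr_fluctuation_self_prod (F := F) hf hfe
  calc l1Norm (fun y => corr f volume f y - avg F (avg F (corr f volume f)) y)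
      = ∫ y, |∫ x, corr (fluctuation F x f) volume (fluctuation F x f) y ∂F| := by
        simp only [l1Norm, integral_corr_fluctuation_self hf hfe]
    _ ≤ ∫ y, (∫ x, |corr (fluctuation F x f) volume (fluctuation F x f) y| ∂F) :=
        integral_mono_of_nonneg (.of_forall fun y => abs_nonneg _) hInt.abs.integral_prod_right
          (.of_forall fun y => abs_integral_le_integral_abs)
    _ = ∫ x, l1Norm (corr (fluctuation F x f) volume (fluctuation F x f)) ∂F :=
        (integral_integral_swap hInt.abs).symm
    _ ≤ sqVariation F f := by
        refine integral_mono_of_nonneg (.of_forall fun x => l1Norm_nonneg _)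
          (bddMeas_l1Norm_fluctuation hf).integrable_sq (.of_forall fun x => ?_)
        have hx := hf.fluctuation (F := F) x
        exact (l1Norm_corr_le hx.integrable hx).trans_eq (pow_two _).symm

end HalfDiff

section Iterate

variable {E : Type*} [AddCommGroup E] [MeasureSpace E] [MeasurableAdd₂ E]
  [SFinite (volume : Measure E)] [(volume : Measure E).IsAddLeftInvariant] {F : Measure E}
  [IsProbabilityMeasure F] {f g : E → ℝ}

lemma iterate_halfDiff_sub_avg_avg (hg : BddInt g) (n : ℕ) :
    (halfDiff F)^[n] (fun y => 1 / 4 * (g y - avg F (avg F g) y)) =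
      fun y => (halfDiff F)^[n + 1] g y - (halfDiff F)^[n + 2] g y := by
  induction n with
  | zero =>
    ext y
    have havg : avg F (halfDiff F g) y = 1 / 2 * (avg F g y - avg F (avg F g) y) := by
      unfold halfDiff
      rw [avg_const_mul, avg_sub hg.toBddMeas hg.avg.toBddMeas]
    simp only [Function.iterate_zero, id, Function.iterate_succ, Function.comp]
    rw [halfDiff.eq_def F (halfDiff F g), havg, halfDiff]
    ring
  | succ n ih =>
    rw [Function.iterate_succ_apply', ih, halfDiff_sub (hg.iterate_halfDiff _).toBddMeas
      (hg.iterate_halfDiff _).toBddMeas]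
    simp only [Function.iterate_succ_apply']

lemma l1Norm_sub_avg_le (hg : BddInt g) (K : ℕ) :
    l1Norm (fun y => g y - avg F g y) ≤
      K / 2 * l1Norm (fun y => g y - avg F (avg F g) y) + 2 * l1Norm ((halfDiff F)^[K + 1] g) := by
  induction K with
  | zero =>
    simp only [Nat.cast_zero, zero_div, zero_mul, zero_add, Function.iterate_one]
    unfold halfDiff
    rw [l1Norm_const_mul, abs_of_pos one_half_pos]
    linarith
  | succ K ih =>
    have hdiff : BddInt fun y => g y - avg F (avg F g) y := hg.sub hg.avg.avg
    have hstep := l1Norm_iterate_halfDiff_le (F := F) (hdiff.const_mul (1 / 4)) K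
    have hsucc := hg.iterate_halfDiff (F := F) (K + 2)
    have htri := l1Norm_add_le ((hg.iterate_halfDiff (F := F) (K + 1)).sub hsucc) hsucc
    rw [iterate_halfDiff_sub_avg_avg hg, l1Norm_const_mul,
      abs_of_pos (by norm_num : (0 : ℝ) < 1 / 4)] at hstep
    simp only [sub_add_cancel] at htri
    push_cast
    linarith

lemma l1Norm_corr_self_sub_avg_le [MeasurableNeg E] [(volume : Measure E).IsNegInvariant]
    [F.IsNegInvariant] (hf : BddInt f) (hfe : f.Even) {D : ℕ} (hD : 0 < D) :
    l1Norm (fun y => corr f volume f y - avg F (corr f volume f) y) ≤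
      D * sqVariation F f + 2 * l1Norm ((halfDiff F)^[D] f) ^ 2 := by
  have hfD := hf.iterate_halfDiff (F := F) D
  have hpow := l1Norm_corr_le hfD.integrable hfD
  have hsub := l1Norm_sub_avg_le (F := F) (hf.corr hf.integrable) (2 * D - 1)
  have hcast : ((2 * D - 1 : ℕ) : ℝ) / 2 ≤ D := by
    rw [Nat.cast_sub (by omega)]
    push_cast
    linarith
  have hmul := mul_le_mul hcast (l1Norm_corr_self_sub_avg_avg_le (F := F) hf hfe)
    (l1Norm_nonneg _) D.cast_nonneg
  rw [← l1Norm, ← pow_two] at hpow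
  rw [show 2 * D - 1 + 1 = 2 * D by omega, ← corr_iterate_halfDiff_self hf hfe] at hsub
  linarith

end Iterate

/-! ## Doubling the smoothed convolution powers -/

section Doubling

variable {E : Type*} [NormedAddCommGroup E] [InnerProductSpace ℝ E] [FiniteDimensional ℝ E]
  [MeasurableSpace E] [BorelSpace E]

/-- The loss factor `1 + log (1 / spectralMass F N)` in which all error terms are measured. -/
def spectralLoss (F : Measure E) (N : ℕ) : ℝ := 1 + Real.log (1 / spectralMass F N)

/-- The mass of `smoothedPow F N j` that the cutoff `bump F N` discards. -/
def bumpDefect (F : Measure E) (N j : ℕ) : ℝ := ∫ y, (1 - bump F N y) * smoothedPow F N j y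

/-- The error committed when passing from `smoothedPow F N j` to `smoothedPow F N (2 * j)` in the
recursions for `sqVariation` and for the `L¹` norm of iterated differences. -/
def doublingError (F : Measure E) (N j : ℕ) : ℝ :=
  60 * (Module.finrank ℝ E + 1) * spectralLoss F N ^ 3 *
    ((N : ℝ) / j) ^ (Module.finrank ℝ E + 2) / N

lemma sq_l1Norm_mul_le {α : Type*} [MeasureSpace α] {χ u : α → ℝ} {A : ℝ} (hχ : BddInt χ)
    (hχ0 : ∀ y, 0 ≤ χ y) (hχ1 : ∀ y, χ y ≤ 1) (hA : 0 < A) (hχA : ∫ y, χ y = 1 / A)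
    (hu : BddInt u) : l1Norm (fun y => χ y * u y) ^ 2 ≤ 1 / A * ∫ y, u y ^ 2 := by
  have hsq : Integrable fun y => u y ^ 2 := by
    simpa only [pow_two] using (hu.toBddMeas.mul_bddInt hu).integrable
  have hw := hχ.const_mul A
  have habs : Integrable fun y => |u y| * (A * χ y) :=
    (hu.abs.toBddMeas.mul_bddInt hw).integrable
  have hsqw : Integrable fun y => |u y| ^ 2 * (A * χ y) := by
    simpa only [pow_two] using
      ((hu.abs.toBddMeas.mul hu.abs.toBddMeas).mul_bddInt hw).integrable
  have hjensen := sq_integral_mul_le (fun y => mul_nonneg hA.le (hχ0 y)) hw.integrable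
    (by rw [integral_const_mul, hχA, mul_one_div_cancel hA.ne']) habs hsqw
  have hnorm : ∫ y, |u y| * (A * χ y) = A * l1Norm (fun y => χ y * u y) := by
    rw [l1Norm, ← integral_const_mul]
    refine integral_congr_ae (.of_forall fun y => ?_)
    simp only [abs_mul, abs_of_nonneg (hχ0 y)]
    ring
  have hle : ∫ y, |u y| ^ 2 * (A * χ y) ≤ A * ∫ y, u y ^ 2 := by
    rw [← integral_const_mul]
    refine integral_mono hsqw (hsq.const_mul A) fun y => ?_
    simp only [sq_abs]
    nlinarith [mul_nonneg (mul_nonneg hA.le (sq_nonneg (u y))) (sub_nonneg.2 (hχ1 y))]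
  rw [one_div_mul_eq_div, le_div_iff₀ hA]
  rw [hnorm] at hjensen
  nlinarith

variable {F : Measure E} [IsProbabilityMeasure F] [F.IsNegInvariant] {N j : ℕ}

lemma one_quarter_pow_le_spectralMass {D : ℕ} (hN : 0 < N) (hD : spectralLoss F N ≤ D) :
    (1 / 4 : ℝ) ^ D ≤ spectralMass F N := by
  have hmass := spectralMass_pos (F := F) hN
  rw [spectralLoss, one_div, Real.log_inv] at hD
  calc (1 / 4 : ℝ) ^ D ≤ Real.exp (-1) ^ D := by
        refine pow_le_pow_left₀ (by norm_num) ?_ D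
        rw [Real.exp_neg, one_div]
        exact inv_anti₀ (Real.exp_pos 1) (by linarith [Real.exp_one_lt_d9])
    _ = Real.exp (-D) := by rw [← Real.exp_nat_mul, mul_neg_one]
    _ ≤ Real.exp (Real.log (spectralMass F N)) := Real.exp_le_exp.2 (by linarith)
    _ = spectralMass F N := Real.exp_log hmass

variable (hF : ∀ t, 0 ≤ cosTransform F t)
include hF

lemma one_le_spectralLoss (hN : 0 < N) : 1 ≤ spectralLoss F N :=
  le_add_of_nonneg_right (log_one_div_spectralMass_nonneg hF hN)

lemma isCutoff_bump (hN : 0 < N) : IsCutoff (bump F N) (bumpModulus F N) where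
  bddMeas := (bddInt_bump hN).toBddMeas
  even := even_bump
  nonneg y := (bump_pos hN y).le
  le_one := bump_le_one hF hN
  bddMeas_modulus := bddMeas_bumpModulus hN
  abs_translate_sub_le := abs_bump_translate_sub_le hF hN

lemma l1Norm_one_sub_bump_mul_smoothedPow (hN : 0 < N) (hj : 0 < j) :
    l1Norm (fun y => (1 - bump F N y) * smoothedPow F N j y) = bumpDefect F N j :=
  integral_congr_ae (.of_forall fun y => abs_of_nonneg
    (mul_nonneg (sub_nonneg.2 (bump_le_one hF hN y)) (smoothedPow_pos hN hj y).le))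

lemma pow_mul_pow_div_le_doublingError (hN : 0 < N) (hj : 0 < j) (hjN : j ≤ N) {c : ℝ} {a b : ℕ}
    (hc : c ≤ Module.finrank ℝ E + 1) (ha : a ≤ 3) (hb : b ≤ Module.finrank ℝ E + 2) :
    60 * c * spectralLoss F N ^ a * ((N : ℝ) / j) ^ b / N ≤ doublingError F N j := by
  have hloss := one_le_spectralLoss hF hN
  have hratio : (1 : ℝ) ≤ N / j := (one_le_div (by exact_mod_cast hj)).2 (by exact_mod_cast hjN)
  have hloss_pow := pow_le_pow_right₀ hloss ha
  have hratio_pow := pow_le_pow_right₀ hratio hb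
  unfold doublingError
  gcongr

lemma log_smoothing_ratio_le (hN : 0 < N) (hj : 0 < j) (hjN : j ≤ N) :
    Real.log (gaussConst E ((j : ℝ) / N) / smoothedPow F N N 0) + 1 ≤
      (Module.finrank ℝ E + 1) * spectralLoss F N * ((N : ℝ) / j) := by
  have hratio : (1 : ℝ) ≤ N / j := (one_le_div (by exact_mod_cast hj)).2 (by exact_mod_cast hjN)
  have hloss := one_le_spectralLoss hF hN
  have hmass := spectralMass_pos (F := F) hN
  have hconst := gaussConst_pos (E := E) one_pos
  have hlog := Real.log_le_sub_one_of_pos (zero_lt_one.trans_le hratio)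
  set ρ := (N : ℝ) / j
  have hρ : 0 < ρ := by linarith
  rw [show (j : ℝ) / N = 1 / ρ from (one_div_div _ _).symm, gaussConst_one_div hρ,
    smoothedPow_self_zero hN, mul_div_mul_left _ _ hconst.ne',
    div_eq_mul_one_div, Real.log_mul (by positivity) (by positivity), Real.log_rpow hρ]
  rw [spectralLoss] at hloss ⊢
  set L := Real.log (1 / spectralMass F N)
  have hm : (0 : ℝ) ≤ Module.finrank ℝ E := Nat.cast_nonneg _
  have hmL := mul_nonneg (mul_nonneg hm (by linarith : 0 ≤ L)) hρ.le
  have hρL := mul_nonneg (sub_nonneg.2 hratio) (zero_le_one.trans hloss)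
  nlinarith [mul_le_mul_of_nonneg_left hlog hm, mul_nonneg hm hρ.le]

lemma integral_sq_localVariation_smoothedPow_le (hN : 0 < N) (hj : 0 < j) (hjN : j ≤ N) :
    ∫ x, localVariation F (bump F N) (smoothedPow F N j) x ^ 2 ∂F ≤
      6 * (Module.finrank ℝ E + 1) * spectralLoss F N * ((N : ℝ) / j) ^ 2 / N := by
  have hθ : (0 : ℝ) < j / N := by positivity
  have hratio : (1 : ℝ) ≤ N / j := (one_le_div (by exact_mod_cast hj)).2 (by exact_mod_cast hjN)
  have hzero_le : smoothedPow F N N 0 ≤ gaussConst E ((j : ℝ) / N) := by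
    rw [← one_div_div, gaussConst_one_div (by positivity), smoothedPow_self_zero hN]
    refine mul_le_mul_of_nonneg_left ?_ (gaussConst_pos one_pos).le
    exact (spectralMass_le_one hF).trans (Real.one_le_rpow hratio (by positivity))
  have htilt := integral_sq_localVariation_le (F := F) (bddInt_gaussKernel (E := E) hθ)
    (gaussKernel_pos hθ) (gaussKernel_le_gaussConst hθ) (integral_gaussKernel hθ)
    (bddInt_bump (F := F) hN) (fun y => (bump_pos hN y).le) (bump_le_one hF hN)
    (smoothedPow_pos hN hN 0) hzero_le (integral_bump hN) j
  have hlog := log_smoothing_ratio_le hF hN hj hjN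
  have hloss := one_le_spectralLoss hF hN
  set X := Real.log (gaussConst E ((j : ℝ) / N) / smoothedPow F N N 0) + 1
  set Y := (Module.finrank ℝ E + 1) * spectralLoss F N * ((N : ℝ) / j)
  calc ∫ x, localVariation F (bump F N) (smoothedPow F N j) x ^ 2 ∂F ≤ 6 * X / (j + 1) := htilt
    _ ≤ 6 * Y / (j + 1) := by gcongr
    _ ≤ 6 * Y / j := by
        gcongr
        linarith
    _ = _ := by
        simp only [Y]
        field_simp

lemma sqVariation_smoothedPow_two_mul_le (hN : 0 < N) (hj : 0 < j) (hjN : j ≤ N) :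
    sqVariation F (smoothedPow F N (2 * j)) ≤
      doublingError F N j + 2 * bumpDefect F N j ^ 2 * sqVariation F (smoothedPow F N j) := by
  have hrec := sqVariation_corr_self_le (F := F) (isCutoff_bump hF hN) (bddInt_smoothedPow hN hj)
    (even_smoothedPow (F := F)) (l1Norm_smoothedPow hN hj)
  rw [corr_smoothedPow hN hj hj, ← two_mul, l1Norm_one_sub_bump_mul_smoothedPow hF hN hj] at hrec
  have hlocal := integral_sq_localVariation_smoothedPow_le hF hN hj hjN
  have hmod := integral_sq_bumpModulus_le hF hN
  have hone := pow_mul_pow_div_le_doublingError hF hN hj hjN (a := 1) (b := 2) le_rfl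
    (by norm_num) (by omega)
  have hzero := pow_mul_pow_div_le_doublingError hF hN hj hjN (c := 1) (a := 1) (b := 0)
    (by simp) (by norm_num) (by omega)
  rw [pow_one] at hone hzero
  have hmod_le : 2 * Real.log (1 / spectralMass F N) / N ≤ 2 * spectralLoss F N / N := by
    gcongr
    exact le_add_of_nonneg_left zero_le_one
  linear_combination hrec + 6 * hlocal + 12 * hmod + 12 * hmod_le + 36 / 60 * hone + 24 / 60 * hzero

lemma sq_l1Norm_bump_mul_iterate_halfDiff_le (hN : 0 < N) (hj : 0 < j) (hjN : j ≤ N) {D : ℕ}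
    (hD : spectralLoss F N ≤ D) :
    l1Norm (fun y => bump F N y * (halfDiff F)^[D] (smoothedPow F N j) y) ^ 2 ≤
      ((N : ℝ) / j) ^ (Module.finrank ℝ E + 1) / (2 * N) := by
  have hD0 : 0 < D := by exact_mod_cast zero_lt_one.trans_le ((one_le_spectralLoss hF hN).trans hD)
  have hratio : (1 : ℝ) ≤ N / j := (one_le_div (by exact_mod_cast hj)).2 (by exact_mod_cast hjN)
  have hmass := spectralMass_pos (F := F) hN
  have hc := gaussConst_pos (E := E) one_pos
  have hcauchy := sq_l1Norm_mul_le (bddInt_bump hN) (fun y => (bump_pos hN y).le)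
    (bump_le_one hF hN) (smoothedPow_pos hN hN 0) (integral_bump hN)
    ((bddInt_smoothedPow (F := F) hN hj).iterate_halfDiff (F := F) D)
  have hconst : gaussConst E ((2 * j : ℕ) / N) ≤
      gaussConst E 1 * ((N : ℝ) / j) ^ Module.finrank ℝ E := by
    have hhalf : ((2 * j : ℕ) : ℝ) / N = 1 / ((N : ℝ) / j / 2) := by
      push_cast
      field_simp
    rw [hhalf, gaussConst_one_div (by positivity), ← Real.rpow_natCast]
    refine mul_le_mul_of_nonneg_left ?_ hc.le
    exact (Real.rpow_le_rpow (by positivity) (by linarith) (by positivity)).trans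
      (Real.rpow_le_rpow_of_exponent_le hratio (half_le_self (Nat.cast_nonneg _)))
  calc l1Norm (fun y => bump F N y * (halfDiff F)^[D] (smoothedPow F N j) y) ^ 2
      ≤ 1 / smoothedPow F N N 0 * ∫ y, (halfDiff F)^[D] (smoothedPow F N j) y ^ 2 := hcauchy
    _ ≤ 1 / (gaussConst E 1 * spectralMass F N) *
          (gaussConst E 1 * ((N : ℝ) / j) ^ Module.finrank ℝ E *
            (spectralMass F N / (2 * j : ℕ))) := by
        rw [smoothedPow_self_zero hN]
        have hpow := one_quarter_pow_le_spectralMass hN hD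
        gcongr
        refine (integral_sq_iterate_halfDiff_smoothedPow_le hF hN hj hD0).trans ?_
        gcongr
    _ = ((N : ℝ) / j) ^ (Module.finrank ℝ E + 1) / (2 * N) := by
        rw [pow_succ]
        push_cast
        field_simp

lemma sq_l1Norm_iterate_halfDiff_smoothedPow_two_mul_le (hN : 0 < N) (hj : 0 < j) (hjN : j ≤ N)
    {D : ℕ} (hD : spectralLoss F N ≤ D) (hD' : (D : ℝ) ≤ 2 * spectralLoss F N) :
    l1Norm ((halfDiff F)^[D] (smoothedPow F N (2 * j))) ^ 2 ≤ doublingError F N j +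
      2 * bumpDefect F N j ^ 2 * l1Norm ((halfDiff F)^[D] (smoothedPow F N j)) ^ 2 := by
  have hrec := l1Norm_iterate_halfDiff_corr_self_le (F := F) (isCutoff_bump hF hN)
    (bddInt_smoothedPow (F := F) hN hj) even_smoothedPow (l1Norm_smoothedPow hN hj) D
  rw [corr_smoothedPow hN hj hj, ← two_mul, l1Norm_one_sub_bump_mul_smoothedPow hF hN hj] at hrec
  have hcutoff := sq_l1Norm_bump_mul_iterate_halfDiff_le hF hN hj hjN hD
  have hmean := (sq_integral_le (bddMeas_bumpModulus (F := F) hN)).trans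
    (integral_sq_bumpModulus_le hF hN)
  have hloss := one_le_spectralLoss hF hN
  set a := l1Norm fun y => bump F N y * (halfDiff F)^[D] (smoothedPow F N j) y
  set b := ∫ x, bumpModulus F N x ∂F
  set δ := bumpDefect F N j
  set v := l1Norm ((halfDiff F)^[D] (smoothedPow F N j))
  set l := spectralLoss F N with hl
  have hsq : l1Norm ((halfDiff F)^[D] (smoothedPow F N (2 * j))) ^ 2 ≤
      4 * a ^ 2 + D ^ 2 * b ^ 2 + 2 * δ ^ 2 * v ^ 2 := by
    refine (pow_le_pow_left₀ (l1Norm_nonneg _) hrec 2).trans ?_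
    nlinarith [sq_nonneg (a + D * (b / 2) - δ * v), sq_nonneg (a - D * (b / 2))]
  have hmean_le : D ^ 2 * b ^ 2 ≤ 8 * l ^ 3 / N := by
    calc D ^ 2 * b ^ 2 ≤ (2 * l) ^ 2 * (2 * Real.log (1 / spectralMass F N) / N) := by gcongr
      _ ≤ (2 * l) ^ 2 * (2 * l / N) := by
          gcongr
          rw [hl, spectralLoss]
          linarith
      _ = 8 * l ^ 3 / N := by ring
  have hzero := pow_mul_pow_div_le_doublingError hF hN hj hjN (c := 1) (a := 3) (b := 0)
    (by simp) le_rfl (by omega)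
  have hpow := pow_mul_pow_div_le_doublingError hF hN hj hjN (c := 1) (a := 0)
    (b := Module.finrank ℝ E + 1) (by simp) (by norm_num) (by omega)
  have herr : 0 ≤ doublingError F N j := by
    unfold doublingError
    positivity
  linear_combination hsq + 4 * hcutoff + hmean_le + 8 / 60 * hzero + 2 / 60 * hpow + 50 / 60 * herr

end Doubling

section Doubling

/-- The constant of the `L¹` bound for consecutive smoothed convolution powers in dimension `m`. -/
def smoothingConst (m : ℕ) : ℝ :=
  240 * (m + 1) * 2 ^ (m + 3) * (2 * (m + 1) * 2 ^ (m + 4)) ^ (m + 2)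

lemma smoothingConst_pos (m : ℕ) : 0 < smoothingConst m := by
  unfold smoothingConst
  positivity

lemma le_of_doubling {u err : ℕ → ℝ} {J : ℝ} {a : ℕ} (hone : u 1 ≤ 2 ^ (a + 1) * err 1)
    (herr : ∀ j, err j = 2 ^ a * err (2 * j))
    (hu : ∀ j : ℕ, 0 < j → j ≤ J → u (2 * j) ≤ err j + (1 / 2) ^ (a + 1) * u j) (i : ℕ)
    (hi : (2 : ℝ) ^ i ≤ 2 * J) : u (2 ^ i) ≤ 2 ^ (a + 1) * err (2 ^ i) := by
  induction i with
  | zero => simpa using hone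
  | succ i ih =>
    have hiJ : (2 : ℝ) ^ i ≤ J := by
      rw [pow_succ] at hi
      linarith
    have hprev := ih (by linarith [pow_pos (two_pos : (0 : ℝ) < 2) i])
    calc u (2 ^ (i + 1)) ≤ err (2 ^ i) + (1 / 2) ^ (a + 1) * u (2 ^ i) := by
          rw [pow_succ']
          exact hu (2 ^ i) (by positivity) (by exact_mod_cast hiJ)
      _ ≤ err (2 ^ i) + (1 / 2) ^ (a + 1) * (2 ^ (a + 1) * err (2 ^ i)) := by gcongr
      _ = 2 * err (2 ^ i) := by
          rw [← mul_assoc, ← mul_pow]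
          norm_num
          ring
      _ = 2 ^ (a + 1) * err (2 ^ (i + 1)) := by
          rw [herr, ← pow_succ' 2 i]
          ring

variable {E : Type*} [NormedAddCommGroup E] [InnerProductSpace ℝ E] [FiniteDimensional ℝ E]
  [MeasurableSpace E] [BorelSpace E]

/-- The scale up to which `bumpDefect` is small enough for the doubling recursions to contract. -/
def doublingScale (F : Measure E) (N : ℕ) : ℝ :=
  N / (2 ^ (Module.finrank ℝ E + 4) * (Module.finrank ℝ E + 1) * spectralLoss F N)

variable {F : Measure E} {N i j : ℕ}

lemma doublingError_eq_two_pow_mul (F : Measure E) (N j : ℕ) :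
    doublingError F N j = 2 ^ (Module.finrank ℝ E + 2) * doublingError F N (2 * j) := by
  have hhalf : (N : ℝ) / ((2 * j : ℕ) : ℝ) = N / j / 2 := by
    push_cast
    rw [div_div, mul_comm]
  rw [doublingError, doublingError, hhalf, div_pow ((N : ℝ) / j) 2]
  generalize (N : ℝ) / j = ρ
  field_simp

variable [IsProbabilityMeasure F] [F.IsNegInvariant]

lemma l1Norm_smoothedPow_add_sub_avg_le (hN : 0 < N) (hi : 0 < i) (hj : 0 < j) :
    l1Norm (fun y => smoothedPow F N (i + j) y - avg F (smoothedPow F N (i + j)) y) ≤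
      l1Norm (fun y => smoothedPow F N j y - avg F (smoothedPow F N j) y) := by
  have hfi := bddInt_smoothedPow (F := F) hN hi
  have hfj := bddInt_smoothedPow (F := F) hN hj
  have hcorr := l1Norm_corr_le hfi.integrable (hfj.sub (hfj.avg (F := F)))
  rw [← l1Norm, l1Norm_smoothedPow hN hi, one_mul] at hcorr
  rwa [← corr_smoothedPow hN hi hj, avg_corr_comm hfi.integrable hfj.toBddMeas,
    ← corr_sub hfi.integrable hfj.toBddMeas hfj.avg.toBddMeas]

variable (hF : ∀ t, 0 ≤ cosTransform F t)
include hF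

lemma doublingScale_le (hN : 0 < N) : doublingScale F N ≤ N / 16 := by
  have hloss := one_le_spectralLoss hF hN
  have hpow : (1 : ℝ) ≤ 2 ^ Module.finrank ℝ E := one_le_pow₀ one_le_two
  refine div_le_div_of_nonneg_left N.cast_nonneg (by norm_num) ?_
  calc (16 : ℝ) = 1 * 2 ^ 4 * (0 + 1) * 1 := by norm_num
    _ ≤ 2 ^ (Module.finrank ℝ E + 4) * (Module.finrank ℝ E + 1) * spectralLoss F N := by
        rw [pow_add]
        gcongr
        exact Nat.cast_nonneg _

lemma two_mul_sq_bumpDefect_le (hN : 0 < N) (hj : 0 < j) (hjJ : j ≤ doublingScale F N) :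
    2 * bumpDefect F N j ^ 2 ≤ (1 / 2) ^ (Module.finrank ℝ E + 3) := by
  have hloss := one_le_spectralLoss hF hN
  have hnonneg : 0 ≤ bumpDefect F N j := by
    rw [← l1Norm_one_sub_bump_mul_smoothedPow hF hN hj]
    exact l1Norm_nonneg _
  have hdim : (0 : ℝ) ≤ Module.finrank ℝ E := Nat.cast_nonneg _
  have hdefect : bumpDefect F N j ≤ (1 / 2) ^ (Module.finrank ℝ E + 4) := by
    calc bumpDefect F N j
        ≤ j / N * (Module.finrank ℝ E / 2 + Real.log (1 / spectralMass F N)) :=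
          integral_one_sub_bump_mul_smoothedPow_le hF hN hj
      _ ≤ doublingScale F N / N * ((Module.finrank ℝ E + 1) * spectralLoss F N) := by
          have hlog := log_one_div_spectralMass_nonneg hF hN
          have hJ : 0 ≤ doublingScale F N := j.cast_nonneg.trans hjJ
          gcongr
          unfold spectralLoss
          nlinarith [mul_nonneg hdim hlog]
      _ = (1 / 2) ^ (Module.finrank ℝ E + 4) := by
          rw [doublingScale, one_div_pow]
          field_simp
  have hpow : (1 / 2 : ℝ) ^ (Module.finrank ℝ E + 4) ≤ 1 := pow_le_one₀ (by norm_num) (by norm_num)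
  calc 2 * bumpDefect F N j ^ 2
      ≤ 2 * ((1 / 2) ^ (Module.finrank ℝ E + 4) * (1 / 2) ^ (Module.finrank ℝ E + 4)) := by
        rw [pow_two]
        gcongr
    _ ≤ 2 * ((1 / 2) ^ (Module.finrank ℝ E + 4) * 1) := by gcongr
    _ = (1 / 2) ^ (Module.finrank ℝ E + 3) := by
        rw [pow_succ]
        ring

lemma four_le_two_pow_mul_doublingError_one (hN : 0 < N) :
    4 ≤ 2 ^ (Module.finrank ℝ E + 3) * doublingError F N 1 := by
  have herr := pow_mul_pow_div_le_doublingError hF hN one_pos hN (c := 1) (a := 0) (b := 1)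
    (by simp) (by norm_num) (by omega)
  have hN' : (N : ℝ) ≠ 0 := by exact_mod_cast hN.ne'
  have hpow : (1 : ℝ) ≤ 2 ^ (Module.finrank ℝ E + 3) := one_le_pow₀ one_le_two
  rw [pow_zero, pow_one, Nat.cast_one, div_one, mul_div_assoc, div_self hN'] at herr
  nlinarith

lemma sqVariation_smoothedPow_two_pow_le (hN : 0 < N) (hi : (2 : ℝ) ^ i ≤ doublingScale F N) :
    sqVariation F (smoothedPow F N (2 ^ i)) ≤
      2 ^ (Module.finrank ℝ E + 3) * doublingError F N (2 ^ i) := by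
  refine le_of_doubling (u := fun j => sqVariation F (smoothedPow F N j)) ?_
    (doublingError_eq_two_pow_mul F N) (fun j hj hjJ => ?_) i
    (by linarith [pow_pos (two_pos : (0 : ℝ) < 2) i])
  · refine le_trans ?_ (four_le_two_pow_mul_doublingError_one hF hN)
    refine (sqVariation_le (bddInt_smoothedPow hN one_pos)).trans_eq ?_
    rw [l1Norm_smoothedPow hN one_pos]
    norm_num
  · have hjN : (j : ℝ) ≤ N := by linarith [doublingScale_le hF hN, N.cast_nonneg (α := ℝ)]
    refine (sqVariation_smoothedPow_two_mul_le hF hN hj (by exact_mod_cast hjN)).trans ?_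
    have hnonneg : 0 ≤ sqVariation F (smoothedPow F N j) := integral_nonneg fun x => sq_nonneg _
    gcongr
    exact two_mul_sq_bumpDefect_le hF hN hj hjJ

lemma sq_l1Norm_iterate_halfDiff_smoothedPow_two_pow_le (hN : 0 < N) {D : ℕ}
    (hD : spectralLoss F N ≤ D) (hD' : (D : ℝ) ≤ 2 * spectralLoss F N)
    (hi : (2 : ℝ) ^ i ≤ doublingScale F N) :
    l1Norm ((halfDiff F)^[D] (smoothedPow F N (2 ^ i))) ^ 2 ≤
      2 ^ (Module.finrank ℝ E + 3) * doublingError F N (2 ^ i) := by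
  refine le_of_doubling (u := fun j => l1Norm ((halfDiff F)^[D] (smoothedPow F N j)) ^ 2) ?_
    (doublingError_eq_two_pow_mul F N) (fun j hj hjJ => ?_) i
    (by linarith [pow_pos (two_pos : (0 : ℝ) < 2) i])
  · refine le_trans ?_ (four_le_two_pow_mul_doublingError_one hF hN)
    have hle := l1Norm_iterate_halfDiff_le (F := F) (bddInt_smoothedPow (F := F) hN one_pos) D
    rw [l1Norm_smoothedPow hN one_pos] at hle
    nlinarith [l1Norm_nonneg ((halfDiff F)^[D] (smoothedPow F N 1))]
  · have hjN : (j : ℝ) ≤ N := by linarith [doublingScale_le hF hN, N.cast_nonneg (α := ℝ)]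
    refine (sq_l1Norm_iterate_halfDiff_smoothedPow_two_mul_le hF hN hj (by exact_mod_cast hjN)
      hD hD').trans ?_
    gcongr
    exact two_mul_sq_bumpDefect_le hF hN hj hjJ

lemma l1Norm_smoothedPow_two_pow_sub_avg_le (hN : 0 < N)
    (hi : (2 : ℝ) ^ i ≤ doublingScale F N) :
    l1Norm (fun y => smoothedPow F N (2 ^ (i + 1)) y - avg F (smoothedPow F N (2 ^ (i + 1))) y) ≤
      4 * spectralLoss F N * (2 ^ (Module.finrank ℝ E + 3) * doublingError F N (2 ^ i)) := by
  have hloss := one_le_spectralLoss hF hN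
  have hpos : 0 < 2 ^ i := by positivity
  set D := ⌈spectralLoss F N⌉₊
  have hD : spectralLoss F N ≤ D := Nat.le_ceil _
  have hD' : (D : ℝ) ≤ 2 * spectralLoss F N := by
    linarith [Nat.ceil_lt_add_one (zero_le_one.trans hloss)]
  have hvar := sqVariation_smoothedPow_two_pow_le hF hN hi
  have hdiff := sq_l1Norm_iterate_halfDiff_smoothedPow_two_pow_le hF hN hD hD' hi
  have hcorr := l1Norm_corr_self_sub_avg_le (F := F) (bddInt_smoothedPow (F := F) hN hpos)
    even_smoothedPow (D := D) (by exact_mod_cast zero_lt_one.trans_le (hloss.trans hD))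
  rw [corr_smoothedPow hN hpos hpos, ← two_mul, ← pow_succ'] at hcorr
  have hM := (sq_nonneg _).trans hdiff
  set M := 2 ^ (Module.finrank ℝ E + 3) * doublingError F N (2 ^ i)
  calc _ ≤ D * sqVariation F (smoothedPow F N (2 ^ i)) +
        2 * l1Norm ((halfDiff F)^[D] (smoothedPow F N (2 ^ i))) ^ 2 := hcorr
    _ ≤ D * M + 2 * M := by gcongr
    _ ≤ 4 * spectralLoss F N * M := by nlinarith

lemma two_le_of_doublingScale_lt_one (hN : 0 < N) (hJ : doublingScale F N < 1) :
    2 ≤ smoothingConst (Module.finrank ℝ E) * spectralLoss F N ^ (Module.finrank ℝ E + 6) / N := by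
  have hloss := one_le_spectralLoss hF hN
  have hdim : (0 : ℝ) ≤ Module.finrank ℝ E := Nat.cast_nonneg _
  have hN' : (0 : ℝ) < N := by exact_mod_cast hN
  rw [doublingScale, div_lt_one (by positivity)] at hJ
  rw [smoothingConst, le_div_iff₀ hN']
  set m := Module.finrank ℝ E
  have hpow : (1 : ℝ) ≤ 2 ^ (m + 4) := one_le_pow₀ one_le_two
  have hbase : (1 : ℝ) ≤ 2 * (m + 1) * 2 ^ (m + 4) := by nlinarith
  calc 2 * (N : ℝ) ≤ 2 * (2 ^ (m + 4) * (m + 1) * spectralLoss F N) := by gcongr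
    _ = 1 * (2 * (m + 1) * 2 ^ (m + 4)) * spectralLoss F N := by ring
    _ ≤ 240 * (m + 1) * 2 ^ (m + 3) * (2 * (m + 1) * 2 ^ (m + 4)) ^ (m + 2) *
        spectralLoss F N ^ (m + 6) := by
      gcongr
      · exact one_le_mul_of_one_le_of_one_le (by linarith) (one_le_pow₀ one_le_two)
      · exact le_self_pow₀ hbase (by omega)
      · exact le_self_pow₀ hloss (by omega)

lemma doublingError_two_pow_le (hN : 0 < N) (hi : doublingScale F N < 2 ^ (i + 1)) :
    4 * spectralLoss F N * (2 ^ (Module.finrank ℝ E + 3) * doublingError F N (2 ^ i)) ≤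
      smoothingConst (Module.finrank ℝ E) * spectralLoss F N ^ (Module.finrank ℝ E + 6) / N := by
  have hloss := one_le_spectralLoss hF hN
  rw [doublingScale, div_lt_iff₀ (by positivity), pow_succ] at hi
  rw [smoothingConst, doublingError]
  push_cast
  set m := Module.finrank ℝ E
  have hratio : (N : ℝ) / 2 ^ i ≤ 2 * (m + 1) * 2 ^ (m + 4) * spectralLoss F N := by
    rw [div_le_iff₀ (by positivity)]
    linarith
  calc 4 * spectralLoss F N * (2 ^ (m + 3) *
        (60 * (m + 1) * spectralLoss F N ^ 3 * ((N : ℝ) / 2 ^ i) ^ (m + 2) / N))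
      ≤ 4 * spectralLoss F N * (2 ^ (m + 3) * (60 * (m + 1) * spectralLoss F N ^ 3 *
          (2 * (m + 1) * 2 ^ (m + 4) * spectralLoss F N) ^ (m + 2) / N)) := by gcongr
    _ = _ := by
      rw [mul_pow _ (spectralLoss F N)]
      ring

lemma l1Norm_smoothedPow_self_sub_avg_le (hN : 0 < N) :
    l1Norm (fun y => smoothedPow F N N y - avg F (smoothedPow F N N) y) ≤
      smoothingConst (Module.finrank ℝ E) * spectralLoss F N ^ (Module.finrank ℝ E + 6) / N := by
  rcases lt_or_ge (doublingScale F N) 1 with hJ | hJ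
  · exact (l1Norm_smoothedPow_self_sub_avg_le_two hN).trans
      (two_le_of_doublingScale_lt_one hF hN hJ)
  · obtain ⟨i, hi, hi'⟩ := exists_nat_pow_near hJ one_lt_two
    have hlt : 2 ^ (i + 1) < N := by
      have hN' : (0 : ℝ) < N := by exact_mod_cast hN
      have hle := hi.trans (doublingScale_le hF hN)
      have : (2 : ℝ) ^ (i + 1) < N := by
        rw [pow_succ]
        linarith
      exact_mod_cast this
    have htail := l1Norm_smoothedPow_add_sub_avg_le (F := F) hN (Nat.sub_pos_of_lt hlt)
      (pow_pos two_pos (i + 1))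
    rw [Nat.sub_add_cancel hlt.le] at htail
    exact htail.trans ((l1Norm_smoothedPow_two_pow_sub_avg_le hF hN hi).trans
      (doublingError_two_pow_le hF hN hi'))

end Doubling

/-! ## Linear images -/

section AvgCorr

variable {E : Type*} [AddCommGroup E] [MeasureSpace E] [MeasurableAdd₂ E] [MeasurableNeg E]
  [SFinite (volume : Measure E)] [(volume : Measure E).IsAddLeftInvariant] {w g : E → ℝ}
  {F : Measure E} [IsProbabilityMeasure F] [F.IsNegInvariant]

lemma corr_avg_left (hw : BddInt w) (hg : BddMeas g) :
    corr (avg F w) volume g = avg F (corr w volume g) := by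
  ext y
  obtain ⟨M, hM⟩ := hg.bounded
  have hprod : Integrable (fun p : E × E => w (p.2 + p.1) * g (y + p.2)) (F.prod volume) := by
    have hw' := integrable_corr_prod (integrable_const (μ := F) (1 : ℝ)) hw
    simp only [one_mul] at hw'
    exact hw'.mul_bdd (hg.comp (measurable_snd.const_add y)).measurable.aestronglyMeasurable
      (.of_forall fun _ => hM _)
  calc ∫ x, (∫ z, w (x + z) ∂F) * g (y + x)
      = ∫ x, ∫ z, w (x + z) * g (y + x) ∂F := by simp only [integral_mul_const]
    _ = ∫ z, (∫ x, w (x + z) * g (y + x)) ∂F := (integral_integral_swap hprod).symm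
    _ = ∫ z, corr w volume g (y + -z) ∂F := by
        refine integral_congr_ae (.of_forall fun z => ?_)
        simp only [corr]
        rw [← integral_add_right_eq_self (fun x => w x * g (y + -z + x)) z]
        refine integral_congr_ae (.of_forall fun x => ?_)
        simp only [show y + -z + (x + z) = y + x by abel]
    _ = avg F (corr w volume g) y := integral_neg_eq_self (fun z => corr w volume g (y + z)) F

end AvgCorr

section Map

variable {E E' : Type*} [NormedAddCommGroup E] [InnerProductSpace ℝ E] [MeasurableSpace E]
  [BorelSpace E] [NormedAddCommGroup E'] [InnerProductSpace ℝ E'] [MeasurableSpace E']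
  [BorelSpace E'] {F : Measure E} {h : E' → ℝ} (L : E →L[ℝ] E')

instance isProbabilityMeasure_map_clm [IsProbabilityMeasure F] : IsProbabilityMeasure (F.map L) :=
  Measure.isProbabilityMeasure_map L.measurable.aemeasurable

instance isNegInvariant_map_clm [F.IsNegInvariant] : (F.map L).IsNegInvariant := by
  refine ⟨?_⟩
  rw [Measure.neg, Measure.map_map measurable_neg L.measurable]
  conv_rhs => rw [← F.neg_eq_self, Measure.neg, Measure.map_map L.measurable measurable_neg]
  congr 1
  ext x
  simp

lemma avg_map (hh : Measurable h) (x : E) :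
    avg (F.map L) h (L x) = avg F (fun z => h (L z)) x := by
  simp only [avg, map_add]
  exact integral_map L.measurable.aemeasurable
    (hh.comp (measurable_const_add (L x))).aestronglyMeasurable

variable [FiniteDimensional ℝ E] [FiniteDimensional ℝ E']

lemma cosTransform_map (t : E') :
    cosTransform (F.map L) t = cosTransform F (ContinuousLinearMap.adjoint L t) := by
  rw [cosTransform, integral_map L.measurable.aemeasurable
    (bddMeas_cos_inner t).measurable.aestronglyMeasurable]
  simp only [cosTransform, ContinuousLinearMap.adjoint_inner_left]

lemma convPow_map [IsProbabilityMeasure F] (n : ℕ) :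
    convPow (F.map L) n = (convPow F n).map L := by
  have hadd : Measurable fun p : E × E => p.1 + p.2 := measurable_fst.add measurable_snd
  have hadd' : Measurable fun p : E' × E' => p.1 + p.2 := measurable_fst.add measurable_snd
  induction n with
  | zero => rw [convPow, convPow, Measure.map_dirac' L.measurable, map_zero]
  | succ n ih =>
    rw [convPow, ih, mconv, Measure.map_prod_map _ _ L.measurable L.measurable,
      Measure.map_map hadd' (L.measurable.prodMap L.measurable), convPow, mconv,
      Measure.map_map L.measurable hadd]
    congr 1
    ext p
    simp

lemma avg_convPow_map [IsProbabilityMeasure F] (hh : Measurable h) (n : ℕ) (x : E) :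
    avg (convPow (F.map L) n) h (L x) = avg (convPow F n) (fun z => h (L z)) x := by
  rw [convPow_map, avg_map L hh]

end Map

/-! ## Comparison with the marginals -/

section SpectralCore

variable {E : Type*} [NormedAddCommGroup E] [InnerProductSpace ℝ E] [FiniteDimensional ℝ E]
  [MeasurableSpace E] [BorelSpace E] {F : Measure E} {N : ℕ} {t : E}

/-- The frequencies that the `N`-th power of the cosine transform of `F` does not damp by more than
half of its Gaussian mean. -/
def spectralCore (F : Measure E) (N : ℕ) : Set E :=
  {t | spectralMass F N / 2 ≤ cosTransform F t ^ N}

variable [IsProbabilityMeasure F]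

lemma measurableSet_spectralCore : MeasurableSet (spectralCore F N) :=
  measurableSet_le measurable_const (measurable_cosTransform.pow_const N)

lemma half_spectralMass_le_integral (hF : ∀ t, 0 ≤ cosTransform F t) :
    spectralMass F N / 2 ≤ ∫ t, (spectralCore F N).indicator (gaussKernel 1) t := by
  have hk : Integrable (gaussKernel 1 : E → ℝ) := (bddInt_gaussKernel one_pos).integrable
  have hcore := hk.indicator (measurableSet_spectralCore (F := F) (N := N))
  have hmass : spectralMass F N ≤
      ∫ t, ((spectralCore F N).indicator (gaussKernel 1) t +
        spectralMass F N / 2 * gaussKernel 1 t) := by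
    refine integral_mono (integrable_cosTransform_pow_mul_gaussKernel N)
      (hcore.add (hk.const_mul _)) fun t => ?_
    have hk0 := gaussKernel_pos one_pos t
    have hmass0 : 0 ≤ spectralMass F N :=
      integral_nonneg fun t => mul_nonneg (pow_nonneg (hF t) N) (gaussKernel_pos one_pos t).le
    by_cases ht : t ∈ spectralCore F N
    · rw [Set.indicator_of_mem ht]
      have hle : cosTransform F t ^ N ≤ 1 :=
        pow_le_one₀ (hF t) ((le_abs_self _).trans (abs_cosTransform_le_one t))
      nlinarith
    · rw [Set.indicator_of_notMem ht, zero_add]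
      exact mul_le_mul_of_nonneg_right (not_le.1 ht).le hk0.le
  rw [integral_add hcore (hk.const_mul _), integral_const_mul, integral_gaussKernel one_pos]
    at hmass
  linarith

lemma one_sub_cosTransform_le_of_mem_spectralCore [F.IsNegInvariant]
    (hF : ∀ t, 0 ≤ cosTransform F t) (hN : 0 < N) (ht : t ∈ spectralCore F N) :
    1 - cosTransform F t ≤ Real.log (2 / spectralMass F N) / N := by
  have hmass := spectralMass_pos (F := F) hN
  have hN' : (0 : ℝ) < N := by exact_mod_cast hN
  have hpos : 0 < cosTransform F t := by
    refine (hF t).lt_of_ne' fun hzero => ?_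
    rw [spectralCore, Set.mem_ofPred_eq, hzero, zero_pow hN.ne'] at ht
    linarith
  have hlog : -Real.log (2 / spectralMass F N) ≤ N * Real.log (cosTransform F t) := by
    rw [← Real.log_inv, inv_div, ← Real.log_pow]
    exact Real.log_le_log (by positivity) ht
  rw [le_div_iff₀ hN']
  nlinarith [Real.log_le_sub_one_of_pos hpos]

end SpectralCore

section Cosine

variable {ι : Type*}

lemma abs_sin_sum_le (s : Finset ι) (x : ι → ℝ) :
    |Real.sin (∑ i ∈ s, x i)| ≤ ∑ i ∈ s, |Real.sin (x i)| := by
  classical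
  induction s using Finset.induction_on with
  | empty => simp
  | insert a s ha ih =>
    rw [Finset.sum_insert ha, Finset.sum_insert ha, Real.sin_add]
    refine (abs_add_le _ _).trans ?_
    rw [abs_mul, abs_mul]
    refine add_le_add (mul_le_of_le_one_right (abs_nonneg _) (Real.abs_cos_le_one _)) ?_
    exact (mul_le_of_le_one_left (abs_nonneg _) (Real.abs_cos_le_one _)).trans ih

lemma one_sub_cos_eq (x : ℝ) : 1 - Real.cos x = 2 * Real.sin (x / 2) ^ 2 := by
  rw [Real.sin_sq_eq_half_sub, mul_div_cancel₀ _ two_ne_zero]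
  ring

lemma one_sub_cos_sum_le (s : Finset ι) (x : ι → ℝ) :
    1 - Real.cos (∑ i ∈ s, x i) ≤ s.card * ∑ i ∈ s, (1 - Real.cos (x i)) := by
  simp only [one_sub_cos_eq, Finset.sum_div, ← Finset.mul_sum]
  rw [mul_left_comm]
  refine mul_le_mul_of_nonneg_left ?_ zero_le_two
  calc Real.sin (∑ i ∈ s, x i / 2) ^ 2 ≤ (∑ i ∈ s, |Real.sin (x i / 2)|) ^ 2 := by
        rw [← sq_abs]
        exact pow_le_pow_left₀ (abs_nonneg _) (abs_sin_sum_le s _) 2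
    _ ≤ s.card * ∑ i ∈ s, |Real.sin (x i / 2)| ^ 2 := sq_sum_le_card_mul_sum_sq
    _ = s.card * ∑ i ∈ s, Real.sin (x i / 2) ^ 2 := by simp only [sq_abs]

end Cosine

section Marginal

variable {ι : Type*} {F : Measure (EuclideanSpace ℝ ι)}

/-- The distribution of the `i`-th coordinate under `F`. -/
abbrev marginal (F : Measure (EuclideanSpace ℝ ι)) (i : ι) : Measure ℝ :=
  F.map (EuclideanSpace.proj i : EuclideanSpace ℝ ι →L[ℝ] ℝ)

lemma cosTransform_marginal (F : Measure (EuclideanSpace ℝ ι)) (i : ι) (s : ℝ) :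
    cosTransform (marginal F i) s = ∫ x, Real.cos (s * x i) ∂F := by
  have hproj : Measurable (EuclideanSpace.proj i : EuclideanSpace ℝ ι →L[ℝ] ℝ) :=
    (measurable_pi_apply i).comp (WithLp.measurable_ofLp 2 _)
  rw [cosTransform, integral_map hproj.aemeasurable
    (bddMeas_cos_inner s).measurable.aestronglyMeasurable]
  simp [mul_comm]

variable [Fintype ι] {N : ℕ}

lemma cosTransform_marginal_nonneg (hF : ∀ t, 0 ≤ cosTransform F t) (i : ι) (s : ℝ) :
    0 ≤ cosTransform (marginal F i) s := by
  rw [cosTransform_map]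
  exact hF _

lemma integral_prod_apply (f : ι → ℝ → ℝ) :
    ∫ t : EuclideanSpace ℝ ι, ∏ i, f i (t i) = ∏ i, ∫ s, f i s := by
  rw [← integral_fintype_prod_volume_eq_prod]
  exact (EuclideanSpace.volume_preserving_symm_measurableEquiv_toLp ι).integral_comp'
    (fun x : ι → ℝ => ∏ i, f i (x i))

lemma gaussKernel_one_eq_prod (t : EuclideanSpace ℝ ι) :
    gaussKernel 1 t = ∏ i, gaussKernel 1 (t i) := by
  simp only [gaussKernel, gaussConst]
  rw [Finset.prod_mul_distrib, ← Real.exp_sum, EuclideanSpace.real_norm_sq_eq,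
    finrank_euclideanSpace, Finset.prod_const, Finset.card_univ,
    ← Real.rpow_mul_natCast (by positivity)]
  congr 1
  · congr 1
    rw [show Module.finrank ℝ ℝ = 1 from Module.finrank_self ℝ]
    push_cast
    ring
  · simp only [Real.norm_eq_abs, sq_abs, ← Finset.sum_div, Finset.sum_neg_distrib]

variable [IsProbabilityMeasure F]

lemma one_sub_cosTransform_le_sum (t : EuclideanSpace ℝ ι) :
    1 - cosTransform F t ≤ Fintype.card ι * ∑ i, (1 - cosTransform (marginal F i) (t i)) := by
  have hcos : ∀ i, Integrable (fun x : EuclideanSpace ℝ ι => Real.cos (t i * x i)) F := fun i =>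
    Integrable.of_bound (by fun_prop) 1 (.of_forall fun _ => Real.abs_cos_le_one _)
  have hcos' : Integrable (fun x => Real.cos ⟪t, x⟫) F := (bddMeas_cos_inner t).integrable
  have hsub : ∀ i, Integrable (fun x : EuclideanSpace ℝ ι => 1 - Real.cos (t i * x i)) F := fun i =>
    (integrable_const _).sub (hcos i)
  calc 1 - cosTransform F t = ∫ x, (1 - Real.cos ⟪t, x⟫) ∂F := by
        rw [integral_sub (integrable_const _) hcos']
        simp [cosTransform]
    _ ≤ ∫ x, Fintype.card ι * ∑ i, (1 - Real.cos (t i * x i)) ∂F := by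
        refine integral_mono ((integrable_const _).sub hcos')
          ((integrable_finsetSum _ fun i _ => hsub i).const_mul _) fun x => ?_
        simpa [PiLp.inner_apply, mul_comm (t _)] using
          one_sub_cos_sum_le Finset.univ fun i => t i * x i
    _ = Fintype.card ι * ∑ i, (1 - cosTransform (marginal F i) (t i)) := by
        rw [integral_const_mul, integral_finsetSum _ fun i _ => hsub i]
        congr 2
        ext i
        rw [integral_sub (integrable_const _) (hcos i), cosTransform_marginal]
        simp

/-- The total loss `∑ i, log (2 / spectralMass (marginal F i) N)` of the marginals of `F`. -/
def marginalLoss (F : Measure (EuclideanSpace ℝ ι)) (N : ℕ) : ℝ :=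
  ∑ i, Real.log (2 / spectralMass (marginal F i) N)

variable [F.IsNegInvariant]

lemma marginalLoss_nonneg (hF : ∀ t, 0 ≤ cosTransform F t) (hN : 0 < N) :
    0 ≤ marginalLoss F N := by
  refine Finset.sum_nonneg fun i _ => Real.log_nonneg ?_
  rw [le_div_iff₀ (spectralMass_pos hN)]
  linarith [spectralMass_le_one (N := N) (cosTransform_marginal_nonneg hF i)]

lemma one_sub_cosTransform_le_marginalLoss (hF : ∀ t, 0 ≤ cosTransform F t) (hN : 0 < N)
    {t : EuclideanSpace ℝ ι} (ht : ∀ i, t i ∈ spectralCore (marginal F i) N) :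
    1 - cosTransform F t ≤ Fintype.card ι / N * marginalLoss F N := by
  have hcoord : ∀ i, 1 - cosTransform (marginal F i) (t i) ≤
      Real.log (2 / spectralMass (marginal F i) N) / N := fun i =>
    one_sub_cosTransform_le_of_mem_spectralCore (cosTransform_marginal_nonneg hF i) hN (ht i)
  calc 1 - cosTransform F t
      ≤ Fintype.card ι * ∑ i, (1 - cosTransform (marginal F i) (t i)) :=
        one_sub_cosTransform_le_sum t
    _ ≤ Fintype.card ι * ∑ i, Real.log (2 / spectralMass (marginal F i) N) / N := by
        gcongr with i
        exact hcoord i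
    _ = Fintype.card ι / N * marginalLoss F N := by
        rw [← Finset.sum_div, marginalLoss]
        ring

lemma pow_mul_prod_le_spectralMass (hF : ∀ t, 0 ≤ cosTransform F t) (hN : 0 < N)
    (hsmall : Fintype.card ι / N * marginalLoss F N ≤ 1) :
    (1 - Fintype.card ι / N * marginalLoss F N) ^ N * ∏ i, (spectralMass (marginal F i) N / 2) ≤
      spectralMass F N := by
  set x := Fintype.card ι / N * marginalLoss F N
  let g : ι → ℝ → ℝ := fun i => (spectralCore (marginal F i) N).indicator (gaussKernel 1)
  have hg : ∀ i s, 0 ≤ g i s := fun i s =>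
    Set.indicator_nonneg (fun s _ => (gaussKernel_pos one_pos s).le) s
  have hpow : 0 ≤ (1 - x) ^ N := pow_nonneg (sub_nonneg.2 hsmall) N
  have hpoint : ∀ t : EuclideanSpace ℝ ι,
      (1 - x) ^ N * ∏ i, g i (t i) ≤ cosTransform F t ^ N * gaussKernel 1 t := fun t => by
    by_cases ht : ∀ i, t i ∈ spectralCore (marginal F i) N
    · rw [gaussKernel_one_eq_prod, Finset.prod_congr rfl fun i _ => Set.indicator_of_mem (ht i) _]
      refine mul_le_mul_of_nonneg_right (pow_le_pow_left₀ (sub_nonneg.2 hsmall) ?_ N)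
        (Finset.prod_nonneg fun i _ => (gaussKernel_pos one_pos _).le)
      linarith [one_sub_cosTransform_le_marginalLoss hF hN ht]
    · obtain ⟨i, hi⟩ := not_forall.1 ht
      rw [Finset.prod_eq_zero (Finset.mem_univ i) (Set.indicator_of_notMem hi _), mul_zero]
      exact mul_nonneg (pow_nonneg (hF t) N) (gaussKernel_pos one_pos t).le
  calc (1 - x) ^ N * ∏ i, (spectralMass (marginal F i) N / 2)
      ≤ (1 - x) ^ N * ∏ i, ∫ s, g i s := by
        refine mul_le_mul_of_nonneg_left (Finset.prod_le_prod (fun i _ => ?_) fun i _ => ?_) hpow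
        · exact div_nonneg (spectralMass_pos hN).le zero_le_two
        · exact half_spectralMass_le_integral (cosTransform_marginal_nonneg hF i)
    _ = ∫ t : EuclideanSpace ℝ ι, (1 - x) ^ N * ∏ i, g i (t i) := by
        rw [integral_const_mul, integral_prod_apply]
    _ ≤ spectralMass F N := integral_mono_of_nonneg
        (.of_forall fun t => mul_nonneg hpow (Finset.prod_nonneg fun i _ => hg i _))
        (integrable_cosTransform_pow_mul_gaussKernel N) (.of_forall hpoint)

lemma exp_neg_two_mul_le_one_sub {x : ℝ} (h0 : 0 ≤ x) (h1 : x ≤ 1 / 2) :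
    Real.exp (-(2 * x)) ≤ 1 - x := by
  rw [Real.exp_neg]
  refine inv_le_of_inv_le₀ (by linarith) (le_trans ?_ (Real.add_one_le_exp (2 * x)))
  rw [inv_le_iff_one_le_mul₀ (by linarith)]
  nlinarith

lemma log_one_div_spectralMass_le (hF : ∀ t, 0 ≤ cosTransform F t) (hN : 0 < N)
    (hsmall : Fintype.card ι / N * marginalLoss F N ≤ 1 / 2) :
    Real.log (1 / spectralMass F N) ≤ (2 * Fintype.card ι + 1) * marginalLoss F N := by
  set x := Fintype.card ι / N * marginalLoss F N with hx
  have hx0 : 0 ≤ x := mul_nonneg (by positivity) (marginalLoss_nonneg hF hN)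
  have hN' : (N : ℝ) ≠ 0 := by exact_mod_cast hN.ne'
  have hmass : ∀ i, 0 < spectralMass (marginal F i) N / 2 := fun i =>
    half_pos (spectralMass_pos hN)
  have hprod : 0 < ∏ i, (spectralMass (marginal F i) N / 2) := Finset.prod_pos fun i _ => hmass i
  have hlower : Real.exp (-(2 * x)) ^ N * ∏ i, (spectralMass (marginal F i) N / 2) ≤
      spectralMass F N := by
    refine le_trans ?_ (pow_mul_prod_le_spectralMass hF hN (by linarith))
    gcongr
    exact exp_neg_two_mul_le_one_sub hx0 hsmall
  have hlog := Real.log_le_log (by positivity) hlower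
  have hsum : ∑ i, Real.log (spectralMass (marginal F i) N / 2) = -marginalLoss F N := by
    rw [marginalLoss, ← Finset.sum_neg_distrib]
    exact Finset.sum_congr rfl fun i _ => by rw [← Real.log_inv, inv_div]
  rw [Real.log_mul (by positivity) hprod.ne', Real.log_pow, Real.log_exp,
    Real.log_prod fun i _ => (hmass i).ne', hsum] at hlog
  have hNx : N * x = Fintype.card ι * marginalLoss F N := by
    rw [hx]
    field_simp
  rw [one_div, Real.log_inv]
  linear_combination hlog + 2 * hNx

end Marginal

section MarginalBound

/-- The constant in the smoothing bound in terms of the marginals in dimension `m`. -/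
def marginalConst (m : ℕ) : ℝ :=
  smoothingConst m * (1 + 2 * m * (2 * m + 1)) ^ (m + 6) + 8 * m ^ 2

lemma marginalConst_pos (m : ℕ) : 0 < marginalConst m := by
  have := smoothingConst_pos m
  unfold marginalConst
  positivity

variable {ι : Type*} [Fintype ι] {F : Measure (EuclideanSpace ℝ ι)} {N : ℕ} {q : ι → ℕ}

lemma one_le_prod_two_pow (q : ι → ℕ) : (1 : ℝ) ≤ ∏ i, 2 ^ q i := by
  rw [Finset.prod_pow_eq_pow_sum]
  exact one_le_pow₀ one_le_two

lemma marginalLoss_le (hq : ∀ i, (1 / 2 : ℝ) ^ 2 ^ q i ≤ spectralMass (marginal F i) N) :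
    marginalLoss F N ≤ Fintype.card ι * (2 * ∏ i, 2 ^ q i) := by
  have hbound : ∀ i, Real.log (2 / spectralMass (marginal F i) N) ≤ 2 * ∏ i, (2 : ℝ) ^ q i := by
    intro i
    have hpow : (0 : ℝ) < (1 / 2) ^ 2 ^ q i := by positivity
    have hprod : (2 : ℝ) ^ q i ≤ ∏ j, 2 ^ q j := by
      rw [Finset.prod_pow_eq_pow_sum]
      exact pow_le_pow_right₀ one_le_two
        (Finset.single_le_sum (fun j _ => Nat.zero_le (q j)) (Finset.mem_univ i))
    calc Real.log (2 / spectralMass (marginal F i) N)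
        ≤ Real.log (2 / (1 / 2) ^ 2 ^ q i) :=
          Real.log_le_log (div_pos two_pos (hpow.trans_le (hq i)))
            (div_le_div_of_nonneg_left zero_le_two hpow (hq i))
      _ = (1 + 2 ^ q i) * Real.log 2 := by
          rw [Real.log_div two_ne_zero hpow.ne', Real.log_pow, one_div, Real.log_inv]
          push_cast
          ring
      _ ≤ (1 + 2 ^ q i) * 1 := by
          gcongr
          linarith [Real.log_two_lt_d9]
      _ ≤ 2 * ∏ i, 2 ^ q i := by linarith [one_le_prod_two_pow q]
  calc marginalLoss F N ≤ ∑ _i : ι, 2 * ∏ i, (2 : ℝ) ^ q i := Finset.sum_le_sum fun i _ => hbound i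
    _ = Fintype.card ι * (2 * ∏ i, 2 ^ q i) := by simp

variable [IsProbabilityMeasure F] [F.IsNegInvariant]

lemma l1Norm_smoothedPow_self_sub_avg_le_of_marginal (hF : ∀ t, 0 ≤ cosTransform F t) (hN : 0 < N)
    (hq : ∀ i, (1 / 2 : ℝ) ^ 2 ^ q i ≤ spectralMass (marginal F i) N) :
    l1Norm (fun y => smoothedPow F N N y - avg F (smoothedPow F N N) y) ≤
      marginalConst (Fintype.card ι) * (∏ i, (2 : ℝ) ^ q i) ^ (Fintype.card ι + 6) / N := by
  have hN' : (0 : ℝ) < N := by exact_mod_cast hN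
  have hQ := one_le_prod_two_pow q
  have hloss := marginalLoss_le hq
  have hC := smoothingConst_pos (Fintype.card ι)
  have hm : (0 : ℝ) ≤ Fintype.card ι := Nat.cast_nonneg _
  rw [marginalConst]
  by_cases hsmall : Fintype.card ι / N * marginalLoss F N ≤ 1 / 2
  · have hlog := log_one_div_spectralMass_le hF hN hsmall
    have hmass := l1Norm_smoothedPow_self_sub_avg_le hF hN
    have hone := one_le_spectralLoss hF hN
    rw [finrank_euclideanSpace] at hmass
    set m := Fintype.card ι
    set Q := ∏ i, (2 : ℝ) ^ q i
    have hspectral : spectralLoss F N ≤ (1 + 2 * m * (2 * m + 1)) * Q := by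
      have : (2 * (m : ℝ) + 1) * marginalLoss F N ≤ (2 * m + 1) * (m * (2 * Q)) := by gcongr
      rw [spectralLoss]
      linarith
    refine hmass.trans (div_le_div_of_nonneg_right ?_ hN'.le)
    calc smoothingConst m * spectralLoss F N ^ (m + 6)
        ≤ smoothingConst m * ((1 + 2 * m * (2 * m + 1)) * Q) ^ (m + 6) := by gcongr
      _ = smoothingConst m * (1 + 2 * m * (2 * m + 1)) ^ (m + 6) * Q ^ (m + 6) := by
          rw [mul_pow _ Q, ← mul_assoc]
      _ ≤ _ := by
          gcongr
          exact le_add_of_nonneg_right (by positivity)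
  · refine (l1Norm_smoothedPow_self_sub_avg_le_two hN).trans ?_
    set m := Fintype.card ι
    set Q := ∏ i, (2 : ℝ) ^ q i
    rw [not_le, div_mul_eq_mul_div, lt_div_iff₀ hN'] at hsmall
    have hlarge : (m : ℝ) * marginalLoss F N ≤ m * (m * (2 * Q)) := by gcongr
    rw [le_div_iff₀ hN']
    calc 2 * (N : ℝ) ≤ 8 * m ^ 2 * Q := by nlinarith
      _ ≤ _ := by
          gcongr
          · exact le_add_of_nonneg_left (by positivity)
          · exact le_self_pow₀ hQ (by omega)

end MarginalBound

/-! ## Gaussian smoothing of interval indicators -/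

/-- Smoothing of a function on the line by the centred Gaussian distribution of variance `a`
(the identity for `a ≤ 0`). -/
def gaussSmooth (a : ℝ) (g : ℝ → ℝ) : ℝ → ℝ := avg (ProbabilityTheory.gaussianReal 0 a.toNNReal) g

/-- The unnormalized Gaussian profile of variance `a` on the line. -/
def bell (a x : ℝ) : ℝ := Real.exp (-x ^ 2 / (2 * a))

/-- The indicator function of the interval `[l, r]`. -/
def intervalInd (l r : ℝ) : ℝ → ℝ := (Set.Icc l r).indicator 1

section GaussSmooth

variable {a b s : ℝ} {g : ℝ → ℝ}

lemma gaussSmooth_zero (hg : BddMeas g) : gaussSmooth 0 g = g := by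
  rw [gaussSmooth, Real.toNNReal_zero, ProbabilityTheory.gaussianReal_zero_var]
  exact avg_convPow_zero volume hg

lemma gaussSmooth_gaussSmooth (ha : 0 ≤ a) (hb : 0 ≤ b) (hg : BddMeas g) :
    gaussSmooth a (gaussSmooth b g) = gaussSmooth (a + b) g := by
  rw [gaussSmooth, gaussSmooth, gaussSmooth, ← avg_mconv hg, Real.toNNReal_add ha hb,
    ← add_zero (0 : ℝ), ← ProbabilityTheory.gaussianReal_conv_gaussianReal, add_zero]
  rfl

lemma BddMeas.gaussSmooth (hg : BddMeas g) (a : ℝ) : BddMeas (gaussSmooth a g) := hg.avg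

lemma gaussKernel_one_eq_gaussianPDFReal :
    (gaussKernel 1 : ℝ → ℝ) = ProbabilityTheory.gaussianPDFReal 0 1 := by
  ext x
  rw [gaussKernel, gaussConst, ProbabilityTheory.gaussianPDFReal,
    show Module.finrank ℝ ℝ = 1 from Module.finrank_self ℝ, Real.sqrt_eq_rpow,
    ← Real.rpow_neg (by positivity), Real.norm_eq_abs, sq_abs, sub_zero]
  norm_num

lemma gaussSmooth_apply (ha : 0 ≤ a) (hg : Measurable g) (x : ℝ) :
    gaussSmooth a g x = ∫ z, gaussKernel 1 z * g (x + √a * z) := by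
  have hscale : ProbabilityTheory.gaussianReal 0 a.toNNReal =
      (ProbabilityTheory.gaussianReal 0 1).map fun z => √a * z := by
    rw [ProbabilityTheory.gaussianReal_map_const_mul, mul_zero]
    congr 1
    ext
    simp [Real.sq_sqrt ha, ha]
  have hmeas : Measurable fun z => g (x + z) := hg.comp (measurable_const_add x)
  rw [gaussSmooth, avg, hscale,
    integral_map (measurable_const_mul _).aemeasurable hmeas.aestronglyMeasurable,
    ProbabilityTheory.integral_gaussianReal_eq_integral_smul one_ne_zero,
    gaussKernel_one_eq_gaussianPDFReal]
  rfl

end GaussSmooth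

section Bell

variable {a b : ℝ}

lemma bell_nonneg (a x : ℝ) : 0 ≤ bell a x := (Real.exp_pos _).le

lemma bell_le_one (ha : 0 ≤ a) (x : ℝ) : bell a x ≤ 1 :=
  Real.exp_le_one_iff.2 <|
    div_nonpos_of_nonpos_of_nonneg (neg_nonpos.2 (sq_nonneg x)) (by positivity)

lemma bddMeas_bell (ha : 0 ≤ a) : BddMeas (bell a) where
  measurable := by unfold bell; fun_prop
  bounded := ⟨1, fun x => (abs_of_nonneg (bell_nonneg a x)).trans_le (bell_le_one ha x)⟩

lemma bell_le_bell (ha : 0 < a) (hab : a ≤ b) (x : ℝ) : bell a x ≤ bell b x := by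
  rw [bell, bell, neg_div, neg_div]
  gcongr

end Bell

section IntervalInd

variable {s l r x z : ℝ}

lemma intervalInd_nonneg (l r x : ℝ) : 0 ≤ intervalInd l r x :=
  Set.indicator_nonneg (fun _ _ => zero_le_one) x

lemma intervalInd_le_one (l r x : ℝ) : intervalInd l r x ≤ 1 :=
  Set.indicator_le_self' (fun _ _ => zero_le_one) x

lemma abs_intervalInd_le_one (l r x : ℝ) : |intervalInd l r x| ≤ 1 :=
  (abs_of_nonneg (intervalInd_nonneg l r x)).trans_le (intervalInd_le_one l r x)

lemma bddMeas_intervalInd (l r : ℝ) : BddMeas (intervalInd l r) :=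
  ⟨measurable_one.indicator measurableSet_Icc, 1, abs_intervalInd_le_one l r⟩

lemma gaussSmooth_intervalInd_mem_Icc (s l r x : ℝ) :
    gaussSmooth s (intervalInd l r) x ∈ Set.Icc (0 : ℝ) 1 :=
  ⟨integral_nonneg fun _ => intervalInd_nonneg l r _,
    (le_abs_self _).trans (avg_abs_le (bddMeas_intervalInd l r) (abs_intervalInd_le_one l r) x)⟩

/-- The set of the jumps `z` from the origin that reach or pass the point `u`. -/
def jumpSet (u : ℝ) : Set ℝ := {z | u ^ 2 ≤ u * z}

lemma measurableSet_jumpSet (u : ℝ) : MeasurableSet (jumpSet u) :=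
  measurableSet_le measurable_const (measurable_const_mul u)

lemma gaussianReal_jumpSet_le (hs : 0 < s) (u : ℝ) :
    (ProbabilityTheory.gaussianReal 0 s.toNNReal).real (jumpSet u) ≤ bell s u := by
  have hsub : ProbabilityTheory.HasSubgaussianMGF id s.toNNReal
      (ProbabilityTheory.gaussianReal 0 s.toNNReal) :=
    ⟨fun t => ProbabilityTheory.integrable_exp_mul_gaussianReal t, fun t => by
      simp [ProbabilityTheory.mgf_id_gaussianReal]⟩
  have htail : (ProbabilityTheory.gaussianReal 0 s.toNNReal).real (jumpSet u) ≤
      Real.exp (-(u ^ 2) ^ 2 / (2 * (u ^ 2 * (s.toNNReal : ℝ)))) :=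
    (hsub.const_mul u).measure_ge_le (sq_nonneg u)
  refine htail.trans_eq (congrArg Real.exp ?_)
  rw [Real.coe_toNNReal _ hs.le]
  rcases eq_or_ne u 0 with rfl | hu
  · simp
  · field_simp

lemma abs_intervalInd_sub_le (l r x z : ℝ) : |intervalInd l r x - intervalInd l r (x + z)| ≤
    (jumpSet (l - x)).indicator 1 z + (jumpSet (r - x)).indicator 1 z := by
  have hnonneg (u : ℝ) : (0 : ℝ) ≤ (jumpSet u).indicator 1 z :=
    Set.indicator_nonneg (fun _ _ => zero_le_one) z
  by_cases hjump : z ∈ jumpSet (l - x) ∨ z ∈ jumpSet (r - x)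
  · have hdiff : |intervalInd l r x - intervalInd l r (x + z)| ≤ 1 :=
      abs_sub_le_of_nonneg_of_le (intervalInd_nonneg l r _) (intervalInd_le_one l r _)
        (intervalInd_nonneg l r _) (intervalInd_le_one l r _)
    rcases hjump with h | h
    · rw [Set.indicator_of_mem h]
      exact hdiff.trans (le_add_of_nonneg_right (hnonneg _))
    · rw [Set.indicator_of_mem h (1 : ℝ → ℝ)]
      exact hdiff.trans (le_add_of_nonneg_left (hnonneg _))
  · obtain ⟨hl, hr⟩ := not_or.1 hjump
    have hiff : x ∈ Set.Icc l r ↔ x + z ∈ Set.Icc l r := by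
      simp only [jumpSet, Set.mem_ofPred_eq, not_le] at hl hr
      constructor <;> rintro ⟨h1, h2⟩ <;> constructor <;> by_contra! h <;> nlinarith
    have heq : intervalInd l r x = intervalInd l r (x + z) := by
      by_cases hx : x ∈ Set.Icc l r
      · simp only [intervalInd, Set.indicator_of_mem hx, Set.indicator_of_mem (hiff.1 hx),
          Pi.one_apply]
      · simp only [intervalInd, Set.indicator_of_notMem hx,
          Set.indicator_of_notMem (mt hiff.2 hx)]
    rw [heq, sub_self, abs_zero]
    exact add_nonneg (hnonneg _) (hnonneg _)

lemma abs_intervalInd_sub_gaussSmooth_le (hs : 0 < s) (l r x : ℝ) :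
    |intervalInd l r x - gaussSmooth s (intervalInd l r) x| ≤ bell s (x - l) + bell s (x - r) := by
  set ν := ProbabilityTheory.gaussianReal 0 s.toNNReal
  have hbell (u : ℝ) : ν.real (jumpSet (u - x)) ≤ bell s (x - u) := by
    rw [bell, ← neg_sub u x, neg_sq]
    exact gaussianReal_jumpSet_le hs (u - x)
  have hInt (u : ℝ) : Integrable ((jumpSet u).indicator (1 : ℝ → ℝ)) ν :=
    (integrable_const (1 : ℝ)).indicator (measurableSet_jumpSet u)
  have hsum (u v : ℝ) : Integrable (fun z =>
      (jumpSet (u - x)).indicator (1 : ℝ → ℝ) z + (jumpSet (v - x)).indicator 1 z) ν :=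
    (hInt _).add (hInt _)
  calc |intervalInd l r x - gaussSmooth s (intervalInd l r) x|
      = |∫ z, (intervalInd l r x - intervalInd l r (x + z)) ∂ν| := by
        rw [integral_sub (integrable_const _) (integrable_translate (bddMeas_intervalInd l r) x)]
        simp [gaussSmooth, avg, ν]
    _ ≤ ∫ z, ((jumpSet (l - x)).indicator 1 z + (jumpSet (r - x)).indicator 1 z) ∂ν := by
        rw [← Real.norm_eq_abs]
        exact norm_integral_le_of_norm_le (hsum l r) (.of_forall (abs_intervalInd_sub_le l r x))
    _ = ν.real (jumpSet (l - x)) + ν.real (jumpSet (r - x)) := by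
        rw [integral_add (hInt _) (hInt _), integral_indicator_one (measurableSet_jumpSet _),
          integral_indicator_one (measurableSet_jumpSet _)]
    _ ≤ bell s (x - l) + bell s (x - r) := add_le_add (hbell l) (hbell r)

end IntervalInd

/-! ## Decomposition of a smoothed interval along a sequence of scales -/

/-- The mass `∫ exp (-x² / (2a)) μ(dx)` that `μ` puts near the origin at scale `√a`. -/
def bellMass (μ : Measure ℝ) (a : ℝ) : ℝ := ∫ x, bell a x ∂μ

section BellMass

variable {μ : Measure ℝ} [IsProbabilityMeasure μ] {a : ℝ}

lemma bellMass_pos (ha : 0 < a) : 0 < bellMass μ a :=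
  integral_exp_pos (bddMeas_bell ha.le).integrable

lemma monotoneOn_bellMass : MonotoneOn (bellMass μ) (Set.Ioi 0) := fun _ ha _ hb hab =>
  integral_mono (bddMeas_bell (le_of_lt ha)).integrable (bddMeas_bell (le_of_lt hb)).integrable
    (bell_le_bell ha hab)

lemma continuousOn_bellMass : ContinuousOn (bellMass μ) (Set.Ioi 0) := by
  refine continuousOn_of_dominated (bound := fun _ => 1)
    (fun a ha => (bddMeas_bell (le_of_lt ha)).measurable.aestronglyMeasurable)
    (fun a ha => .of_forall fun x => ?_) (integrable_const _) (.of_forall fun x => ?_)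
  · exact (abs_of_nonneg (bell_nonneg a x)).trans_le (bell_le_one (le_of_lt ha) x)
  · exact Real.continuous_exp.comp_continuousOn <| continuousOn_const.div
      (by fun_prop) fun a ha => mul_ne_zero two_ne_zero (ne_of_gt ha)

lemma tendsto_bellMass : Filter.Tendsto (bellMass μ) Filter.atTop (nhds 1) := by
  have hone : (1 : ℝ) = ∫ _, (1 : ℝ) ∂μ := by simp
  rw [hone]
  refine tendsto_integral_filter_of_dominated_convergence (fun _ => 1) ?_ ?_
    (integrable_const _) (.of_forall fun x => ?_)
  · filter_upwards [Filter.eventually_ge_atTop 0] with a ha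
    exact (bddMeas_bell ha).measurable.aestronglyMeasurable
  · filter_upwards [Filter.eventually_ge_atTop 0] with a ha
    exact .of_forall fun x => (abs_of_nonneg (bell_nonneg a x)).trans_le (bell_le_one ha x)
  · have hexponent : Filter.Tendsto (fun a : ℝ => -x ^ 2 / (2 * a)) Filter.atTop (nhds 0) :=
      tendsto_const_nhds.div_atTop (Filter.tendsto_id.const_mul_atTop two_pos)
    rw [← Real.exp_zero]
    exact (Real.continuous_exp.tendsto 0).comp hexponent

end BellMass

/-- A sequence of scales decreasing to `ε` in finitely many steps and adapted to `μ`: as long as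
it stays above `ε`, its `q`-th term is a scale where `bellMass μ` has the value `2 ^ (-2 ^ q)`. -/
structure IsScaleSequence (μ : Measure ℝ) (ε : ℝ) (a : ℕ → ℝ) : Prop where
  le : ∀ q, ε ≤ a q
  antitone : Antitone a
  level_le : ∀ q, (1 / 2 : ℝ) ^ 2 ^ q ≤ bellMass μ (a q)
  eq_or_eq_level : ∀ q, a q = ε ∨ bellMass μ (a q) = (1 / 2 : ℝ) ^ 2 ^ q
  exists_eq : ∃ J, a J = ε

section IsScaleSequence

variable {μ : Measure ℝ} {ε l r x : ℝ} {a : ℕ → ℝ}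

lemma strictAnti_half_pow_two_pow : StrictAnti fun q : ℕ => (1 / 2 : ℝ) ^ 2 ^ q :=
  fun _ _ h => pow_lt_pow_right_of_lt_one₀ (by norm_num) (by norm_num)
    (Nat.pow_lt_pow_right Nat.one_lt_two h)

variable [IsProbabilityMeasure μ]

lemma exists_bellMass_eq (hε : 0 < ε) {v : ℝ} (hv : bellMass μ ε < v) (hv1 : v < 1) :
    ∃ a, ε ≤ a ∧ bellMass μ a = v := by
  obtain ⟨b, hvb, hεb⟩ := (((tendsto_bellMass (μ := μ)).eventually (lt_mem_nhds hv1)).and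
    (Filter.eventually_ge_atTop ε)).exists
  obtain ⟨a, ha, hav⟩ := intermediate_value_Icc hεb
    (continuousOn_bellMass.mono fun x hx => hε.trans_le hx.1) ⟨hv.le, hvb.le⟩
  exact ⟨a, ha.1, hav⟩

lemma exists_half_pow_two_pow_le {v : ℝ} (hv : 0 < v) : ∃ q : ℕ, (1 / 2 : ℝ) ^ 2 ^ q ≤ v := by
  obtain ⟨q, hq⟩ := exists_pow_lt_of_lt_one hv (show (1 / 2 : ℝ) < 1 by norm_num)
  exact ⟨q, (pow_le_pow_of_le_one (by norm_num) (by norm_num) Nat.lt_two_pow_self.le).trans hq.le⟩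

lemma exists_isScaleSequence (μ : Measure ℝ) [IsProbabilityMeasure μ] (hε : 0 < ε) :
    ∃ a, IsScaleSequence μ ε a := by
  have hscale (q : ℕ) : ∃ a, ε ≤ a ∧ (((1 / 2 : ℝ) ^ 2 ^ q ≤ bellMass μ ε ∧ a = ε) ∨
      (bellMass μ ε < (1 / 2 : ℝ) ^ 2 ^ q ∧ bellMass μ a = (1 / 2 : ℝ) ^ 2 ^ q)) := by
    rcases le_or_gt ((1 / 2 : ℝ) ^ 2 ^ q) (bellMass μ ε) with h | h
    · exact ⟨ε, le_rfl, .inl ⟨h, rfl⟩⟩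
    · obtain ⟨a, hεa, ha⟩ :=
        exists_bellMass_eq hε h (pow_lt_one₀ (by norm_num) (by norm_num) (by positivity))
      exact ⟨a, hεa, .inr ⟨h, ha⟩⟩
  choose a hεa ha using hscale
  have hpos (q : ℕ) : 0 < a q := hε.trans_le (hεa q)
  refine ⟨a, hεa, antitone_nat_of_succ_le fun q => ?_, fun q => ?_, fun q => ?_, ?_⟩
  · have hlevel : (1 / 2 : ℝ) ^ 2 ^ (q + 1) < (1 / 2) ^ 2 ^ q :=
      strictAnti_half_pow_two_pow q.lt_succ_self
    rcases ha (q + 1) with ⟨-, h⟩ | ⟨h, hsucc⟩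
    · exact h.trans_le (hεa q)
    · rcases ha q with ⟨h', -⟩ | ⟨-, hq⟩
      · linarith
      · by_contra! hlt
        linarith [monotoneOn_bellMass (μ := μ) (hpos q) (hpos (q + 1)) hlt.le]
  · rcases ha q with ⟨h, hq⟩ | ⟨-, hq⟩
    · rwa [hq]
    · exact hq.ge
  · exact (ha q).imp And.right And.right
  · obtain ⟨J, hJ⟩ := exists_half_pow_two_pow_le (bellMass_pos (μ := μ) hε)
    exact ⟨J, (ha J).elim And.right fun h => absurd h.1 hJ.not_gt⟩

end IsScaleSequence

/-- The pieces `1_I - P_{a (q - 1) - a q} 1_I` (and `1_I` itself for `q = 0`) of the indicator of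
`I = [l, r]`, where `P` is the Gaussian semigroup. The `q`-th piece smoothed by `P_{a q}` is
`P_{a q} 1_I - P_{a (q - 1)} 1_I`, so that these sums telescope. -/
def intervalPiece (a : ℕ → ℝ) (l r : ℝ) : ℕ → ℝ → ℝ
  | 0 => intervalInd l r
  | q + 1 => fun x => intervalInd l r x - gaussSmooth (a q - a (q + 1)) (intervalInd l r) x

section IntervalPiece

variable {μ : Measure ℝ} {ε l r : ℝ} {a : ℕ → ℝ}

lemma abs_intervalPiece_le_one (a : ℕ → ℝ) (l r : ℝ) (q : ℕ) (x : ℝ) :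
    |intervalPiece a l r q x| ≤ 1 := by
  cases q with
  | zero => exact abs_intervalInd_le_one l r x
  | succ q =>
    have hsmooth := gaussSmooth_intervalInd_mem_Icc (a q - a (q + 1)) l r x
    exact abs_sub_le_of_nonneg_of_le (intervalInd_nonneg l r x) (intervalInd_le_one l r x)
      hsmooth.1 hsmooth.2

lemma bddMeas_intervalPiece (a : ℕ → ℝ) (l r : ℝ) (q : ℕ) : BddMeas (intervalPiece a l r q) := by
  cases q with
  | zero => exact bddMeas_intervalInd l r
  | succ q => exact (bddMeas_intervalInd l r).sub ((bddMeas_intervalInd l r).gaussSmooth _)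

lemma sum_gaussSmooth_intervalPiece (ha : Antitone a) (hpos : ∀ q, 0 ≤ a q) (l r : ℝ) (J : ℕ)
    (x : ℝ) : ∑ q ∈ Finset.range (J + 1), gaussSmooth (a q) (intervalPiece a l r q) x =
      gaussSmooth (a J) (intervalInd l r) x := by
  have hind := bddMeas_intervalInd l r
  induction J with
  | zero => simp [intervalPiece]
  | succ J ih =>
    have hpiece : gaussSmooth (a (J + 1)) (intervalPiece a l r (J + 1)) x =
        gaussSmooth (a (J + 1)) (intervalInd l r) x - gaussSmooth (a J) (intervalInd l r) x := by
      have hsplit := congrFun (avg_sub (F := ProbabilityTheory.gaussianReal 0 (a (J + 1)).toNNReal)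
        hind (hind.gaussSmooth (a J - a (J + 1)))) x
      have hsemi := gaussSmooth_gaussSmooth (hpos (J + 1)) (sub_nonneg.2 (ha J.le_succ)) hind
      rw [add_sub_cancel] at hsemi
      rw [← hsemi]
      exact hsplit
    rw [Finset.sum_range_succ, ih, hpiece, add_sub_cancel]

namespace IsScaleSequence

lemma pos (ha : IsScaleSequence μ ε a) (hε : 0 < ε) (q : ℕ) : 0 < a q := hε.trans_le (ha.le q)

lemma intervalPiece_succ (ha : IsScaleSequence μ ε a) (hε : 0 < ε) (l r : ℝ) (q : ℕ) :
    intervalPiece a l r (q + 1) = 0 ∨ (bellMass μ (a q) = (1 / 2 : ℝ) ^ 2 ^ q ∧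
      ∀ x, |intervalPiece a l r (q + 1) x| ≤ bell (a q) (x - l) + bell (a q) (x - r)) := by
  rcases (ha.antitone q.le_succ).eq_or_lt with heq | hlt
  · left
    rw [intervalPiece, heq, sub_self, gaussSmooth_zero (bddMeas_intervalInd l r)]
    exact sub_self (intervalInd l r)
  · right
    have hsub : 0 < a q - a (q + 1) := sub_pos.2 hlt
    have hle : a q - a (q + 1) ≤ a q := sub_le_self _ (ha.pos hε _).le
    refine ⟨(ha.eq_or_eq_level q).resolve_left fun h => ?_, fun x => ?_⟩
    · exact (ha.le (q + 1)).not_gt (h ▸ hlt)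
    · exact (abs_intervalInd_sub_gaussSmooth_le hsub l r x).trans
        (add_le_add (bell_le_bell hsub hle _) (bell_le_bell hsub hle _))

end IsScaleSequence

end IntervalPiece

/-! ## Rescaling the coordinates -/

section BddMeas

variable {α κ : Type*} [MeasurableSpace α] {f : κ → α → ℝ}

lemma BddMeas.finset_prod (s : Finset κ) (hf : ∀ k, BddMeas (f k)) :
    BddMeas (fun y => ∏ k ∈ s, f k y) := by
  classical
  induction s using Finset.induction_on with
  | empty => simpa only [Finset.prod_empty] using BddMeas.const 1
  | insert k s hk ih => simpa only [Finset.prod_insert hk] using (hf k).mul ih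

end BddMeas

section Avg

variable {E κ : Type*} [AddCommGroup E] [MeasurableSpace E] [MeasurableAdd E] {F : Measure E}
  [IsProbabilityMeasure F] {f : κ → E → ℝ} {g h : E → ℝ}

lemma avg_finset_sum (s : Finset κ) (hf : ∀ k, BddMeas (f k)) :
    avg F (fun y => ∑ k ∈ s, f k y) = fun y => ∑ k ∈ s, avg F (f k) y := by
  ext y
  simp only [avg]
  exact integral_finsetSum s fun k _ => integrable_translate (hf k) y

lemma abs_avg_le_avg (hh : BddMeas h) (hgh : ∀ y, |g y| ≤ h y) (y : E) :
    |avg F g y| ≤ avg F h y := by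
  rw [← Real.norm_eq_abs]
  exact norm_integral_le_of_norm_le (integrable_translate hh y) (.of_forall fun _ => hgh _)

end Avg

section AvgCorr

variable {E : Type*} [NormedAddCommGroup E] [InnerProductSpace ℝ E] [MeasurableSpace E]
  [BorelSpace E] [FiniteDimensional ℝ E] {F : Measure E} [IsProbabilityMeasure F]
  [F.IsNegInvariant] {w u : E → ℝ} {N n : ℕ} {S : ℝ}

lemma avg_convPow_add_corr (hw : BddInt w) (hu : BddMeas u) (i j : ℕ) :
    avg (convPow F (i + j)) (corr w volume u) =
      corr (avg (convPow F i) w) volume (avg (convPow F j) u) := by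
  rw [avg_convPow_add (hu.corr hw.integrable), avg_corr_comm hw.integrable hu,
    corr_avg_left hw hu.avg]

lemma abs_avg_convPow_corr_sub_le (hN : 0 < N) (hn : 2 * N ≤ n) (hu : BddMeas u)
    (hS : ∀ y, |avg (convPow F N) u y| ≤ S) (y : E) :
    |avg (convPow F n) (corr (gaussKernel 1) volume u) y -
        avg (convPow F (n + 1)) (corr (gaussKernel 1) volume u) y| ≤
      l1Norm (fun y => smoothedPow F N N y - avg F (smoothedPow F N N) y) * S := by
  obtain ⟨k, rfl⟩ : ∃ k, n = N + (k + N) := ⟨n - 2 * N, by omega⟩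
  have hw : BddInt (gaussKernel 1 : E → ℝ) := bddInt_gaussKernel one_pos
  have hv : BddMeas (avg (convPow F (k + N)) u) := hu.avg
  have hvS : ∀ z, |avg (convPow F (k + N)) u z| ≤ S := by
    rw [avg_convPow_add hu]
    exact avg_abs_le hu.avg hS
  rw [add_right_comm, avg_convPow_add_corr hw hu, avg_convPow_add_corr hw hu,
    smoothedPow_self hN, ← avg_convPow_succ hw.toBddMeas,
    ← congrFun (corr_sub_left hw.avg.integrable hw.avg.integrable hv) y]
  exact corr_abs_le (hw.avg.sub hw.avg).integrable hv hvS y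

end AvgCorr

section BellMass

variable {μ : Measure ℝ} [IsProbabilityMeasure μ] [μ.IsNegInvariant] {a : ℝ}

lemma gaussKernel_eq_mul_bell (a x : ℝ) : gaussKernel a x = gaussConst ℝ a * bell a x := by
  rw [gaussKernel, bell, Real.norm_eq_abs, sq_abs]

lemma avg_convPow_bell_le (hμ : ∀ t, 0 ≤ cosTransform μ t) (ha : 0 < a) (n : ℕ) (y : ℝ) :
    avg (convPow μ n) (bell a) y ≤ bellMass (convPow μ n) a := by
  have hρ : Integrable fun t : ℝ => gaussConst ℝ a * gaussKernel (1 / a) t :=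
    (bddInt_gaussKernel (by positivity)).integrable.const_mul _
  have hmax := ((cosRep_gaussKernel ha).avg_convPow (F := μ) hρ n).abs_le
    (integrable_cosTransform_pow_mul hρ n) (fun t => mul_nonneg (pow_nonneg (hμ t) n)
      (mul_nonneg (gaussConst_pos ha).le (gaussKernel_pos (by positivity) t).le)) y
  have hkernel : avg (convPow μ n) (gaussKernel a) =
      fun y => gaussConst ℝ a * avg (convPow μ n) (bell a) y := by
    rw [← avg_const_mul]
    simp only [← gaussKernel_eq_mul_bell]
  have hzero : avg (convPow μ n) (bell a) 0 = bellMass (convPow μ n) a := by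
    simp only [avg, bellMass, zero_add]
  rw [hkernel] at hmax
  have hle := le_of_mul_le_mul_left ((le_abs_self _).trans hmax) (gaussConst_pos ha)
  exact hle.trans_eq hzero

lemma spectralMass_map_inv_sqrt_smul (ha : 0 < a) (n : ℕ) :
    spectralMass (μ.map ((√a)⁻¹ • ContinuousLinearMap.id ℝ ℝ)) n = bellMass (convPow μ n) a := by
  set L : ℝ →L[ℝ] ℝ := (√a)⁻¹ • ContinuousLinearMap.id ℝ ℝ
  have hkernel (z : ℝ) : gaussKernel 1 (L z) = gaussConst ℝ 1 * bell a z := by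
    rw [gaussKernel_eq_mul_bell, bell, bell, show L z = (√a)⁻¹ * z from rfl, mul_pow, inv_pow,
      Real.sq_sqrt ha.le]
    congr 2
    field_simp
  refine mul_left_cancel₀ (gaussConst_pos (E := ℝ) one_pos).ne' ?_
  calc gaussConst ℝ 1 * spectralMass (μ.map L) n = avg (convPow (μ.map L) n) (gaussKernel 1) 0 :=
        (avg_convPow_gaussKernel_one_zero n).symm
    _ = avg (convPow μ n) (fun z => gaussKernel 1 (L z)) 0 := by
        rw [← avg_convPow_map L (bddInt_gaussKernel one_pos).measurable, map_zero]
    _ = gaussConst ℝ 1 * bellMass (convPow μ n) a := by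
        simp only [hkernel, avg, bellMass, integral_const_mul, zero_add]

end BellMass

section Coordinates

variable {ι : Type*} {F : Measure (EuclideanSpace ℝ ι)} {a : ι → ℝ} {c : ι → ℝ → ℝ} {N n : ℕ}

/-- The linear map dividing the `i`-th coordinate by `√(a i)`; it turns the Gaussian smoothing with
variances `a` into the smoothing by `gaussKernel 1`. -/
def rescale (a : ι → ℝ) : EuclideanSpace ℝ ι →L[ℝ] EuclideanSpace ℝ ι :=
  (EuclideanSpace.equiv ι ℝ).symm.toContinuousLinearMap ∘L
    ContinuousLinearMap.pi fun i => (√(a i))⁻¹ • EuclideanSpace.proj i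

lemma rescale_apply (a : ι → ℝ) (z : EuclideanSpace ℝ ι) (i : ι) :
    rescale a z i = (√(a i))⁻¹ * z i := rfl

lemma rescale_surjective (ha : ∀ i, 0 < a i) : Function.Surjective (rescale a) := fun y => by
  refine ⟨WithLp.toLp 2 fun i => √(a i) * y i, ?_⟩
  ext i
  exact inv_mul_cancel_left₀ (Real.sqrt_pos.2 (ha i)).ne' (y i)

lemma marginal_map_rescale [Finite ι] (F : Measure (EuclideanSpace ℝ ι)) (a : ι → ℝ) (i : ι) :
    marginal (F.map (rescale a)) i =
      (marginal F i).map ((√(a i))⁻¹ • ContinuousLinearMap.id ℝ ℝ) := by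
  have := Fintype.ofFinite ι
  have hproj : Measurable (EuclideanSpace.proj i : EuclideanSpace ℝ ι →L[ℝ] ℝ) :=
    ContinuousLinearMap.measurable _
  rw [marginal, marginal, Measure.map_map hproj (rescale a).measurable,
    Measure.map_map (ContinuousLinearMap.measurable _) hproj]
  rfl

variable [Fintype ι]

lemma bddMeas_prod_apply (hc : ∀ i, BddMeas (c i)) :
    BddMeas (fun z : EuclideanSpace ℝ ι => ∏ i, c i (z i)) :=
  BddMeas.finset_prod _ fun i =>
    (hc i).comp (EuclideanSpace.proj i : EuclideanSpace ℝ ι →L[ℝ] ℝ).measurable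

lemma abs_prod_le_of_abs_le_one {x : ι → ℝ} (hx : ∀ i, |x i| ≤ 1) (i : ι) : |∏ j, x j| ≤ |x i| := by
  classical
  rw [Finset.abs_prod, ← Finset.mul_prod_erase _ _ (Finset.mem_univ i)]
  exact mul_le_of_le_one_right (abs_nonneg _)
    (Finset.prod_le_one (fun _ _ => abs_nonneg _) fun j _ => hx j)

lemma prod_gaussSmooth_eq_corr (ha : ∀ i, 0 < a i) (hc : ∀ i, BddMeas (c i))
    (z : EuclideanSpace ℝ ι) : ∏ i, gaussSmooth (a i) (c i) (z i) =
      corr (gaussKernel 1) volume (fun y => ∏ i, c i (√(a i) * y i)) (rescale a z) := by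
  have hfactor (x : EuclideanSpace ℝ ι) :
      gaussKernel 1 x * ∏ i, c i (√(a i) * (rescale a z + x) i) =
        ∏ i, gaussKernel 1 (x i) * c i (z i + √(a i) * x i) := by
    rw [gaussKernel_one_eq_prod, ← Finset.prod_mul_distrib]
    refine Finset.prod_congr rfl fun i _ => ?_
    rw [PiLp.add_apply, rescale_apply, mul_add,
      mul_inv_cancel_left₀ (Real.sqrt_pos.2 (ha i)).ne']
  simp only [corr, hfactor]
  rw [integral_prod_apply fun i x => gaussKernel 1 x * c i (z i + √(a i) * x)]
  exact Finset.prod_congr rfl fun i _ => gaussSmooth_apply (ha i).le (hc i).measurable (z i)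

variable [IsProbabilityMeasure F] [F.IsNegInvariant]

lemma avg_convPow_bell_apply_le (hF : ∀ t, 0 ≤ cosTransform F t) {b : ℝ} (hb : 0 < b) (i : ι)
    (n : ℕ) (l : ℝ) (y : EuclideanSpace ℝ ι) :
    avg (convPow F n) (fun z => bell b (z i - l)) y ≤ bellMass (convPow (marginal F i) n) b := by
  have hbell : Measurable fun x => bell b (x + -l) :=
    (bddMeas_bell hb.le).measurable.comp (measurable_add_const _)
  have hmap := avg_convPow_map (F := F) (EuclideanSpace.proj i) hbell n y
  rw [congrFun (avg_translate _ (bell b) (-l)) _] at hmap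
  simp only [sub_eq_add_neg]
  exact hmap.symm.trans_le (avg_convPow_bell_le (cosTransform_marginal_nonneg hF i) hb n _)

lemma abs_avg_convPow_prod_le_two_mul (hF : ∀ t, 0 ≤ cosTransform F t) {i : ι} {b l r : ℝ}
    (hb : 0 < b) (hc1 : ∀ j x, |c j x| ≤ 1)
    (hci : ∀ x, |c i x| ≤ bell b (x - l) + bell b (x - r)) (y : EuclideanSpace ℝ ι) :
    |avg (convPow F n) (fun z => ∏ j, c j (z j)) y| ≤
      2 * bellMass (convPow (marginal F i) n) b := by
  have hbell (e : ℝ) : BddMeas fun z : EuclideanSpace ℝ ι => bell b (z i - e) :=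
    (bddMeas_bell hb.le).comp (φ := fun z : EuclideanSpace ℝ ι => z i - e) (by fun_prop)
  calc |avg (convPow F n) (fun z => ∏ j, c j (z j)) y|
      ≤ avg (convPow F n) (fun z => bell b (z i - l) + bell b (z i - r)) y :=
        abs_avg_le_avg ((hbell l).add (hbell r))
          (fun z => (abs_prod_le_of_abs_le_one (fun j => hc1 j (z j)) i).trans (hci (z i))) y
    _ = avg (convPow F n) (fun z => bell b (z i - l)) y +
          avg (convPow F n) (fun z => bell b (z i - r)) y :=
        congrFun (avg_add (hbell l) (hbell r)) y
    _ ≤ 2 * bellMass (convPow (marginal F i) n) b := by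
        rw [two_mul]
        exact add_le_add (avg_convPow_bell_apply_le hF hb i n l y)
          (avg_convPow_bell_apply_le hF hb i n r y)

lemma abs_avg_convPow_prod_gaussSmooth_sub_le (hF : ∀ t, 0 ≤ cosTransform F t) (hN : 0 < N)
    (hn : 2 * N ≤ n) (ha : ∀ i, 0 < a i) (hc : ∀ i, BddMeas (c i)) {q : ι → ℕ}
    (hq : ∀ i, (1 / 2 : ℝ) ^ 2 ^ q i ≤ bellMass (convPow (marginal F i) N) (a i)) {S : ℝ}
    (hS : ∀ y, |avg (convPow F N) (fun z => ∏ i, c i (z i)) y| ≤ S) :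
    |avg (convPow F n) (fun z => ∏ i, gaussSmooth (a i) (c i) (z i)) 0 -
        avg (convPow F (n + 1)) (fun z => ∏ i, gaussSmooth (a i) (c i) (z i)) 0| ≤
      marginalConst (Fintype.card ι) * (∏ i, (2 : ℝ) ^ q i) ^ (Fintype.card ι + 6) / N * S := by
  set u : EuclideanSpace ℝ ι → ℝ := fun y => ∏ i, c i (√(a i) * y i)
  have hu : BddMeas u :=
    bddMeas_prod_apply (c := fun i x => c i (√(a i) * x)) fun i =>
      (hc i).comp (measurable_const_mul _)
  have hcorr : Measurable (corr (gaussKernel 1) volume u) :=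
    (hu.corr (bddInt_gaussKernel one_pos).integrable).measurable
  have huS : ∀ y, |avg (convPow (F.map (rescale a)) N) u y| ≤ S := by
    refine (rescale_surjective ha).forall.2 fun z => ?_
    rw [avg_convPow_map _ hu.measurable]
    simpa only [u, rescale_apply, mul_inv_cancel_left₀ (Real.sqrt_pos.2 (ha _)).ne'] using hS z
  have hS0 : 0 ≤ S := (abs_nonneg _).trans (hS 0)
  have hlevel : ∀ i, (1 / 2 : ℝ) ^ 2 ^ q i ≤ spectralMass (marginal (F.map (rescale a)) i) N := by
    intro i
    rw [marginal_map_rescale, spectralMass_map_inv_sqrt_smul (ha i)]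
    exact hq i
  have hF' : ∀ t, 0 ≤ cosTransform (F.map (rescale a)) t := fun t => by
    rw [cosTransform_map]
    exact hF _
  simp only [prod_gaussSmooth_eq_corr ha hc]
  rw [← avg_convPow_map _ hcorr, ← avg_convPow_map _ hcorr]
  exact (abs_avg_convPow_corr_sub_le hN hn hu huS _).trans (mul_le_mul_of_nonneg_right
    (l1Norm_smoothedPow_self_sub_avg_le_of_marginal hF' hN hlevel) hS0)

end Coordinates

/-! ## Smoothed boxes -/

/-- An upper bound for the averages of the products of interval pieces with a factor at scale `q`,
see `abs_avg_convPow_prod_intervalPiece_le`. -/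
def pieceBound : ℕ → ℝ
  | 0 => 1
  | q + 1 => 2 * (1 / 2) ^ 2 ^ q

lemma half_pow_two_pow_mul_le (r q : ℕ) :
    (1 / 2 : ℝ) ^ 2 ^ q * 2 ^ (q * r) ≤ r.factorial * (1 / Real.log 2) ^ r := by
  have hexp : Real.exp (2 ^ q * Real.log 2) = 2 ^ 2 ^ q := by
    rw [mul_comm, ← Real.rpow_natCast 2 (2 ^ q), Real.rpow_def_of_pos two_pos, Nat.cast_pow,
      Nat.cast_ofNat]
  have hpow : (2 ^ q * Real.log 2) ^ r / r.factorial ≤ (2 : ℝ) ^ 2 ^ q :=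
    (Real.pow_div_factorial_le_exp _ (by positivity) r).trans_eq hexp
  rw [div_le_iff₀ (by positivity), mul_pow, ← pow_mul] at hpow
  rw [one_div_pow, one_div_pow, one_div_mul_eq_div, mul_one_div,
    div_le_div_iff₀ (by positivity) (by positivity), mul_comm (r.factorial : ℝ)]
  exact hpow

/-- The constant in the geometric bound `pieceBound_le` for `pieceBound` in dimension `m`. -/
def pieceConst (m : ℕ) : ℝ :=
  max 1 (2 * 2 ^ (m * (m + 7)) * ((m * (m + 7)).factorial * (1 / Real.log 2) ^ (m * (m + 7))))

lemma one_le_pieceConst (m : ℕ) : 1 ≤ pieceConst m := le_max_left _ _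

lemma pieceConst_pos (m : ℕ) : 0 < pieceConst m := one_pos.trans_le (one_le_pieceConst m)

lemma pieceBound_le {m : ℕ} (hm : m ≠ 0) (q : ℕ) :
    pieceBound q ≤ (pieceConst m * (1 / 2) ^ (q * (m + 7))) ^ m := by
  have hK : pieceConst m ≤ pieceConst m ^ m := le_self_pow₀ (one_le_pieceConst m) hm
  cases q with
  | zero =>
    rw [pieceBound, zero_mul, pow_zero, mul_one]
    exact (one_le_pieceConst m).trans hK
  | succ q =>
    set r := m * (m + 7) with hr
    have hexp : (q + 1) * (m + 7) * m = q * r + r := by rw [hr]; ring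
    have hcancel : (2 : ℝ) ^ (q * r + r) * (1 / 2) ^ (q * r + r) = 1 := by
      rw [← mul_pow, mul_one_div_cancel two_ne_zero, one_pow]
    rw [mul_pow, ← pow_mul, hexp, pieceBound]
    calc 2 * (1 / 2 : ℝ) ^ 2 ^ q
        = 2 * (1 / 2) ^ 2 ^ q * (2 ^ (q * r + r) * (1 / 2) ^ (q * r + r)) := by
          rw [hcancel, mul_one]
      _ = 2 * 2 ^ r * ((1 / 2) ^ 2 ^ q * 2 ^ (q * r)) * (1 / 2) ^ (q * r + r) := by
          rw [pow_add 2]; ring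
      _ ≤ 2 * 2 ^ r * (r.factorial * (1 / Real.log 2) ^ r) * (1 / 2) ^ (q * r + r) := by
          exact mul_le_mul_of_nonneg_right (mul_le_mul_of_nonneg_left
            (half_pow_two_pow_mul_le r q) (by positivity)) (by positivity)
      _ ≤ pieceConst m ^ m * (1 / 2) ^ (q * r + r) := by
          gcongr
          exact (le_max_right _ _).trans hK

/-- The constant in the bound `abs_avg_convPow_prod_gaussSmooth_intervalInd_sub_le` for the smoothed
boxes of dimension `m`. -/
def boxConst (m : ℕ) : ℝ := marginalConst m * (2 * pieceConst m) ^ m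

lemma boxConst_pos (m : ℕ) : 0 < boxConst m :=
  mul_pos (marginalConst_pos m) (pow_pos (mul_pos two_pos (pieceConst_pos m)) m)

section Boxes

variable {ι : Type*} [Fintype ι] {F : Measure (EuclideanSpace ℝ ι)} [IsProbabilityMeasure F]
  [F.IsNegInvariant] {N n : ℕ} {ε : ℝ} {a : ι → ℕ → ℝ}

lemma abs_avg_convPow_prod_intervalPiece_le (hF : ∀ t, 0 ≤ cosTransform F t) (hε : 0 < ε)
    (ha : ∀ i, IsScaleSequence (convPow (marginal F i) N) ε (a i)) (l r : ι → ℝ) (q : ι → ℕ)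
    (i : ι) (y : EuclideanSpace ℝ ι) :
    |avg (convPow F N) (fun z => ∏ j, intervalPiece (a j) (l j) (r j) (q j) (z j)) y| ≤
      pieceBound (q i) := by
  have hpiece (j : ι) (x : ℝ) : |intervalPiece (a j) (l j) (r j) (q j) x| ≤ 1 :=
    abs_intervalPiece_le_one _ _ _ _ x
  rcases hqi : q i with _ | p
  · refine avg_abs_le (bddMeas_prod_apply fun j => bddMeas_intervalPiece _ _ _ _) (fun z => ?_) y
    exact (abs_prod_le_of_abs_le_one (fun j => hpiece j (z j)) i).trans (hpiece i (z i))
  · rcases (ha i).intervalPiece_succ hε (l i) (r i) p with hzero | ⟨hmass, hbell⟩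
    · have hprod (z : EuclideanSpace ℝ ι) :
          ∏ j, intervalPiece (a j) (l j) (r j) (q j) (z j) = 0 :=
        Finset.prod_eq_zero (Finset.mem_univ i) (by rw [hqi, hzero, Pi.zero_apply])
      simp only [hprod, avg, integral_zero, abs_zero, pieceBound]
      positivity
    · rw [← hqi] at hbell
      rw [pieceBound, ← hmass]
      exact abs_avg_convPow_prod_le_two_mul hF ((ha i).pos hε p) hpiece hbell y

lemma abs_avg_convPow_prod_intervalPiece_le_prod [Nonempty ι] (hF : ∀ t, 0 ≤ cosTransform F t)
    (hε : 0 < ε) (ha : ∀ i, IsScaleSequence (convPow (marginal F i) N) ε (a i)) (l r : ι → ℝ)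
    (q : ι → ℕ) (y : EuclideanSpace ℝ ι) :
    |avg (convPow F N) (fun z => ∏ j, intervalPiece (a j) (l j) (r j) (q j) (z j)) y| ≤
      ∏ i, pieceConst (Fintype.card ι) * (1 / 2) ^ (q i * (Fintype.card ι + 7)) := by
  have hK := pieceConst_pos (Fintype.card ι)
  refine le_of_pow_le_pow_left₀ (Fintype.card_ne_zero (α := ι))
    (Finset.prod_nonneg fun i _ => by positivity) ?_
  rw [← Finset.prod_pow, ← Finset.card_univ, ← Finset.prod_const]
  exact Finset.prod_le_prod (fun _ _ => abs_nonneg _) fun i _ =>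
    (abs_avg_convPow_prod_intervalPiece_le hF hε ha l r q i y).trans
      (pieceBound_le Fintype.card_ne_zero (q i))

lemma abs_avg_convPow_prod_gaussSmooth_intervalPiece_sub_le [Nonempty ι]
    (hF : ∀ t, 0 ≤ cosTransform F t) (hN : 0 < N) (hn : 2 * N ≤ n) (hε : 0 < ε)
    (ha : ∀ i, IsScaleSequence (convPow (marginal F i) N) ε (a i)) (l r : ι → ℝ) (q : ι → ℕ) :
    |avg (convPow F n)
          (fun z => ∏ i, gaussSmooth (a i (q i)) (intervalPiece (a i) (l i) (r i) (q i)) (z i)) 0 -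
        avg (convPow F (n + 1))
          (fun z => ∏ i, gaussSmooth (a i (q i)) (intervalPiece (a i) (l i) (r i) (q i)) (z i)) 0| ≤
      marginalConst (Fintype.card ι) / N * ∏ i, pieceConst (Fintype.card ι) * (1 / 2) ^ q i := by
  refine (abs_avg_convPow_prod_gaussSmooth_sub_le hF hN hn (fun i => (ha i).pos hε _)
    (fun i => bddMeas_intervalPiece _ _ _ _) (fun i => (ha i).level_le (q i))
    (abs_avg_convPow_prod_intervalPiece_le_prod hF hε ha l r q)).trans_eq ?_
  rw [mul_div_right_comm, mul_assoc, ← Finset.prod_pow, ← Finset.prod_mul_distrib]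
  congr 1
  refine Finset.prod_congr rfl fun i _ => ?_
  have hcancel (k : ℕ) : (2 : ℝ) ^ k * (1 / 2) ^ k = 1 := by
    rw [← mul_pow, mul_one_div_cancel two_ne_zero, one_pow]
  rw [← pow_mul, show q i * (Fintype.card ι + 7) = q i * (Fintype.card ι + 6) + q i by ring,
    pow_add (1 / 2 : ℝ), mul_left_comm, ← mul_assoc (2 ^ _), hcancel, one_mul]

lemma sum_range_half_pow_le (n : ℕ) : ∑ q ∈ Finset.range n, (1 / 2 : ℝ) ^ q ≤ 2 :=
  (summable_geometric_two.sum_le_tsum _ fun q _ => by positivity).trans_eq tsum_geometric_two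

lemma abs_avg_convPow_prod_gaussSmooth_intervalInd_sub_le [Nonempty ι]
    (hF : ∀ t, 0 ≤ cosTransform F t) (hN : 0 < N) (hn : 2 * N ≤ n) (hε : 0 < ε) (l r : ι → ℝ) :
    |avg (convPow F n) (fun z => ∏ i, gaussSmooth ε (intervalInd (l i) (r i)) (z i)) 0 -
        avg (convPow F (n + 1)) (fun z => ∏ i, gaussSmooth ε (intervalInd (l i) (r i)) (z i)) 0| ≤
      boxConst (Fintype.card ι) / N := by
  classical
  choose a ha using fun i => exists_isScaleSequence (convPow (marginal F i) N) hε
  choose J hJ using fun i => (ha i).exists_eq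
  set K := pieceConst (Fintype.card ι)
  set Q := Fintype.piFinset fun i => Finset.range (J i + 1)
  set B : (ι → ℕ) → EuclideanSpace ℝ ι → ℝ := fun q z =>
    ∏ i, gaussSmooth (a i (q i)) (intervalPiece (a i) (l i) (r i) (q i)) (z i)
  have hB (q : ι → ℕ) : BddMeas (B q) :=
    bddMeas_prod_apply fun i => (bddMeas_intervalPiece _ _ _ _).gaussSmooth _
  have hsum : (fun z : EuclideanSpace ℝ ι => ∏ i, gaussSmooth ε (intervalInd (l i) (r i)) (z i)) =
      fun z => ∑ q ∈ Q, B q z := by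
    ext z
    simp only [Q, B, ← Finset.prod_univ_sum (fun i => Finset.range (J i + 1))
      fun i q => gaussSmooth (a i q) (intervalPiece (a i) (l i) (r i) q) (z i)]
    refine Finset.prod_congr rfl fun i _ => ?_
    rw [sum_gaussSmooth_intervalPiece (ha i).antitone fun q => ((ha i).pos hε q).le, hJ i]
  have hC : 0 ≤ marginalConst (Fintype.card ι) / N :=
    div_nonneg (marginalConst_pos _).le (Nat.cast_nonneg N)
  have hK : 0 ≤ K := (pieceConst_pos _).le
  calc |_| = |∑ q ∈ Q, (avg (convPow F n) (B q) 0 - avg (convPow F (n + 1)) (B q) 0)| := by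
        rw [hsum, avg_finset_sum Q hB, avg_finset_sum Q hB, Finset.sum_sub_distrib]
    _ ≤ ∑ q ∈ Q, marginalConst (Fintype.card ι) / N * ∏ i, K * (1 / 2) ^ q i :=
        (Finset.abs_sum_le_sum_abs _ _).trans (Finset.sum_le_sum fun q _ =>
          abs_avg_convPow_prod_gaussSmooth_intervalPiece_sub_le hF hN hn hε ha l r q)
    _ = marginalConst (Fintype.card ι) / N *
          ∏ i, ∑ q ∈ Finset.range (J i + 1), K * (1 / 2) ^ q := by
        rw [← Finset.mul_sum, Finset.prod_univ_sum]
    _ ≤ marginalConst (Fintype.card ι) / N * ∏ _i : ι, 2 * K := by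
        gcongr with i
        rw [← Finset.mul_sum, mul_comm]
        exact mul_le_mul_of_nonneg_right (sum_range_half_pow_le _) hK
    _ = boxConst (Fintype.card ι) / N := by
        rw [Finset.prod_const, Finset.card_univ, boxConst, div_mul_eq_mul_div]

end Boxes

/-! ## Boxes with infinite endpoints -/

section Margin

variable {α β : EReal} {l r : ℕ → ℝ} {v x : ℝ}

/-- The distance kept between a point and the `k`-th approximation to an endpoint of an interval:
it tends to `0` with `k` but dominates the standard deviation of `gaussSmooth (margin k ^ 3)`. -/
def margin (k : ℕ) : ℝ := 1 / ((k : ℝ) + 1)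

lemma margin_pos (k : ℕ) : 0 < margin k := Nat.one_div_pos_of_nat

lemma margin_le_one (k : ℕ) : margin k ≤ 1 :=
  div_le_one_of_le₀ (le_add_of_nonneg_left k.cast_nonneg) (by positivity)

lemma exists_eventually_le_iff_left (α : EReal) : ∃ l : ℕ → ℝ, ∀ x : ℝ,
    ∀ᶠ k in Filter.atTop, (l k ≤ x ↔ α ≤ x) ∧ margin k ≤ |x - l k| := by
  have hlarge (y : ℝ) : ∀ᶠ k : ℕ in Filter.atTop, y ≤ k :=
    tendsto_natCast_atTop_atTop.eventually (Filter.eventually_ge_atTop y)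
  induction α with
  | bot =>
    refine ⟨fun k => -k, fun x => ?_⟩
    filter_upwards [hlarge (1 - x)] with k hk
    refine ⟨iff_of_true (by linarith) bot_le, ?_⟩
    linarith [margin_le_one k, le_abs_self (x - -k)]
  | top =>
    refine ⟨fun k => k, fun x => ?_⟩
    filter_upwards [hlarge (1 + x)] with k hk
    refine ⟨iff_of_false (by linarith) (EReal.coe_lt_top x).not_ge, ?_⟩
    linarith [margin_le_one k, neg_le_abs (x - k)]
  | coe v =>
    refine ⟨fun k => v - margin k, fun x => ?_⟩
    rcases le_or_gt v x with hvx | hxv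
    · refine .of_forall fun k => ⟨iff_of_true ?_ (EReal.coe_le_coe_iff.2 hvx), ?_⟩
      · linarith [margin_pos k]
      · linarith [le_abs_self (x - (v - margin k))]
    · have hsmall : ∀ᶠ k in Filter.atTop, margin k < (v - x) / 2 :=
        tendsto_one_div_add_atTop_nhds_zero_nat.eventually (gt_mem_nhds (by linarith))
      filter_upwards [hsmall] with k hk
      refine ⟨iff_of_false (by linarith) fun h => hxv.not_ge (EReal.coe_le_coe_iff.1 h), ?_⟩
      linarith [neg_le_abs (x - (v - margin k))]

lemma exists_eventually_le_iff_right (β : EReal) : ∃ r : ℕ → ℝ, ∀ x : ℝ,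
    ∀ᶠ k in Filter.atTop, (x ≤ r k ↔ (x : EReal) ≤ β) ∧ margin k ≤ |x - r k| := by
  obtain ⟨l, hl⟩ := exists_eventually_le_iff_left (-β)
  refine ⟨fun k => -l k, fun x => ?_⟩
  filter_upwards [hl (-x)] with k ⟨hiff, hdist⟩
  rw [EReal.coe_neg, EReal.neg_le_neg_iff, le_neg] at hiff
  refine ⟨hiff, hdist.trans_eq ?_⟩
  rw [← abs_neg]
  congr 1
  ring

lemma tendsto_bell_margin :
    Filter.Tendsto (fun k => bell (margin k ^ 3) (margin k)) Filter.atTop (nhds 0) := by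
  have hbell (k : ℕ) : bell (margin k ^ 3) (margin k) = Real.exp (-(1 / 2) * ((k : ℝ) + 1)) := by
    rw [bell, margin]
    congr 1
    field_simp
  simp only [hbell]
  exact Real.tendsto_exp_atBot.comp ((Filter.tendsto_atTop_add_const_right _ _
    tendsto_natCast_atTop_atTop).const_mul_atTop_of_neg (by norm_num))

lemma tendsto_gaussSmooth_intervalInd
    (h : ∀ᶠ k in Filter.atTop, intervalInd (l k) (r k) x = v ∧
      margin k ≤ |x - l k| ∧ margin k ≤ |x - r k|) :
    Filter.Tendsto (fun k => gaussSmooth (margin k ^ 3) (intervalInd (l k) (r k)) x) Filter.atTop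
      (nhds v) := by
  have hbound : Filter.Tendsto (fun k => 2 * bell (margin k ^ 3) (margin k)) Filter.atTop
      (nhds 0) := by
    simpa only [mul_zero] using tendsto_bell_margin.const_mul 2
  refine tendsto_iff_norm_sub_tendsto_zero.2
    (squeeze_zero' (.of_forall fun k => norm_nonneg _) ?_ hbound)
  filter_upwards [h] with k ⟨hv, hl, hr⟩
  have hs : 0 < margin k ^ 3 := pow_pos (margin_pos k) 3
  have hbell {u : ℝ} (hu : margin k ≤ |u|) :
      bell (margin k ^ 3) u ≤ bell (margin k ^ 3) (margin k) := by
    refine Real.exp_le_exp.2 (div_le_div_of_nonneg_right (neg_le_neg ?_) (by positivity))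
    rw [← sq_abs u]
    exact pow_le_pow_left₀ (margin_pos k).le hu 2
  rw [Real.norm_eq_abs, abs_sub_comm, ← hv, two_mul]
  exact (abs_intervalInd_sub_gaussSmooth_le hs (l k) (r k) x).trans
    (add_le_add (hbell hl) (hbell hr))

open Classical in
lemma exists_tendsto_gaussSmooth_intervalInd (α β : EReal) : ∃ l r : ℕ → ℝ, ∀ x : ℝ,
    Filter.Tendsto (fun k => gaussSmooth (margin k ^ 3) (intervalInd (l k) (r k)) x) Filter.atTop
      (nhds (if α ≤ x ∧ (x : EReal) ≤ β then 1 else 0)) := by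
  obtain ⟨l, hl⟩ := exists_eventually_le_iff_left α
  obtain ⟨r, hr⟩ := exists_eventually_le_iff_right β
  refine ⟨l, r, fun x => tendsto_gaussSmooth_intervalInd ?_⟩
  filter_upwards [hl x, hr x] with k ⟨hlx, hl⟩ ⟨hrx, hr⟩
  refine ⟨?_, hl, hr⟩
  rw [intervalInd, Set.indicator_apply]
  exact if_congr (Set.mem_Icc.trans (and_congr hlx hrx)) rfl rfl

end Margin

section Box

variable {ι : Type*}

/-- The box `∏ j, [a j, b j]`, possibly unbounded. -/
def box (a b : ι → EReal) : Set (EuclideanSpace ℝ ι) :=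
  {y | ∀ j, a j ≤ (y j : EReal) ∧ (y j : EReal) ≤ b j}

lemma measurableSet_box [Countable ι] (a b : ι → EReal) : MeasurableSet (box a b) := by
  have hbox :
      box a b = ⋂ j, (fun y : EuclideanSpace ℝ ι => (y j : EReal)) ⁻¹' Set.Icc (a j) (b j) := by
    ext y
    simp only [box, Set.mem_iInter, Set.mem_preimage, Set.mem_Icc, Set.mem_ofPred_eq]
  have hcoord (j : ι) : Measurable fun y : EuclideanSpace ℝ ι => y j :=
    (measurable_pi_apply j).comp (WithLp.measurable_ofLp 2 _)
  rw [hbox]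
  exact .iInter fun j => measurableSet_Icc.preimage (measurable_coe_real_ereal.comp (hcoord j))

variable [Fintype ι]

lemma exists_tendsto_avg_prod_gaussSmooth (a b : ι → EReal) : ∃ l r : ι → ℕ → ℝ,
    ∀ (F : Measure (EuclideanSpace ℝ ι)) [IsProbabilityMeasure F], Filter.Tendsto
      (fun k => avg F
        (fun z => ∏ i, gaussSmooth (margin k ^ 3) (intervalInd (l i k) (r i k)) (z i)) 0)
      Filter.atTop (nhds (F.real (box a b))) := by
  classical
  choose l r hlr using fun i => exists_tendsto_gaussSmooth_intervalInd (a i) (b i)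
  refine ⟨l, r, fun F _ => ?_⟩
  set g : ℕ → EuclideanSpace ℝ ι → ℝ := fun k z =>
    ∏ i, gaussSmooth (margin k ^ 3) (intervalInd (l i k) (r i k)) (z i)
  have hg (k : ℕ) : BddMeas (g k) :=
    bddMeas_prod_apply fun i => (bddMeas_intervalInd _ _).gaussSmooth _
  have hg1 (k : ℕ) (z : EuclideanSpace ℝ ι) : ‖g k z‖ ≤ 1 := by
    rw [Real.norm_eq_abs, Finset.abs_prod]
    exact Finset.prod_le_one (fun _ _ => abs_nonneg _) fun i _ =>
      abs_le.2 ⟨by linarith [(gaussSmooth_intervalInd_mem_Icc (margin k ^ 3) (l i k) (r i k)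
        (z i)).1], (gaussSmooth_intervalInd_mem_Icc _ _ _ _).2⟩
  have hlim (z : EuclideanSpace ℝ ι) :
      Filter.Tendsto (fun k => g k z) Filter.atTop (nhds ((box a b).indicator 1 z)) := by
    have hprod := tendsto_finsetProd Finset.univ fun i _ => hlr i (z i)
    rw [Finset.prod_ite_zero, Finset.prod_const_one] at hprod
    rw [Set.indicator_apply, Pi.one_apply]
    convert hprod using 3
    simp only [box, Set.mem_ofPred_eq, Finset.mem_univ, true_imp_iff]
  simp only [avg, zero_add]
  rw [← integral_indicator_one (measurableSet_box a b)]
  exact tendsto_integral_of_dominated_convergence (fun _ => (1 : ℝ))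
    (fun k => (hg k).measurable.aestronglyMeasurable) (integrable_const _)
    (fun k => .of_forall (hg1 k)) (.of_forall hlim)

lemma abs_convPow_real_box_sub_le [Nonempty ι] {F : Measure (EuclideanSpace ℝ ι)}
    [IsProbabilityMeasure F] [F.IsNegInvariant] (hF : ∀ t, 0 ≤ cosTransform F t) {N n : ℕ}
    (hN : 0 < N) (hn : 2 * N ≤ n) (a b : ι → EReal) :
    |(convPow F n).real (box a b) - (convPow F (n + 1)).real (box a b)| ≤
      boxConst (Fintype.card ι) / N := by
  obtain ⟨l, r, hlr⟩ := exists_tendsto_avg_prod_gaussSmooth a b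
  refine le_of_tendsto ((hlr (convPow F n)).sub (hlr (convPow F (n + 1)))).abs
    (.of_forall fun k => ?_)
  exact abs_avg_convPow_prod_gaussSmooth_intervalInd_sub_le hF hN hn
    (pow_pos (margin_pos k) 3) _ _

end Box

/-! ## Polyhedra and mixtures of convolution powers -/

section Polyhedra

variable {E ι : Type*} [NormedAddCommGroup E] [InnerProductSpace ℝ E]

/-- The linear map with coordinates `x ↦ ⟪x, t j⟫`; it turns the polyhedra with directions `t` into
boxes. -/
def innerMap (t : ι → E) : E →L[ℝ] EuclideanSpace ℝ ι :=
  (EuclideanSpace.equiv ι ℝ).symm.toContinuousLinearMap ∘L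
    ContinuousLinearMap.pi fun j => innerSL ℝ (t j)

lemma innerMap_apply (t : ι → E) (x : E) (j : ι) : innerMap t x j = ⟪x, t j⟫ :=
  real_inner_comm x (t j)

variable {d m : ℕ} {X : Set (Euc d)}

lemma exists_eq_preimage_box (hX : X ∈ polyhedra d m) :
    ∃ (t : Fin m → Euc d) (a b : Fin m → EReal), X = innerMap t ⁻¹' box a b := by
  obtain ⟨t, a, b, rfl⟩ := hX
  refine ⟨t, a, b, ?_⟩
  ext x
  simp only [box, Set.mem_preimage, Set.mem_ofPred_eq, innerMap_apply]

lemma measurableSet_of_mem_polyhedra (hX : X ∈ polyhedra d m) : MeasurableSet X := by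
  obtain ⟨t, a, b, rfl⟩ := exists_eq_preimage_box hX
  exact (measurableSet_box a b).preimage (innerMap t).measurable

/-- The constant in the bound `abs_convPow_real_sub_succ_le` for polyhedra with `m` directions. -/
def stepConst (m : ℕ) : ℝ := 4 * boxConst m + 2

lemma two_le_stepConst (m : ℕ) : 2 ≤ stepConst m :=
  le_add_of_nonneg_left (mul_nonneg zero_le_four (boxConst_pos m).le)

variable {F : Measure (Euc d)} [IsProbabilityMeasure F] [F.IsNegInvariant]

lemma abs_convPow_real_sub_succ_le_div (hF : ∀ t, 0 ≤ cosTransform F t) (hm : 0 < m)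
    (hX : X ∈ polyhedra d m) {N n : ℕ} (hN : 0 < N) (hn : 2 * N ≤ n) :
    |(convPow F n).real X - (convPow F (n + 1)).real X| ≤ boxConst m / N := by
  obtain ⟨t, a, b, rfl⟩ := exists_eq_preimage_box hX
  have := Fin.pos_iff_nonempty.1 hm
  have hmap (k : ℕ) : (convPow F k).real (innerMap t ⁻¹' box a b) =
      (convPow (F.map (innerMap t)) k).real (box a b) := by
    rw [convPow_map, map_measureReal_apply (innerMap t).measurable (measurableSet_box a b)]
  have hF' (s : Euc m) : 0 ≤ cosTransform (F.map (innerMap t)) s := by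
    rw [cosTransform_map]
    exact hF _
  have hbox := abs_convPow_real_box_sub_le hF' hN hn a b
  rwa [Fintype.card_fin, ← hmap, ← hmap] at hbox

lemma abs_convPow_real_sub_succ_le (hF : ∀ t, 0 ≤ cosTransform F t) (hm : 0 < m)
    (hX : X ∈ polyhedra d m) (n : ℕ) :
    |(convPow F n).real X - (convPow F (n + 1)).real X| ≤ stepConst m / (n + 1) := by
  rcases lt_or_ge n 2 with hn | hn
  · have hn1 : (n : ℝ) ≤ 1 := by exact_mod_cast Nat.le_of_lt_succ hn
    have hdiff : |(convPow F n).real X - (convPow F (n + 1)).real X| ≤ 1 :=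
      abs_sub_le_of_nonneg_of_le measureReal_nonneg measureReal_le_one measureReal_nonneg
        measureReal_le_one
    refine hdiff.trans ((one_le_div (by positivity)).2 ?_)
    linarith [two_le_stepConst m]
  · have hN : 0 < n / 2 := Nat.div_pos hn two_pos
    have hnN : (n : ℝ) + 1 ≤ 4 * (n / 2 : ℕ) := by exact_mod_cast (by omega : n + 1 ≤ 4 * (n / 2))
    have hN' : (0 : ℝ) < (n / 2 : ℕ) := by exact_mod_cast hN
    have hC := boxConst_pos m
    refine (abs_convPow_real_sub_succ_le_div hF hm hX hN (by omega)).trans ?_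
    rw [div_le_div_iff₀ hN' (by positivity), stepConst]
    linarith [mul_le_mul_of_nonneg_left hnN hC.le]

end Polyhedra

section Telescoping

variable {p : ℕ → ℝ} {C : ℝ}

lemma abs_add_sub_le_of_abs_sub_succ_le (hC : 0 ≤ C) (hp : ∀ n, |p n - p (n + 1)| ≤ C / (n + 1))
    (l j : ℕ) : |p (l + j) - p l| ≤ C * j / (l + 1) := by
  have hstep {i : ℕ} (hli : l ≤ i) : dist (p i) (p (i + 1)) ≤ C / (l + 1) :=
    (hp i).trans (by gcongr)
  have htotal := dist_le_Ico_sum_of_dist_le (f := p) (l.le_add_right j) fun hli _ => hstep hli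
  rw [Finset.sum_const, Nat.card_Ico, Nat.add_sub_cancel_left, nsmul_eq_mul, dist_comm] at htotal
  exact htotal.trans_eq (by ring)

lemma abs_sub_le_min_of_abs_sub_succ_le (hC : 1 ≤ C) (hp01 : ∀ n, p n ∈ Set.Icc (0 : ℝ) 1)
    (hp : ∀ n, |p n - p (n + 1)| ≤ C / (n + 1)) (k l : ℕ) :
    |p k - p l| ≤ min (2 * C * |(k : ℝ) - l| / (l + 1)) 1 := by
  have hone : |p k - p l| ≤ 1 :=
    abs_sub_le_of_nonneg_of_le (hp01 k).1 (hp01 k).2 (hp01 l).1 (hp01 l).2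
  have hC0 : 0 ≤ C := zero_le_one.trans hC
  refine le_min ?_ hone
  rcases le_total l k with h | h
  · obtain ⟨j, rfl⟩ := Nat.exists_eq_add_of_le h
    rw [Nat.cast_add, add_sub_cancel_left, Nat.abs_cast]
    refine (abs_add_sub_le_of_abs_sub_succ_le hC0 hp l j).trans ?_
    gcongr
    linarith
  · obtain ⟨j, rfl⟩ := Nat.exists_eq_add_of_le h
    rw [Nat.cast_add, sub_add_cancel_left, abs_neg, Nat.abs_cast]
    rcases le_or_gt (j : ℝ) (k + 1) with hj | hj
    · rw [abs_sub_comm]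
      refine (abs_add_sub_le_of_abs_sub_succ_le hC0 hp k j).trans ?_
      rw [div_le_div_iff₀ (by positivity) (by positivity)]
      have := mul_le_mul_of_nonneg_left hj (by positivity : 0 ≤ C * j)
      linarith
    · refine hone.trans ((one_le_div (by positivity)).2 ?_)
      have := mul_le_mul_of_nonneg_right hC (Nat.cast_nonneg (α := ℝ) j)
      linarith

end Telescoping

/-- The mixture `∑ k, P{μ = k} • F^k` of the convolution powers of `F`. -/
def convPowMixture {E Ω : Type*} [AddMonoid E] [MeasurableSpace E] [MeasurableSpace Ω]
    (P : Measure Ω) (F : Measure E) (μ : Ω → ℕ) : Measure E :=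
  Measure.sum fun k => P {ω | μ ω = k} • convPow F k

section Mixtures

variable {E Ω : Type*} [AddCommGroup E] [MeasurableSpace E] [MeasurableAdd₂ E]
  [MeasurableSpace Ω] {P : Measure Ω}

lemma convPowMixture_real (F : Measure E) [IsProbabilityMeasure F] {μ : Ω → ℕ} (hμ : Measurable μ)
    {X : Set E} (hX : MeasurableSet X) :
    (convPowMixture P F μ).real X = ∫ ω, (convPow F (μ ω)).real X ∂P := by
  have hmap : ∫⁻ ω, convPow F (μ ω) X ∂P = ∫⁻ k, convPow F k X ∂P.map μ :=
    (lintegral_map (f := fun k => convPow F k X) (measurable_of_countable _) hμ).symm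
  have hmixture : convPowMixture P F μ X = ∫⁻ ω, convPow F (μ ω) X ∂P := by
    rw [hmap, lintegral_countable', convPowMixture, Measure.sum_apply _ hX]
    refine tsum_congr fun k => ?_
    rw [Measure.smul_apply, smul_eq_mul, mul_comm,
      Measure.map_apply hμ (measurableSet_singleton k)]
    rfl
  have hmeas : Measurable fun ω => convPow F (μ ω) X :=
    (measurable_of_countable fun k => convPow F k X).comp hμ
  rw [measureReal_def, hmixture]
  exact (integral_toReal hmeas.aemeasurable (.of_forall fun ω => measure_lt_top _ _)).symm

variable [IsFiniteMeasure P]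

lemma integrable_convPow_real (F : Measure E) [IsProbabilityMeasure F] {μ : Ω → ℕ}
    (hμ : Measurable μ) (X : Set E) : Integrable (fun ω => (convPow F (μ ω)).real X) P :=
  .of_bound
    ((measurable_of_countable fun k => (convPow F k).real X).comp hμ).aestronglyMeasurable 1
    (.of_forall fun ω => by
      rw [Real.norm_of_nonneg measureReal_nonneg]
      exact measureReal_le_one)

lemma integrable_min_div {μ ν : Ω → ℕ} (hμ : Measurable μ) (hν : Measurable ν) {C : ℝ}
    (hC : 0 ≤ C) :
    Integrable (fun ω => min (C * |(μ ω : ℝ) - ν ω| / (ν ω + 1)) 1) P := by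
  have hcast {ξ : Ω → ℕ} (hξ : Measurable ξ) : Measurable fun ω => (ξ ω : ℝ) :=
    (measurable_of_countable _).comp hξ
  have hmeas : Measurable fun ω => min (C * |(μ ω : ℝ) - ν ω| / (ν ω + 1)) 1 :=
    ((((hcast hμ).sub (hcast hν)).abs.const_mul C).div ((hcast hν).add_const 1)).min
      measurable_const
  refine .of_bound hmeas.aestronglyMeasurable 1 (.of_forall fun ω => ?_)
  rw [Real.norm_of_nonneg (by positivity)]
  exact min_le_right _ _

lemma rhoPoly_convPowMixture_le {d m : ℕ} (hm : 0 < m) {F : Measure (Euc d)}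
    [IsProbabilityMeasure F] [F.IsNegInvariant] (hF : ∀ t, 0 ≤ cosTransform F t) {μ ν : Ω → ℕ}
    (hμ : Measurable μ) (hν : Measurable ν) :
    rhoPoly m (convPowMixture P F μ) (convPowMixture P F ν) ≤
      ∫ ω, min (2 * stepConst m * |(μ ω : ℝ) - ν ω| / (ν ω + 1)) 1 ∂P := by
  have hC := two_le_stepConst m
  have hnonneg : 0 ≤ ∫ ω, min (2 * stepConst m * |(μ ω : ℝ) - ν ω| / (ν ω + 1)) 1 ∂P :=
    integral_nonneg fun ω => by positivity
  refine Real.iSup_le (fun X => Real.iSup_le (fun hX => ?_) hnonneg) hnonneg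
  have hInt {ξ : Ω → ℕ} (hξ : Measurable ξ) := integrable_convPow_real (P := P) F hξ X
  have hXm := measurableSet_of_mem_polyhedra hX
  calc |(convPowMixture P F μ).real X - (convPowMixture P F ν).real X|
      = |∫ ω, ((convPow F (μ ω)).real X - (convPow F (ν ω)).real X) ∂P| := by
        rw [convPowMixture_real F hμ hXm, convPowMixture_real F hν hXm,
          integral_sub (hInt hμ) (hInt hν)]
    _ ≤ ∫ ω, |(convPow F (μ ω)).real X - (convPow F (ν ω)).real X| ∂P :=
        abs_integral_le_integral_abs
    _ ≤ ∫ ω, min (2 * stepConst m * |(μ ω : ℝ) - ν ω| / (ν ω + 1)) 1 ∂P :=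
        integral_mono ((hInt hμ).sub (hInt hν)).abs (integrable_min_div hμ hν (by linarith))
          fun ω => abs_sub_le_min_of_abs_sub_succ_le (by linarith)
            (fun k => ⟨measureReal_nonneg, measureReal_le_one⟩)
            (abs_convPow_real_sub_succ_le hF hm hX) (μ ω) (ν ω)

end Mixtures

lemma re_charFn {d : ℕ} (F : Measure (Euc d)) [IsFiniteMeasure F] (t : Euc d) :
    (charFn F t).re = cosTransform F t := by
  have hInt : Integrable (fun x : Euc d => Complex.exp ((⟪t, x⟫ : ℂ) * Complex.I)) F :=
    .of_bound (by fun_prop) 1 (.of_forall fun x => (Complex.norm_exp_ofReal_mul_I _).le)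
  have hre := integral_re hInt
  simp only [RCLike.re_to_complex, Complex.exp_ofReal_mul_I_re] at hre
  exact hre.symm

end

theorem stmt15 :
    ∃ C : ℕ → ℝ, (∀ m, 0 < C m) ∧
      ∀ (d m : ℕ), 0 < d → 0 < m →
        ∀ F : Measure (Euc d), IsProbabilityMeasure F → IsSymmMeasure F →
          (∀ t : Euc d, 0 ≤ (charFn F t).re) →
          ∀ (Ω : Type) (_ : MeasurableSpace Ω) (P : Measure Ω), IsProbabilityMeasure P →
            ∀ μ ν : Ω → ℕ, Measurable μ → Measurable ν →
              rhoPoly m (Measure.sum fun k => P {ω | μ ω = k} • convPow F k)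
                  (Measure.sum fun k => P {ω | ν ω = k} • convPow F k) ≤
                ∫ ω, min (C m * |(μ ω : ℝ) - (ν ω : ℝ)| / ((ν ω : ℝ) + 1)) 1 ∂P := by
  refine ⟨fun m => 2 * stepConst m, fun m => by linarith [two_le_stepConst m], ?_⟩
  intro d m _ hm F hF hsymm hpos Ω _ P hP μ ν hμ hν
  have : F.IsNegInvariant := ⟨hsymm⟩
  exact rhoPoly_convPowMixture_le hm (fun t => (re_charFn F t).symm ▸ hpos t) hμ hν
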